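/- Let r ≥ 2 be an integer and let ε > 0, and let p : ℕ → [0,1] be a function satisfying n·p(n) − log n − log log n → ∞ as n → ∞. Then with high probability the random graph G ~ G(n, p(n)) has the following property: for every r-colouring of the edges of G there exist a colour i ∈ {1,…,r} and a Hamilton cycle of G containing at least (2/(r+1) − ε)·n edges of colour i. -/

import Mathlib

open scoped Classical in
/-- The probability, under the binomial random graph `G(n,p)`, that a graph
property `P` holds. Each of the `n.choose 2` possible edges is present
independently with probability `p`. -/
noncomputable def gnpProb (n : ℕ) (p : ℝ) (P : SimpleGraph (Fin n) → Prop) : ℝ :=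
  ∑ G : SimpleGraph (Fin n),
    (if P G then p ^ G.edgeSet.ncard * (1 - p) ^ (n.choose 2 - G.edgeSet.ncard) else 0)

section prob
open scoped Classical
open Finset

/-- all possible edges -/
noncomputable def edg (n : ℕ) : Finset (Sym2 (Fin n)) := univ.filter (fun e => ¬ e.IsDiag)

/-- expectation over the random edge set -/
noncomputable def EX (n : ℕ) (p : ℝ) (f : Finset (Sym2 (Fin n)) → ℝ) : ℝ :=
  ∑ A ∈ (edg n).powerset, p ^ A.card * (1 - p) ^ ((edg n).card - A.card) * f A

/-- probability over the random edge set -/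
noncomputable def PR (n : ℕ) (p : ℝ) (Q : Finset (Sym2 (Fin n)) → Prop) : ℝ :=
  EX n p (fun A => if Q A then 1 else 0)

lemma mem_edg {n : ℕ} {x y : Fin n} : s(x, y) ∈ edg n ↔ x ≠ y := by
  simp [edg]

lemma card_edg (n : ℕ) : (edg n).card = n.choose 2 := by
  have h := SimpleGraph.card_edgeFinset_top_eq_card_choose_two (V := Fin n)
  rw [Fintype.card_fin] at h
  rw [← h]
  congr 1
  ext e
  simp [edg]

lemma card_edg_le (n : ℕ) : ((edg n).card : ℝ) ≤ (n : ℝ) ^ 2 / 2 := by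
  rw [card_edg, Nat.cast_choose_two]
  nlinarith [(Nat.cast_nonneg n : (0:ℝ) ≤ n)]

lemma EX_mono {n : ℕ} {p : ℝ} (h0 : 0 ≤ p) (h1 : p ≤ 1) {f g : Finset (Sym2 (Fin n)) → ℝ}
    (h : ∀ A, A ⊆ edg n → f A ≤ g A) : EX n p f ≤ EX n p g := by
  unfold EX
  refine sum_le_sum fun A hA => ?_
  have := h A (mem_powerset.1 hA)
  have h2 : 0 ≤ 1 - p := by linarith
  gcongr

lemma EX_nonneg {n : ℕ} {p : ℝ} (h0 : 0 ≤ p) (h1 : p ≤ 1) {f : Finset (Sym2 (Fin n)) → ℝ}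
    (h : ∀ A, A ⊆ edg n → 0 ≤ f A) : 0 ≤ EX n p f := by
  unfold EX
  refine sum_nonneg fun A hA => ?_
  have := h A (mem_powerset.1 hA)
  have h2 : 0 ≤ 1 - p := by linarith
  positivity

lemma EX_sum {n : ℕ} {p : ℝ} {ι : Type*} (s : Finset ι) (f : ι → Finset (Sym2 (Fin n)) → ℝ) :
    EX n p (fun A => ∑ i ∈ s, f i A) = ∑ i ∈ s, EX n p (f i) := by
  unfold EX
  rw [sum_comm]
  simp [mul_sum]

lemma EX_mul {n : ℕ} {p : ℝ} (c : ℝ) (f : Finset (Sym2 (Fin n)) → ℝ) :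
    EX n p (fun A => c * f A) = c * EX n p f := by
  unfold EX
  rw [mul_sum]
  refine sum_congr rfl fun A _ => by ring

lemma EX_add {n : ℕ} {p : ℝ} (f g : Finset (Sym2 (Fin n)) → ℝ) :
    EX n p (fun A => f A + g A) = EX n p f + EX n p g := by
  unfold EX
  rw [← sum_add_distrib]
  refine sum_congr rfl fun A _ => by ring

lemma prod_split {α : Type*} [DecidableEq α] (s : Finset α) (u v : α → ℝ) :
    ∑ A ∈ s.powerset, ∏ e ∈ s, (if e ∈ A then u e else v e) = ∏ e ∈ s, (u e + v e) := by
  rw [prod_add]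
  refine sum_congr rfl fun A hA => ?_
  rw [mem_powerset] at hA
  rw [← prod_sdiff hA, mul_comm]
  congr 1
  · exact prod_congr rfl fun e he => by simp [he]
  · exact prod_congr rfl fun e he => by simp [(mem_sdiff.1 he).2]

lemma EX_prod {n : ℕ} {p : ℝ} (u v : Sym2 (Fin n) → ℝ) :
    EX n p (fun A => ∏ e ∈ edg n, (if e ∈ A then u e else v e))
      = ∏ e ∈ edg n, (p * u e + (1 - p) * v e) := by
  rw [← prod_split]
  unfold EX
  refine sum_congr rfl fun A hA => ?_
  rw [mem_powerset] at hA
  have : p ^ A.card * (1 - p) ^ ((edg n).card - A.card)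
      = ∏ e ∈ edg n, (if e ∈ A then p else 1 - p) := by
    rw [← prod_sdiff hA, mul_comm]
    congr 1
    · rw [← card_sdiff_of_subset hA, ← prod_const]
      exact prod_congr rfl fun e he => by simp [(mem_sdiff.1 he).2]
    · rw [← prod_const]
      exact prod_congr rfl fun e he => by simp [he]
  rw [this, ← prod_mul_distrib]
  refine prod_congr rfl fun e _ => ?_
  split_ifs <;> rfl

lemma EX_one {n : ℕ} {p : ℝ} : EX n p (fun _ => 1) = 1 := by
  have := EX_prod (n := n) (p := p) (fun _ => 1) (fun _ => 1)
  simpa using this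

/-- main exponential-moment identity -/
lemma EX_FB {n : ℕ} {p : ℝ} {F B : Finset (Sym2 (Fin n))} (hF : F ⊆ edg n) (hB : B ⊆ edg n)
    (hd : Disjoint F B) (z : ℝ) :
    EX n p (fun A => (if F ⊆ A then 1 else 0) * z ^ (A ∩ B).card)
      = p ^ F.card * (1 - p + p * z) ^ B.card := by
  have key := EX_prod (n := n) (p := p) (fun e => if e ∈ B then z else 1)
    (fun e => if e ∈ F then 0 else 1)
  have e1 : ∀ A, A ⊆ edg n → (∏ e ∈ edg n,
      (if e ∈ A then (if e ∈ B then z else 1) else (if e ∈ F then 0 else 1)))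
      = (if F ⊆ A then (1:ℝ) else 0) * z ^ (A ∩ B).card := by
    intro A hA
    rw [← prod_sdiff hA, mul_comm (∏ e ∈ edg n \ A, _), mul_comm (ite _ _ _)]
    congr 1
    · rw [← prod_const, ← prod_ite_mem]
      exact prod_congr rfl fun e he => by simp [he]
    · split_ifs with h
      · exact prod_eq_one fun e he => by
          have := (mem_sdiff.1 he).2
          have h2 : e ∉ F := fun h' => this (h h')
          simp [this, h2]
      · obtain ⟨e, he, he'⟩ := not_subset.1 h
        exact prod_eq_zero (i := e) (mem_sdiff.2 ⟨hF he, he'⟩) (by simp [he, he'])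
  have e2 : EX n p (fun A => (if F ⊆ A then (1:ℝ) else 0) * z ^ (A ∩ B).card) = EX n p
      (fun A => ∏ e ∈ edg n,
      (if e ∈ A then (if e ∈ B then z else 1) else (if e ∈ F then 0 else 1))) := by
    unfold EX
    refine sum_congr rfl fun A hA => ?_
    simp only [e1 A (mem_powerset.1 hA)]
  rw [e2, key]
  have e3 : ∀ e ∈ edg n, (p * (if e ∈ B then z else 1) + (1 - p) * (if e ∈ F then 0 else 1))
      = (if e ∈ F then p else 1) * (if e ∈ B then (1 - p + p * z) else 1) := by
    intro e _
    by_cases h1 : e ∈ B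
    · have : e ∉ F := fun h => (disjoint_left.1 hd h) h1
      simp [h1, this]; ring
    · by_cases h2 : e ∈ F <;> simp [h1, h2]
  rw [prod_congr rfl e3, prod_mul_distrib, prod_ite_mem, prod_ite_mem,
    inter_eq_right.2 hF, inter_eq_right.2 hB, prod_const, prod_const]

lemma PR_le {n : ℕ} {p : ℝ} (h0 : 0 ≤ p) (h1 : p ≤ 1) {Q : Finset (Sym2 (Fin n)) → Prop}
    {f : Finset (Sym2 (Fin n)) → ℝ} (hf : ∀ A, 0 ≤ f A)
    (h : ∀ A, A ⊆ edg n → Q A → 1 ≤ f A) : PR n p Q ≤ EX n p f := by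
  refine EX_mono h0 h1 fun A hA => ?_
  split_ifs with hq
  · exact h A hA hq
  · exact hf A

lemma PR_nonneg {n : ℕ} {p : ℝ} (h0 : 0 ≤ p) (h1 : p ≤ 1) (Q : Finset (Sym2 (Fin n)) → Prop) :
    0 ≤ PR n p Q := EX_nonneg h0 h1 fun A _ => by positivity

/-- tilted union-free bound: present edges `F`, few edges in `B` -/
lemma EX_FB_le {n : ℕ} {p : ℝ} (h0 : 0 ≤ p) (h1 : p ≤ 1) {F B : Finset (Sym2 (Fin n))}
    (hF : F ⊆ edg n) (hB : B ⊆ edg n)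
    (hd : Disjoint F B) {z : ℝ} (hz : 0 ≤ z) :
    EX n p (fun A => (if F ⊆ A then 1 else 0) * z ^ (A ∩ B).card)
      ≤ p ^ F.card * Real.exp (-(1 - z) * p * B.card) := by
  rw [EX_FB hF hB hd]
  have : 1 - p + p * z ≤ Real.exp (-(1 - z) * p) := by
    have := Real.add_one_le_exp (-(1 - z) * p)
    linarith
  have h2 : 0 ≤ 1 - p + p * z := by nlinarith [mul_nonneg h0 hz]
  calc _ ≤ p ^ F.card * (Real.exp (-(1 - z) * p)) ^ B.card := by gcongr
    _ = _ := by rw [← Real.exp_nat_mul]; ring_nf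

lemma EX_B_le {n : ℕ} {p : ℝ} (h0 : 0 ≤ p) (h1 : p ≤ 1) {B : Finset (Sym2 (Fin n))}
    (hB : B ⊆ edg n) {z : ℝ} (hz : 0 ≤ z) :
    EX n p (fun A => z ^ (A ∩ B).card) ≤ Real.exp (-(1 - z) * p * B.card) := by
  have := EX_FB_le h0 h1 (F := ∅) (by simp) hB (by simp) hz
  simpa using this

/-- monotonicity in `p`, abstract version -/
lemma up_mono {α : Type*} [DecidableEq α] {p q : ℝ} (hp : 0 ≤ p) (hpq : p ≤ q) (hq : q ≤ 1) (s : Finset α) :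
    ∀ f : Finset α → ℝ, (∀ A B, A ⊆ B → f A ≤ f B) →
    ∑ A ∈ s.powerset, (∏ e ∈ s, if e ∈ A then p else 1 - p) * f A
      ≤ ∑ A ∈ s.powerset, (∏ e ∈ s, if e ∈ A then q else 1 - q) * f A := by
  have step : ∀ (a : α) (s : Finset α) (t : ℝ) (f : Finset α → ℝ), a ∉ s →
      ∑ A ∈ (insert a s).powerset, (∏ e ∈ insert a s, if e ∈ A then t else 1 - t) * f A
      = (1 - t) * ∑ A ∈ s.powerset, (∏ e ∈ s, if e ∈ A then t else 1 - t) * f A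
      + t * ∑ A ∈ s.powerset, (∏ e ∈ s, if e ∈ A then t else 1 - t) * f (insert a A) := by
    intro a s t f ha
    rw [sum_powerset_insert ha, mul_sum, mul_sum]
    congr 1
    · refine sum_congr rfl fun A hA => ?_
      have : a ∉ A := fun h => ha (mem_powerset.1 hA h)
      rw [prod_insert ha]; simp [this]; ring
    · refine sum_congr rfl fun A hA => ?_
      rw [prod_insert ha]
      have : (∏ e ∈ s, if e ∈ insert a A then t else 1 - t)
          = ∏ e ∈ s, if e ∈ A then t else 1 - t := by
        refine prod_congr rfl fun e he => ?_
        have : e ≠ a := fun h => ha (h ▸ he)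
        simp [this]
      rw [this]; simp; ring
  induction s using Finset.induction_on with
  | empty => intro f _; simp
  | insert a s ha ih =>
    intro f hf
    rw [step a s p f ha, step a s q f ha]
    have i1 := ih f hf
    have i2 := ih (fun A => f (insert a A)) (fun A B h => hf _ _ (insert_subset_insert a h))
    have i3 : ∑ A ∈ s.powerset, (∏ e ∈ s, if e ∈ A then q else 1 - q) * f A
        ≤ ∑ A ∈ s.powerset, (∏ e ∈ s, if e ∈ A then q else 1 - q) * f (insert a A) := by
      refine sum_le_sum fun A _ => mul_le_mul_of_nonneg_left (hf _ _ (subset_insert a A)) ?_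
      refine prod_nonneg fun e _ => ?_
      split_ifs <;> linarith
    have j1 := mul_le_mul_of_nonneg_left i1 (by linarith : 0 ≤ 1 - p)
    have j2 := mul_le_mul_of_nonneg_left i2 hp
    nlinarith [mul_le_mul_of_nonneg_left i3 (by linarith : 0 ≤ q - p)]

lemma wt_prod {n : ℕ} {p : ℝ} {A : Finset (Sym2 (Fin n))} (hA : A ⊆ edg n) :
    p ^ A.card * (1 - p) ^ ((edg n).card - A.card)
      = ∏ e ∈ edg n, (if e ∈ A then p else 1 - p) := by
  rw [← prod_sdiff hA, mul_comm]
  congr 1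
  · rw [← card_sdiff_of_subset hA, ← prod_const]
    exact prod_congr rfl fun e he => by simp [(mem_sdiff.1 he).2]
  · rw [← prod_const]
    exact prod_congr rfl fun e he => by simp [he]

lemma PR_mono_p {n : ℕ} {p q : ℝ} (hp : 0 ≤ p) (hpq : p ≤ q) (hq : q ≤ 1)
    {Q : Finset (Sym2 (Fin n)) → Prop} (hQ : ∀ A B, A ⊆ B → Q A → Q B) : PR n p Q ≤ PR n q Q := by
  have := up_mono hp hpq hq (edg n) (fun A => if Q A then (1:ℝ) else 0) (by
    intro A B h
    by_cases h1 : Q A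
    · simp [h1, hQ A B h h1]
    · simp only [h1, if_false]; split_ifs <;> norm_num)
  unfold PR EX
  have e : ∀ t : ℝ, ∑ A ∈ (edg n).powerset,
      t ^ A.card * (1 - t) ^ ((edg n).card - A.card) * (if Q A then (1:ℝ) else 0)
      = ∑ A ∈ (edg n).powerset, (∏ e ∈ edg n, if e ∈ A then t else 1 - t) *
        (if Q A then (1:ℝ) else 0) :=
    fun t => sum_congr rfl (fun A hA => by rw [wt_prod (mem_powerset.1 hA)])
  rw [e p, e q]
  exact this

lemma gnpProb_eq (n : ℕ) (p : ℝ) (P : SimpleGraph (Fin n) → Prop) :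
    gnpProb n p P = PR n p (fun A => P (SimpleGraph.fromEdgeSet (A : Set (Sym2 (Fin n))))) := by
  unfold gnpProb PR EX
  symm
  refine sum_bij' (fun A _ => SimpleGraph.fromEdgeSet (A : Set (Sym2 (Fin n))))
    (fun G _ => G.edgeFinset) (by simp) ?_ ?_ ?_ ?_
  · intro G _
    rw [mem_powerset]
    intro e he
    simp only [edg, mem_filter, mem_univ, true_and]
    exact G.not_isDiag_of_mem_edgeSet (by simpa using he)
  · intro A hA
    ext e
    rw [mem_powerset] at hA
    simp only [SimpleGraph.mem_edgeFinset, SimpleGraph.edgeSet_fromEdgeSet, Set.mem_sdiff, mem_coe]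
    constructor
    · exact fun h => h.1
    · intro h
      refine ⟨h, ?_⟩
      have := hA h
      simpa [edg] using this
  · intro G _
    simp
  · intro A hA
    rw [mem_powerset] at hA
    have : (SimpleGraph.fromEdgeSet (A : Set (Sym2 (Fin n)))).edgeSet = (A : Set (Sym2 (Fin n))) := by
      rw [SimpleGraph.edgeSet_fromEdgeSet]
      ext e
      simp only [Set.mem_sdiff, mem_coe, and_iff_left_iff_imp]
      intro h
      have := hA h
      simpa [edg] using this
    rw [this, Set.ncard_coe_finset, card_edg]
    by_cases hP : P (SimpleGraph.fromEdgeSet (A : Set (Sym2 (Fin n))))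
    · simp only [hP, if_true, mul_one]
    · simp only [hP, if_false, mul_zero]

lemma PR_compl_add {n : ℕ} {p : ℝ} (Q : Finset (Sym2 (Fin n)) → Prop) :
    PR n p Q = 1 - PR n p (fun A => ¬ Q A) := by
  have : PR n p Q + PR n p (fun A => ¬ Q A) = 1 := by
    unfold PR
    rw [← EX_add]
    refine Eq.trans ?_ (EX_one (n := n) (p := p))
    congr 1
    ext A
    by_cases h : Q A <;> simp [h]
  linarith

end prob


section lists
open scoped Classical
open Finset

variable {V : Type*}

/-- consecutive pairs -/
def cp (l : List V) : List (V × V) := l.zip l.tail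

/-- consecutive edges -/
def pe (l : List V) : List (Sym2 V) := (cp l).map (fun q => s(q.1, q.2))

@[simp] lemma cp_nil : cp ([] : List V) = [] := rfl
@[simp] lemma cp_single (a : V) : cp [a] = [] := rfl
@[simp] lemma cp_cons (a b : V) (l : List V) : cp (a :: b :: l) = (a, b) :: cp (b :: l) := rfl
@[simp] lemma pe_nil : pe ([] : List V) = [] := rfl
@[simp] lemma pe_single (a : V) : pe [a] = [] := rfl
@[simp] lemma pe_cons (a b : V) (l : List V) : pe (a :: b :: l) = s(a, b) :: pe (b :: l) := rfl

lemma cp_split (A : List V) (x : V) (B : List V) :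
    cp (A ++ x :: B) = cp (A ++ [x]) ++ cp (x :: B) := by
  induction A with
  | nil => simp
  | cons a A ih =>
    cases A with
    | nil => simp
    | cons b A => simpa using ih

lemma pe_split (A : List V) (x : V) (B : List V) :
    pe (A ++ x :: B) = pe (A ++ [x]) ++ pe (x :: B) := by
  simp [pe, cp_split A x B]

lemma cp_split2 (A : List V) (x y : V) (B : List V) :
    cp (A ++ x :: y :: B) = cp (A ++ [x]) ++ (x, y) :: cp (y :: B) := by
  rw [cp_split]; rfl

lemma pe_split2 (A : List V) (x y : V) (B : List V) :
    pe (A ++ x :: y :: B) = pe (A ++ [x]) ++ s(x, y) :: pe (y :: B) := by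
  rw [pe_split]; rfl

lemma pe_reverse (l : List V) : (pe l.reverse).Perm (pe l) := by
  induction l with
  | nil => simp
  | cons a l ih =>
    cases l with
    | nil => simp
    | cons b l =>
      have : (a :: b :: l).reverse = l.reverse ++ b :: [a] := by simp
      rw [this, pe_split]
      have h2 : l.reverse ++ [b] = (b :: l).reverse := by simp
      rw [h2]
      simp only [pe_cons, pe_single]
      rw [Sym2.eq_swap]
      exact (List.perm_append_singleton _ _).trans (ih.cons _)

lemma mem_of_cp {l : List V} {q : V × V} (h : q ∈ cp l) : q.1 ∈ l ∧ q.2 ∈ l.tail := by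
  have := List.of_mem_zip (a := q.1) (b := q.2) (l₁ := l) (l₂ := l.tail) (by simpa [cp] using h)
  exact this

lemma mem_cp_iff {l : List V} {x y : V} :
    (x, y) ∈ cp l ↔ ∃ A B, l = A ++ x :: y :: B := by
  constructor
  · intro h
    induction l with
    | nil => simp at h
    | cons a l ih =>
      cases l with
      | nil => simp at h
      | cons b l =>
        rw [cp_cons, List.mem_cons] at h
        rcases h with h | h
        · simp only [Prod.mk.injEq] at h
          exact ⟨[], l, by simp [h.1, h.2]⟩
        · obtain ⟨A, B, h⟩ := ih h
          exact ⟨a :: A, B, by simp [h]⟩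
  · rintro ⟨A, B, rfl⟩
    rw [cp_split2]; simp

lemma mem_pe_iff {l : List V} {x y : V} : s(x, y) ∈ pe l ↔ (x, y) ∈ cp l ∨ (y, x) ∈ cp l := by
  simp only [pe, List.mem_map, Prod.exists, Sym2.eq_iff]
  constructor
  · rintro ⟨a, b, h, ⟨rfl, rfl⟩ | ⟨rfl, rfl⟩⟩ <;> simp [h]
  · rintro (h | h)
    · exact ⟨_, _, h, by simp⟩
    · exact ⟨_, _, h, by simp⟩

lemma cp_inj_right {l : List V} (hl : l.Nodup) {x x' y : V} (h : (x, y) ∈ cp l)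
    (h' : (x', y) ∈ cp l) : x = x' := by
  induction l with
  | nil => simp at h
  | cons a l ih =>
    cases l with
    | nil => simp at h
    | cons b l =>
      rw [cp_cons, List.mem_cons] at h h'
      have hn := (List.nodup_cons.1 hl).2
      have key : ∀ z, (z, b) ∉ cp (b :: l) := by
        intro z hz
        have := (mem_of_cp hz).2
        exact (List.nodup_cons.1 hn).1 this
      rcases h with h | h <;> rcases h' with h' | h'
      · simp_all
      · simp only [Prod.mk.injEq] at h
        rw [h.2] at h'
        exact absurd h' (key _)
      · simp only [Prod.mk.injEq] at h'
        rw [h'.2] at h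
        exact absurd h (key _)
      · exact ih hn h h'

lemma cp_inj_left {l : List V} (hl : l.Nodup) {x y y' : V} (h : (x, y) ∈ cp l)
    (h' : (x, y') ∈ cp l) : y = y' := by
  induction l with
  | nil => simp at h
  | cons a l ih =>
    cases l with
    | nil => simp at h
    | cons b l =>
      rw [cp_cons, List.mem_cons] at h h'
      have hn := List.nodup_cons.1 hl
      have key : ∀ z, (a, z) ∉ cp (b :: l) := fun z hz => hn.1 (mem_of_cp hz).1
      rcases h with h | h <;> rcases h' with h' | h'
      · simp_all
      · simp only [Prod.mk.injEq] at h
        rw [h.1] at h'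
        exact absurd h' (key _)
      · simp only [Prod.mk.injEq] at h'
        rw [h'.1] at h
        exact absurd h (key _)
      · exact ih hn.2 h h'

lemma mem_of_mem_pe {l : List V} {x y : V} (h : s(x, y) ∈ pe l) : x ∈ l ∧ y ∈ l := by
  rw [mem_pe_iff] at h
  rcases h with h | h
  · exact ⟨(mem_of_cp h).1, List.mem_of_mem_tail (mem_of_cp h).2⟩
  · exact ⟨List.mem_of_mem_tail (mem_of_cp h).2, (mem_of_cp h).1⟩

lemma pe_nodup {l : List V} (hl : l.Nodup) : (pe l).Nodup := by
  induction l with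
  | nil => simp
  | cons a l ih =>
    cases l with
    | nil => simp
    | cons b l =>
      rw [pe_cons, List.nodup_cons]
      have hn := List.nodup_cons.1 hl
      exact ⟨fun h => hn.1 (mem_of_mem_pe h).1, ih hn.2⟩

lemma length_cp (l : List V) : (cp l).length = l.length - 1 := by simp [cp]
lemma length_pe (l : List V) : (pe l).length = l.length - 1 := by simp [pe, length_cp]

/-- cyclic edges -/
def ce : List V → List (Sym2 V)
  | [] => []
  | a :: l => pe (a :: (l ++ [a]))

lemma ce_snoc (a : V) (L : List V) (b : V) :
    ce (a :: (L ++ [b])) = pe (a :: (L ++ [b])) ++ [s(b, a)] := by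
  have := pe_split (a :: L) b [a]
  simpa [ce] using this

lemma ce_rotate (A B : List V) : (ce (A ++ B)).Perm (ce (B ++ A)) := by
  cases A with
  | nil => simp
  | cons a A =>
    cases B with
    | nil => simp
    | cons b B =>
      have h1 := pe_split (a :: A) b (B ++ [a])
      have h2 := pe_split (b :: B) a (A ++ [b])
      simp only [ce, List.cons_append, List.append_assoc] at *
      rw [h1, h2]
      exact List.perm_append_comm

lemma length_ce (l : List V) : (ce l).length = l.length := by
  cases l <;> simp [ce, length_pe]

lemma ce_nodup {l : List V} (hl : l.Nodup) (h3 : 3 ≤ l.length) : (ce l).Nodup := by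
  match l, h3 with
  | a :: b :: c :: l, _ =>
    obtain ⟨L, z, hL⟩ : ∃ L z, c :: l = L ++ [z] := by
      have := List.eq_nil_or_concat (c :: l)
      simpa using this
    rw [hL] at hl ⊢
    have : a :: b :: (L ++ [z]) = a :: ((b :: L) ++ [z]) := by simp
    rw [this, ce_snoc, List.nodup_append]
    refine ⟨pe_nodup (by simpa using hl), by simp, ?_⟩
    intro e he e' he' hee
    simp only [List.mem_singleton] at he'
    subst hee
    subst he'
    rw [List.cons_append, pe_cons, List.mem_cons] at he
    have hn := List.nodup_cons.1 hl
    have hn2 := List.nodup_cons.1 hn.2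
    rcases he with h | h
    · rw [Sym2.eq_iff] at h
      rcases h with h | h
      · rw [h.2] at hn; simp at hn
      · rw [h.1] at hn2; simp at hn2
    · exact hn.1 (mem_of_mem_pe h).2

/-- Posa rotations of the end of the path; `N v u` allows pivot `u` from endpoint `v` -/
inductive Rot (N : V → V → Prop) : List V → List V → Prop
  | rot (P : List V) (u : V) (Q : List V) (v : V) (h : N v u) :
      Rot N (P ++ u :: (Q ++ [v])) (P ++ u :: (v :: Q.reverse))

lemma Rot.perm {N : V → V → Prop} {l l' : List V} (h : Rot N l l') : l'.Perm l := by
  obtain ⟨P, u, Q, v, _⟩ := h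
  refine List.Perm.append_left _ (List.Perm.cons _ ?_)
  have : v :: Q.reverse = (Q ++ [v]).reverse := by simp
  rw [this]; exact List.reverse_perm _

/-- reachable end vertices -/
def ends (N : V → V → Prop) (l0 : List V) (v : V) : Prop :=
  ∃ l, Relation.ReflTransGen (Rot N) l0 (l ++ [v])

lemma snoc_cases (Q : List V) (v : V) : ∃ w Q', Q ++ [v] = w :: Q' := by
  cases Q with
  | nil => exact ⟨v, [], rfl⟩
  | cons a Q => exact ⟨a, Q ++ [v], rfl⟩

lemma rot_pe (P : List V) (u : V) (Q : List V) (v w : V) (Q' : List V) (h : Q ++ [v] = w :: Q') :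
    pe (P ++ u :: (Q ++ [v])) = pe (P ++ [u]) ++ s(u, w) :: pe (Q ++ [v]) ∧
    (pe (P ++ u :: (v :: Q.reverse))).Perm (pe (P ++ [u]) ++ s(u, v) :: pe (Q ++ [v])) := by
  constructor
  · rw [h, pe_split2]
  · rw [pe_split2]
    have : v :: Q.reverse = (Q ++ [v]).reverse := by simp
    rw [this]
    exact List.Perm.append_left _ ((pe_reverse _).cons _)

lemma posa_nbr {N : V → V → Prop} {l0 : List V} (hall : ∀ x, x ∈ l0) {v u : V} (hv : ends N l0 v)
    (hN : N v u) (hu : ¬ ends N l0 u) : ∃ w, ends N l0 w ∧ s(u, w) ∈ pe l0 := by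
  by_contra hq
  push Not at hq
  have inv : ∀ l, Relation.ReflTransGen (Rot N) l0 l →
      (l.Perm l0 ∧ ∀ x, s(u, x) ∈ pe l ↔ s(u, x) ∈ pe l0) := by
    intro l hl
    induction hl with
    | refl => exact ⟨List.Perm.refl _, fun x => Iff.rfl⟩
    | @tail l l' hl hr ih =>
      refine ⟨hr.perm.trans ih.1, fun x => ?_⟩
      have hr' := hr
      obtain ⟨P, u', Q, v', h⟩ := hr
      obtain ⟨w, Q', hw⟩ := snoc_cases Q v'
      have hv' : ends N l0 v' := ⟨P ++ u' :: Q, by simpa using hl⟩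
      have hw' : ends N l0 w := by
        refine ⟨P ++ u' :: Q'.reverse, ?_⟩
        have : v' :: Q.reverse = Q'.reverse ++ [w] := by
          have := congrArg List.reverse hw
          simpa using this
        have h3 := hl.tail hr'
        rw [this] at h3
        simpa using h3
      obtain ⟨e1, e2⟩ := rot_pe P u' Q v' w Q' hw
      rw [e2.mem_iff, ← ih.2 x, e1]
      have huw : u ≠ u' := by
        rintro rfl
        have := (ih.2 w).1 (by rw [e1]; simp)
        exact hq w hw' this
      have n1 : s(u, x) ≠ s(u', w) := by
        rw [Ne, Sym2.eq_iff]
        rintro (⟨h1, _⟩ | ⟨h1, _⟩)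
        · exact huw h1
        · exact hu (h1 ▸ hw')
      have n2 : s(u, x) ≠ s(u', v') := by
        rw [Ne, Sym2.eq_iff]
        rintro (⟨h1, _⟩ | ⟨h1, _⟩)
        · exact huw h1
        · exact hu (h1 ▸ hv')
      simp [n1, n2]
  obtain ⟨L, hL⟩ := hv
  have huL : u ∈ L := by
    have h1 := (inv _ hL).1.mem_iff.2 (hall u)
    rw [List.mem_append] at h1
    rcases h1 with h1 | h1
    · exact h1
    · simp only [List.mem_singleton] at h1
      exact absurd ⟨L, h1 ▸ hL⟩ hu
  obtain ⟨P, Q, rfl⟩ := List.append_of_mem huL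
  have hr := hL
  have e0 : P ++ u :: Q ++ [v] = P ++ u :: (Q ++ [v]) := by simp
  rw [e0] at hL
  obtain ⟨w, Q', hw⟩ := snoc_cases Q v
  obtain ⟨e1, e2⟩ := rot_pe P u Q v w Q' hw
  have hw' : ends N l0 w := by
    refine ⟨P ++ u :: Q'.reverse, ?_⟩
    have : v :: Q.reverse = Q'.reverse ++ [w] := by
      have := congrArg List.reverse hw
      simpa using this
    have h3 := hL.tail (Rot.rot P u Q v hN)
    rw [this] at h3
    simpa using h3
  exact hq w hw' (((inv _ hL).2 w).1 (by rw [e1]; simp))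

lemma posa [Fintype V] {N : V → V → Prop} {l0 L : List V} {z : V} (hl : l0 = L ++ [z])
    (hnd : l0.Nodup) (hall : ∀ x, x ∈ l0) :
    (univ.filter (fun u => ¬ ends N l0 u ∧ ∃ v, ends N l0 v ∧ N v u)).card + 1
      ≤ 2 * (univ.filter (fun u => ends N l0 u)).card := by
  set S := univ.filter (fun u => ends N l0 u) with hS
  have hz : z ∈ S := by
    simp only [hS, mem_filter, mem_univ, true_and]
    exact ⟨L, hl ▸ Relation.ReflTransGen.refl⟩
  have h1 : (univ.filter (fun u => ∃ w ∈ S, (u, w) ∈ cp l0)).card ≤ S.card := by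
    refine card_le_card_of_forall_subsingleton (fun u w => (u, w) ∈ cp l0) ?_ ?_
    · intro u hu
      simpa using hu
    · intro w _ u hu u' hu'
      exact cp_inj_right hnd hu.2 hu'.2
  have h2 : (univ.filter (fun u => ∃ w ∈ S, (w, u) ∈ cp l0)).card ≤ (S.erase z).card := by
    refine card_le_card_of_forall_subsingleton (fun u w => (w, u) ∈ cp l0) ?_ ?_
    · intro u hu
      simp only [mem_filter, mem_univ, true_and] at hu
      obtain ⟨w, hw, h⟩ := hu
      refine ⟨w, mem_erase.2 ⟨?_, hw⟩, h⟩
      rintro rfl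
      obtain ⟨A, B, hAB⟩ := mem_cp_iff.1 h
      rw [hl] at hAB hnd
      have hz1 : w ∉ L := by
        intro h
        rw [List.nodup_append] at hnd
        exact hnd.2.2 w h w (by simp) rfl
      obtain ⟨B', b, hB⟩ : ∃ B' b, u :: B = B' ++ [b] := by
        have := List.eq_nil_or_concat (u :: B)
        simpa using this
      rw [hB] at hAB
      have e : A ++ w :: (B' ++ [b]) = (A ++ w :: B') ++ [b] := by simp
      rw [e] at hAB
      have := (List.append_inj' hAB (by simp)).1
      exact hz1 (by rw [this]; simp)
    · intro w _ u hu u' hu'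
      exact cp_inj_left hnd hu.2 hu'.2
  have h3 : (univ.filter (fun u => ¬ ends N l0 u ∧ ∃ v, ends N l0 v ∧ N v u)) ⊆
      (univ.filter (fun u => ∃ w ∈ S, (u, w) ∈ cp l0)) ∪
      (univ.filter (fun u => ∃ w ∈ S, (w, u) ∈ cp l0)) := by
    intro u hu
    simp only [mem_filter, mem_univ, true_and] at hu
    obtain ⟨hu1, v, hv, hvu⟩ := hu
    obtain ⟨w, hw, h⟩ := posa_nbr hall hv hvu hu1
    have hwS : w ∈ S := by simp [hS, hw]
    rw [mem_union]
    rcases mem_pe_iff.1 h with h | h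
    · left; simp only [mem_filter, mem_univ, true_and]; exact ⟨w, hwS, h⟩
    · right; simp only [mem_filter, mem_univ, true_and]; exact ⟨w, hwS, h⟩
  have h4 := (card_le_card h3).trans (card_union_le _ _)
  have h5 := card_erase_of_mem hz
  have h6 : 0 < S.card := card_pos.2 ⟨z, hz⟩
  omega

end lists


section opt
open scoped Classical
open Finset

variable {V : Type*}

lemma pe_two (P : List V) (u : V) (Q : List V) (w : V) (R : List V) (q1 : V) (Q1 : List V)
    (q2 : V) (Q2 : List V) (h1 : Q = q1 :: Q1) (h2 : Q = Q2 ++ [q2]) :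
    pe (P ++ u :: (Q ++ w :: R)) =
      pe (P ++ [u]) ++ s(u, q1) :: (pe Q ++ s(q2, w) :: pe (w :: R)) := by
  have e1 : P ++ u :: (Q ++ w :: R) = P ++ u :: q1 :: (Q1 ++ w :: R) := by rw [h1]; simp
  rw [e1, pe_split2]
  have e2 : q1 :: (Q1 ++ w :: R) = Q2 ++ q2 :: w :: R := by
    have : q1 :: (Q1 ++ w :: R) = Q ++ w :: R := by rw [h1]; simp
    rw [this, h2]; simp
  rw [e2, pe_split2, h2]

lemma pe_two_rev (P : List V) (u : V) (Q : List V) (w : V) (R : List V) (q1 : V) (Q1 : List V)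
    (q2 : V) (Q2 : List V) (h1 : Q = q1 :: Q1) (h2 : Q = Q2 ++ [q2]) :
    (pe (P ++ u :: (Q.reverse ++ w :: R))).Perm
      (pe (P ++ [u]) ++ s(u, q2) :: (pe Q ++ s(q1, w) :: pe (w :: R))) := by
  rw [pe_two P u Q.reverse w R q2 Q2.reverse q1 Q1.reverse (by rw [h2]; simp) (by rw [h1]; simp)]
  exact List.Perm.append_left _ ((List.Perm.append_right _ (pe_reverse Q)).cons _)

/-- the relation used: rotations and reversal -/
def RR (N : V → V → Prop) (l l' : List V) : Prop := Rot N l l' ∨ l' = l.reverse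

lemma Rot.head {N : V → V → Prop} {l l' : List V} (h : Rot N l l') : l'.head? = l.head? := by
  obtain ⟨P, u, Q, v, _⟩ := h
  cases P <;> simp

/-- closing edges of reachable paths -/
noncomputable def boost [Fintype V] (l : List V) (T : Finset (Sym2 V)) (Z : Finset V) :
    Finset (Sym2 V) :=
  univ.filter (fun e => ∃ a L b, Relation.ReflTransGen
    (RR (fun v u => s(v, u) ∈ T ∧ u ∈ Z)) l (a :: (L ++ [b])) ∧ e = s(a, b))

lemma boost_inv {T A F : Finset (Sym2 V)} {Z : Finset V} (hTA : T ⊆ A)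
    (hFZ : ∀ e ∈ F, ∀ x ∈ Z, x ∉ e) {l l' : List V}
    (h : Relation.ReflTransGen (RR (fun v u => s(v, u) ∈ T ∧ u ∈ Z)) l l')
    (hF : ∀ e ∈ F, e ∈ pe l) :
    l'.Perm l ∧ (∀ e ∈ F, e ∈ pe l') ∧
      (pe l).countP (fun e => decide (e ∈ A)) ≤ (pe l').countP (fun e => decide (e ∈ A)) := by
  induction h with
  | refl => exact ⟨List.Perm.refl _, hF, le_rfl⟩
  | @tail l1 l2 h1 h2 ih =>
    obtain ⟨ih1, ih2, ih3⟩ := ih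
    rcases h2 with h2 | h2
    · refine ⟨h2.perm.trans ih1, ?_, ih3.trans ?_⟩
      · obtain ⟨P, u, Q, v, hN⟩ := h2
        obtain ⟨w, Q', hw⟩ := snoc_cases Q v
        obtain ⟨e1, e2⟩ := rot_pe P u Q v w Q' hw
        intro e he
        rw [e2.mem_iff]
        have h3 := ih2 e he
        rw [e1] at h3
        have h4 : e ≠ s(u, w) := by
          rintro rfl
          exact hFZ _ he u hN.2 (by simp)
        simp only [List.mem_append, List.mem_cons] at h3 ⊢
        tauto
      · obtain ⟨P, u, Q, v, hN⟩ := h2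
        obtain ⟨w, Q', hw⟩ := snoc_cases Q v
        obtain ⟨e1, e2⟩ := rot_pe P u Q v w Q' hw
        rw [e2.countP_eq, e1]
        have h5 : s(u, v) ∈ A := by rw [Sym2.eq_swap]; exact hTA hN.1
        simp only [List.countP_append, List.countP_cons, h5, decide_true, if_true]
        split_ifs <;> omega
    · subst h2
      refine ⟨(List.reverse_perm _).trans ih1, fun e he => (pe_reverse _).mem_iff.2 (ih2 e he), ?_⟩
      rw [(pe_reverse _).countP_eq]; exact ih3

lemma rot_RR {N : V → V → Prop} {l l' : List V} (h : Relation.ReflTransGen (Rot N) l l') :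
    Relation.ReflTransGen (RR N) l l' ∧ l'.head? = l.head? ∧ l'.Perm l := by
  induction h with
  | refl => exact ⟨Relation.ReflTransGen.refl, rfl, List.Perm.refl _⟩
  | tail _ h2 ih => exact ⟨ih.1.tail (Or.inl h2), h2.head.trans ih.2.1, h2.perm.trans ih.2.2⟩

lemma boost_card [Fintype V] {T : Finset (Sym2 V)} {Z : Finset V} {l : List V} {s0 : ℕ}
    (h2 : 2 ≤ l.length)
    (hends : ∀ l' : List V, l'.Perm l →
      s0 ≤ (univ.filter (fun v => ends (fun v u => s(v, u) ∈ T ∧ u ∈ Z) l' v)).card) :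
    s0 * s0 ≤ 2 * (boost l T Z).card := by
  set N : V → V → Prop := fun v u => s(v, u) ∈ T ∧ u ∈ Z with hN
  have key : ∀ v, ends N l v → s0 ≤ (univ.filter (fun w => s(v, w) ∈ boost l T Z)).card := by
    rintro v ⟨L, hL⟩
    obtain ⟨r1, _, r3⟩ := rot_RR hL
    have r4 : Relation.ReflTransGen (RR N) l (v :: L.reverse) :=
      r1.tail (Or.inr (by simp))
    have r5 : (v :: L.reverse).Perm l := by
      refine List.Perm.trans ?_ r3
      have : v :: L.reverse = (L ++ [v]).reverse := by simp
      rw [this]; exact List.reverse_perm _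
    refine (hends _ r5).trans (card_le_card ?_)
    intro w hw
    simp only [mem_filter, mem_univ, true_and] at hw ⊢
    obtain ⟨L2, hL2⟩ := hw
    obtain ⟨t1, t2, t3⟩ := rot_RR hL2
    cases L2 with
    | nil =>
      have := (t3.trans r5).length_eq
      simp at this; omega
    | cons a L2 =>
      simp at t2
      subst t2
      simp only [boost, mem_filter, mem_univ, true_and]
      exact ⟨a, L2, w, by simpa using r4.trans t1, rfl⟩
  have c1 : s0 * s0 ≤ ((univ : Finset (V × V)).filter (fun q => s(q.1, q.2) ∈ boost l T Z)).card := by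
    have e1 : ((univ : Finset (V × V)).filter (fun q => s(q.1, q.2) ∈ boost l T Z)).card
        = ∑ v : V, (univ.filter (fun w => s(v, w) ∈ boost l T Z)).card := by
      rw [card_filter, ← univ_product_univ, sum_product]
      exact sum_congr rfl fun v _ => by rw [card_filter]
    rw [e1]
    calc s0 * s0 ≤ (univ.filter (fun v => ends N l v)).card * s0 :=
          Nat.mul_le_mul_right _ (hends l (List.Perm.refl _))
      _ = ∑ v ∈ univ.filter (fun v => ends N l v), s0 := by simp
      _ ≤ ∑ v ∈ univ.filter (fun v => ends N l v), (univ.filter (fun w => s(v, w) ∈ boost l T Z)).card :=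
          sum_le_sum fun v hv => key v (by simpa using hv)
      _ ≤ _ := sum_le_sum_of_subset (subset_univ _)
  refine c1.trans ?_
  refine (card_le_mul_card_image_of_maps_to (f := fun q : V × V => s(q.1, q.2)) (t := boost l T Z)
    (fun q hq => by simpa using hq) 2 ?_)
  intro e _
  induction e with | _ x y
  refine (card_le_card (t := {(x, y), (y, x)}) ?_).trans card_le_two
  intro q hq
  simp only [mem_filter, mem_univ, true_and, Sym2.eq_iff] at hq
  simp only [mem_insert, mem_singleton, Prod.ext_iff]
  tauto

/-- the extremal argument -/
lemma ham_opt [Fintype V] {A Γ F : Finset (Sym2 V)} {Z R : Finset V} {bt gm g s0 M m b : ℕ}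
    (hRZ : R ⊆ Z) (hΓ : Γ ⊆ A) (hFA : F ⊆ A)
    (hFZ : ∀ e ∈ F, ∀ x ∈ Z, x ∉ e)
    (l0 : List V) (hl0 : l0.Nodup) (hall0 : ∀ x, x ∈ l0) (hF0 : ∀ e ∈ F, e ∈ ce l0)
    (h3 : 3 ≤ Fintype.card V)
    (hexp1 : ∀ S : Finset V, S.card ≤ bt →
      2 * S.card ≤ (Z.filter (fun u => u ∉ S ∧ ∃ v ∈ S, s(v, u) ∈ Γ)).card)
    (hexp2 : ∀ S : Finset V, bt ≤ S.card →
      (R.filter (fun u => u ∉ S ∧ ¬ ∃ v ∈ S, s(v, u) ∈ Γ)).card ≤ gm)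
    (hs0 : 3 * s0 + gm ≤ R.card)
    (hdense : ∀ X Y : Finset V, Disjoint X Y → g ≤ X.card → g ≤ Y.card →
      ∃ x ∈ X, ∃ y ∈ Y, s(x, y) ∈ A)
    (hg : 2 * g ≤ m + 1) (hM : Fintype.card V + Γ.card ≤ M) (hb : 2 * b ≤ s0 * s0)
    (hboost : ∀ l : List V, l.Nodup → (∀ x, x ∈ l) → ∀ T ⊆ A, T.card ≤ M →
      ((pe l).toFinset \ T).card ≤ m → b ≤ (boost l T Z).card → ∃ e ∈ boost l T Z, e ∈ A) :
    ∃ l : List V, l.Nodup ∧ (∀ x, x ∈ l) ∧ (∀ e ∈ ce l, e ∈ A) ∧ ∀ e ∈ F, e ∈ ce l := by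
  set Q : List V → Prop := fun l => l.Nodup ∧ (∀ x, x ∈ l) ∧ ∀ e ∈ F, e ∈ ce l with hQ
  set cnt : List V → ℕ := fun l => (ce l).countP (fun e => decide (e ∈ A)) with hcnt
  have hlen : ∀ l : List V, l.Nodup → (∀ x, x ∈ l) → l.length = Fintype.card V := by
    intro l h1 h2
    rw [← List.toFinset_card_of_nodup h1, ← card_univ]
    congr 1; ext x; simp [h2]
  obtain ⟨l, hlQ, hmax⟩ : ∃ l, Q l ∧ ∀ l', Q l' → cnt l' ≤ cnt l := by
    have hex : ∃ k, ∃ l, Q l ∧ cnt l = k := ⟨_, l0, ⟨hl0, hall0, hF0⟩, rfl⟩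
    have hbd : ∀ k, (∃ l, Q l ∧ cnt l = k) → k ≤ Fintype.card V := by
      rintro k ⟨l, hl, rfl⟩
      refine List.countP_le_length.trans ?_
      rw [length_ce, hlen l hl.1 hl.2.1]
    obtain ⟨k0, hk0⟩ := hex
    have hs := Nat.findGreatest_spec (P := fun k => ∃ l, Q l ∧ cnt l = k) (hbd _ hk0) hk0
    obtain ⟨l, hl, hlk⟩ := hs
    refine ⟨l, hl, fun l' hl' => ?_⟩
    rw [hlk]
    exact Nat.le_findGreatest (hbd _ ⟨l', hl', rfl⟩) ⟨l', hl', rfl⟩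
  by_cases hgood : ∀ e ∈ ce l, e ∈ A
  · exact ⟨l, hlQ.1, hlQ.2.1, hgood, hlQ.2.2⟩
  exfalso
  push Not at hgood
  obtain ⟨e0, he0, he0A⟩ := hgood
  -- rotate so that the closing edge is not in A
  obtain ⟨a, L, c, hl1, hcl⟩ : ∃ a L c, (a :: (L ++ [c])).Perm l ∧
      (ce (a :: (L ++ [c]))).Perm (ce l) ∧ s(c, a) ∉ A := by
    have hll := hlen l hlQ.1 hlQ.2.1
    obtain ⟨a, L, c, rfl⟩ : ∃ a L c, l = a :: (L ++ [c]) := by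
      match l, hll with
      | [], h => simp at h; omega
      | [a], h => simp at h; omega
      | a :: b :: l, _ =>
        obtain ⟨L, c, h⟩ : ∃ L c, b :: l = L ++ [c] := by
          have := List.eq_nil_or_concat (b :: l)
          simpa using this
        exact ⟨a, L, c, by rw [h]⟩
    rw [ce_snoc, List.mem_append, List.mem_singleton] at he0
    rcases he0 with he0 | rfl
    · induction e0 with | _ x y
      have : ∃ x y, s(x, y) ∉ A ∧ (x, y) ∈ cp (a :: (L ++ [c])) := by
        rcases mem_pe_iff.1 he0 with h | h
        · exact ⟨x, y, he0A, h⟩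
        · exact ⟨y, x, by rwa [Sym2.eq_swap], h⟩
      obtain ⟨x, y, hxy, h⟩ := this
      obtain ⟨P, S, hPS⟩ := mem_cp_iff.1 h
      have e1 : P ++ x :: y :: S = (P ++ [x]) ++ (y :: S) := by simp
      refine ⟨y, S ++ P, x, ?_, ?_, hxy⟩
      · rw [hPS, e1]
        have : y :: (S ++ P ++ [x]) = (y :: S) ++ (P ++ [x]) := by simp
        rw [this]; exact List.perm_append_comm
      · rw [hPS, e1]
        have : y :: (S ++ P ++ [x]) = (y :: S) ++ (P ++ [x]) := by simp
        rw [this]; exact ce_rotate _ _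
    · exact ⟨a, L, c, List.Perm.refl _, List.Perm.refl _, he0A⟩
  obtain ⟨hce, hca⟩ := hcl
  set l1 := a :: (L ++ [c]) with hl1d
  have hnd1 : l1.Nodup := hl1.nodup_iff.2 hlQ.1
  have hall1 : ∀ x, x ∈ l1 := fun x => hl1.mem_iff.2 (hlQ.2.1 x)
  have hce1 : ce l1 = pe l1 ++ [s(c, a)] := ce_snoc a L c
  have hF1 : ∀ e ∈ F, e ∈ pe l1 := by
    intro e he
    have := hce.mem_iff.2 (hlQ.2.2 e he)
    rw [hce1, List.mem_append, List.mem_singleton] at this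
    rcases this with h | rfl
    · exact h
    · exact absurd (hFA he) hca
  have hc1 : cnt l = (pe l1).countP (fun e => decide (e ∈ A)) := by
    have : cnt l = cnt l1 := (hce.countP_eq _).symm
    rw [this, hcnt]
    simp only [hce1, List.countP_append]
    simp [hca]
  have hmax' : ∀ l' : List V, l'.Perm l1 → (∀ e ∈ F, e ∈ pe l') → ∀ x M y, l' = x :: (M ++ [y]) →
      (pe l').countP (fun e => decide (e ∈ A)) + (if s(x, y) ∈ A then 1 else 0)
        ≤ (pe l1).countP (fun e => decide (e ∈ A)) := by
    intro l' hp hF' x M y hxy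
    have h1 : ce l' = pe l' ++ [s(y, x)] := by rw [hxy]; exact ce_snoc _ _ _
    have := hmax l' ⟨hp.nodup_iff.2 hnd1, fun x => hp.mem_iff.2 (hall1 x), fun e he => by
      rw [h1]; simp [hF' e he]⟩
    rw [← hc1]
    refine le_trans ?_ this
    rw [hcnt]
    simp only [h1, List.countP_append]
    rw [Sym2.eq_swap]
    simp [List.countP_cons]
  have hform : ∀ l' : List V, l'.Perm l1 → ∃ x M y, l' = x :: (M ++ [y]) := by
    intro l' hp
    have h := hp.length_eq
    rw [hl1d] at h
    match l', h with
    | [], h => simp at h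
    | [x], h => simp at h
    | x :: b :: l, _ =>
      obtain ⟨L, c, h⟩ : ∃ L c, b :: l = L ++ [c] := by
        have := List.eq_nil_or_concat (b :: l)
        simpa using this
      exact ⟨x, L, c, by rw [h]⟩
  have hmax2 : ∀ l' : List V, l'.Perm l1 → (∀ e ∈ F, e ∈ pe l') →
      (pe l').countP (fun e => decide (e ∈ A)) ≤ (pe l1).countP (fun e => decide (e ∈ A)) := by
    intro l' hp hF'
    obtain ⟨x, M, y, h⟩ := hform l' hp
    have := hmax' l' hp hF' x M y h
    omega
  -- two-opt
  have htwo : ∀ P u Qq w R', l1 = P ++ u :: (Qq ++ w :: R') → ∀ q1 Q1 q2 Q2, Qq = q1 :: Q1 →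
      Qq = Q2 ++ [q2] → s(u, q1) ∉ A → s(q2, w) ∉ A → s(u, q2) ∉ A := by
    intro P u Qq w R' h q1 Q1 q2 Q2 e1 e2 n1 n2 hA
    have p1 := pe_two P u Qq w R' q1 Q1 q2 Q2 e1 e2
    have p2 := pe_two_rev P u Qq w R' q1 Q1 q2 Q2 e1 e2
    have := hmax2 (P ++ u :: (Qq.reverse ++ w :: R')) (by
        rw [h]
        exact List.Perm.append_left _ (((List.reverse_perm _).append_right _).cons _)) (by
        intro e he
        have h4 := hF1 e he
        rw [h, p1] at h4
        rw [p2.mem_iff]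
        have m1 : e ≠ s(u, q1) := by rintro rfl; exact n1 (hFA he)
        have m2 : e ≠ s(q2, w) := by rintro rfl; exact n2 (hFA he)
        simp only [List.mem_append, List.mem_cons] at h4 ⊢
        tauto)
    rw [p2.countP_eq, h, p1] at this
    simp only [List.countP_append, List.countP_cons, hA, n1, n2, decide_true, decide_false] at this
    simp at this
  set W : Finset V := univ.filter (fun x => ∃ y, (x, y) ∈ cp l1 ∧ s(x, y) ∉ A) with hW
  have hind : ∀ x ∈ W, ∀ y ∈ W, x ≠ y → s(x, y) ∉ A := by
    intro x hx y hy hxy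
    simp only [hW, mem_filter, mem_univ, true_and] at hx hy
    obtain ⟨x', hx1, hx2⟩ := hx
    obtain ⟨y', hy1, hy2⟩ := hy
    have main : ∀ x x' y y' P' S', s(x, x') ∉ A → s(y, y') ∉ A → l1 = P' ++ y :: y' :: S' →
        (x, x') ∈ cp (P' ++ [y]) → s(x, y) ∉ A := by
      intro x x' y y' P' S' hx2 hy2 hP h
      obtain ⟨C, D, hCD⟩ := mem_cp_iff.1 h
      obtain ⟨Q2, q2, h2⟩ : ∃ Q2 q2, x' :: D = Q2 ++ [q2] := by
        have := List.eq_nil_or_concat (x' :: D)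
        simpa using this
      have hq : y = q2 := by
        rw [h2] at hCD
        have e : C ++ x :: (Q2 ++ [q2]) = (C ++ x :: Q2) ++ [q2] := by simp
        rw [e] at hCD
        simpa using (List.append_inj' hCD (by simp)).2
      subst hq
      refine htwo C x (x' :: D) y' S' ?_ x' D y Q2 rfl h2 hx2 hy2
      rw [hP]
      have : P' ++ y :: y' :: S' = (P' ++ [y]) ++ y' :: S' := by simp
      rw [this, hCD]; simp
    obtain ⟨P', S', hP⟩ := mem_cp_iff.1 hy1
    have hx1' := hx1
    rw [hP, cp_split2, List.mem_append, List.mem_cons] at hx1'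
    rcases hx1' with h | h | h
    · exact main x x' y y' P' S' hx2 hy2 hP h
    · simp only [Prod.mk.injEq] at h; exact absurd h.1 hxy
    · rw [Sym2.eq_swap]
      obtain ⟨C, D, hCD⟩ := mem_cp_iff.1 h
      refine main y y' x x' (P' ++ y :: C) D hy2 hx2 ?_ ?_
      · rw [hP, hCD]; simp
      · rw [mem_cp_iff]
        cases C with
        | nil =>
          simp at hCD
          exact ⟨P', [], by simp [hCD.1]⟩
        | cons c0 C =>
          simp at hCD
          exact ⟨P', C ++ [x], by simp [hCD.1]⟩
  have hWc : W.card ≤ m := by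
    by_contra hc
    have hc' : 2 * g ≤ W.card := by omega
    obtain ⟨X, hX, hXc⟩ := exists_subset_card_eq (s := W) (n := g) (by omega)
    obtain ⟨x, hx, y, hy, hxy⟩ := hdense X (W \ X) disjoint_sdiff (by omega)
      (by rw [card_sdiff_of_subset hX]; omega)
    rw [mem_sdiff] at hy
    exact hind x (hX hx) y hy.1 (by rintro rfl; exact hy.2 hx) hxy
  set T : Finset (Sym2 V) := ((pe l1).toFinset.filter (· ∈ A)) ∪ Γ with hT
  have hTA : T ⊆ A := by
    refine union_subset ?_ hΓ
    intro e he
    exact (mem_filter.1 he).2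
  have hTM : T.card ≤ M := by
    refine (card_union_le _ _).trans (le_trans ?_ hM)
    refine Nat.add_le_add_right ?_ _
    refine (card_filter_le _ _).trans ((List.toFinset_card_le _).trans ?_)
    rw [length_pe, hlen l1 hnd1 hall1]; omega
  have hTm : ((pe l1).toFinset \ T).card ≤ m := by
    refine le_trans ?_ hWc
    refine card_le_card_of_forall_subsingleton (fun e x => ∃ y, e = s(x, y) ∧ (x, y) ∈ cp l1) ?_ ?_
    · intro e he
      rw [mem_sdiff, List.mem_toFinset] at he
      have heA : e ∉ A := by
        intro h
        exact he.2 (mem_union_left _ (mem_filter.2 ⟨List.mem_toFinset.2 he.1, h⟩))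
      have he1 := he.1
      clear he
      induction e with | _ x y
      rcases mem_pe_iff.1 he1 with h | h
      · exact ⟨x, by simp only [hW, mem_filter, mem_univ, true_and]; exact ⟨y, h, heA⟩, y, rfl, h⟩
      · rw [Sym2.eq_swap] at heA ⊢
        exact ⟨y, by simp only [hW, mem_filter, mem_univ, true_and]; exact ⟨x, h, heA⟩, x, rfl, h⟩
    · rintro x _ e ⟨_, y, rfl, h⟩ e' ⟨_, y', rfl, h'⟩
      rw [cp_inj_left hnd1 h h']
  have hends : ∀ l' : List V, l'.Perm l1 →
      s0 ≤ (univ.filter (fun v => ends (fun v u => s(v, u) ∈ T ∧ u ∈ Z) l' v)).card := by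
    intro l' hp
    set N : V → V → Prop := fun v u => s(v, u) ∈ T ∧ u ∈ Z with hN
    obtain ⟨x, M', y, hxy⟩ := hform l' hp
    have hpo := posa (N := N) (l0 := l') (L := x :: M') (z := y) (by simp [hxy])
      (hp.nodup_iff.2 hnd1) (fun x => hp.mem_iff.2 (hall1 x))
    set S := univ.filter (fun v => ends N l' v) with hS
    replace hpo : (univ.filter (fun u => ¬ ends N l' u ∧ ∃ v, ends N l' v ∧ N v u)).card + 1
      ≤ 2 * S.card := by convert hpo
    have hsub : Z.filter (fun u => u ∉ S ∧ ∃ v ∈ S, s(v, u) ∈ Γ) ⊆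
        univ.filter (fun u => ¬ ends N l' u ∧ ∃ v, ends N l' v ∧ N v u) := by
      intro u hu
      simp only [hS, mem_filter, mem_univ, true_and] at hu ⊢
      obtain ⟨h1, h2, v, h3, h4⟩ := hu
      exact ⟨h2, v, h3, mem_union_right _ h4, h1⟩
    have hbt : bt ≤ S.card := by
      by_contra hlt
      have h1 := hexp1 S (by omega)
      have h2 := card_le_card hsub
      omega
    have h2 := hexp2 S hbt
    have h4 := card_le_card hsub
    have h5 : R ⊆ (S ∪ Z.filter (fun u => u ∉ S ∧ ∃ v ∈ S, s(v, u) ∈ Γ)) ∪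
        R.filter (fun u => u ∉ S ∧ ¬ ∃ v ∈ S, s(v, u) ∈ Γ) := by
      intro u hu
      simp only [mem_union, mem_filter]
      have := hRZ hu
      by_cases h8 : u ∈ S
      · exact Or.inl (Or.inl h8)
      · by_cases h9 : ∃ v ∈ S, s(v, u) ∈ Γ
        · exact Or.inl (Or.inr ⟨this, h8, h9⟩)
        · exact Or.inr ⟨hu, h8, h9⟩
    have h6 := (card_le_card h5).trans (card_union_le _ _)
    have h7 := card_union_le S (Z.filter (fun u => u ∉ S ∧ ∃ v ∈ S, s(v, u) ∈ Γ))
    omega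
  have hbc := boost_card (l := l1) (T := T) (Z := Z) (s0 := s0)
    (by rw [hlen l1 hnd1 hall1]; omega) hends
  obtain ⟨e, he, heA⟩ := hboost l1 hnd1 hall1 T hTA hTM hTm (by omega)
  simp only [boost, mem_filter, mem_univ, true_and] at he
  obtain ⟨x, M', y, hre, rfl⟩ := he
  obtain ⟨i1, i2, i3⟩ := boost_inv hTA hFZ hre hF1
  have := hmax' _ i1 i2 x M' y rfl
  simp only [heA, if_true] at this
  omega

end opt

section conv
open scoped Classical
open Finset
variable {V : Type*}

lemma walk_of_pe (G : SimpleGraph V) (L : List V) (a b : V)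
    (h : ∀ e ∈ pe (a :: (L ++ [b])), e ∈ G.edgeSet) :
    ∃ w : G.Walk a b, w.support = a :: (L ++ [b]) ∧ w.edges = pe (a :: (L ++ [b])) := by
  induction L generalizing a with
  | nil =>
    have : G.Adj a b := by simpa using h
    exact ⟨SimpleGraph.Walk.cons this SimpleGraph.Walk.nil, by simp, by simp⟩
  | cons c L ih =>
    simp only [List.cons_append, pe_cons, List.mem_cons] at h
    obtain ⟨w, h1, h2⟩ := ih c (fun e he => h e (Or.inr (by simpa using he)))
    have hac : G.Adj a c := by simpa using h _ (Or.inl rfl)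
    exact ⟨SimpleGraph.Walk.cons hac w, by simp [h1], by simp [h2]⟩

lemma ham_conv {n : ℕ} (hn : 3 ≤ n) {A : Finset (Sym2 (Fin n))} (hA : A ⊆ edg n) {l : List (Fin n)}
    (hl : l.Nodup) (hall : ∀ x, x ∈ l) (hce : ∀ e ∈ ce l, e ∈ A) :
    ∃ (v : Fin n) (w : (SimpleGraph.fromEdgeSet (A : Set (Sym2 (Fin n)))).Walk v v),
      w.IsHamiltonianCycle ∧ w.edges.Perm (ce l) := by
  have hlen : l.length = n := by
    rw [← List.toFinset_card_of_nodup hl]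
    have : l.toFinset = univ := by ext x; simp [hall]
    rw [this]; simp
  obtain ⟨a, L, b, rfl⟩ : ∃ a L c, l = a :: (L ++ [c]) := by
    match l, hlen with
    | [], h => simp at h; omega
    | [a], h => simp at h; omega
    | a :: b :: l, _ =>
      obtain ⟨L, c, h⟩ : ∃ L c, b :: l = L ++ [c] := by
        have := List.eq_nil_or_concat (b :: l)
        simpa using this
      exact ⟨a, L, c, by rw [h]⟩
  set G := SimpleGraph.fromEdgeSet (A : Set (Sym2 (Fin n))) with hG
  have hGe : ∀ e ∈ A, e ∈ G.edgeSet := by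
    intro e he
    have := hA he
    simp only [edg, mem_filter, mem_univ, true_and] at this
    simp [hG, he, this]
  have hnd := ce_nodup hl (by omega)
  rw [ce_snoc] at hce hnd
  obtain ⟨w, h1, h2⟩ := walk_of_pe G L a b (fun e he => hGe e (hce e (by simp [he])))
  have hba : G.Adj b a := by
    have := hGe _ (hce s(b, a) (by simp))
    simpa using this
  refine ⟨b, SimpleGraph.Walk.cons hba w, ?_, ?_⟩
  · have hcyc : (SimpleGraph.Walk.cons hba w).IsCycle := by
      rw [SimpleGraph.Walk.cons_isCycle_iff]
      refine ⟨SimpleGraph.Walk.IsPath.mk' (by rw [h1]; exact hl), ?_⟩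
      rw [h2]
      intro h
      rw [List.nodup_append] at hnd
      exact hnd.2.2 _ h _ (by simp) rfl
    rw [SimpleGraph.Walk.isHamiltonianCycle_isCycle_and_isHamiltonian_tail]
    refine ⟨hcyc, ?_⟩
    intro x
    have hx : x ∈ w.support := by rw [h1]; exact hall x
    have ht : (SimpleGraph.Walk.cons hba w).tail.support = w.support := by
      rw [SimpleGraph.Walk.support_tail_of_not_nil _ (by simp)]; simp
    rw [ht]
    exact List.count_eq_one_of_mem (by rw [h1]; exact hl) hx
  · rw [ce_snoc, SimpleGraph.Walk.edges_cons, h2]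
    exact (List.perm_append_singleton _ _).symm

end conv

section arcs
open scoped Classical
open Finset
variable {V : Type*}

/-- number of used arcs -/
noncomputable def fc (M : Finset (V × V)) (l : List V) : ℕ := (cp l).countP (fun q => decide (q ∈ M))

lemma fc_super (M : Finset (V × V)) (A B : List V) : fc M A + fc M B ≤ fc M (A ++ B) := by
  rcases List.eq_nil_or_concat A with rfl | ⟨A', a, rfl⟩
  · simp [fc]
  cases B with
  | nil => simp [fc]
  | cons b B =>
    have e : A'.concat a ++ b :: B = A' ++ a :: b :: B := by simp
    rw [e]
    unfold fc
    rw [cp_split2]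
    simp only [List.concat_eq_append, List.countP_append, List.countP_cons]
    omega

lemma fc_eq (M : Finset (V × V)) (A B : List V)
    (h : ∀ a b, A.getLast? = some a → B.head? = some b → (a, b) ∉ M) :
    fc M (A ++ B) = fc M A + fc M B := by
  rcases List.eq_nil_or_concat A with rfl | ⟨A', a, rfl⟩
  · simp [fc]
  cases B with
  | nil => simp [fc]
  | cons b B =>
    have e : A'.concat a ++ b :: B = A' ++ a :: b :: B := by simp
    have h' := h a b (by simp) (by simp)
    rw [e]
    unfold fc
    rw [cp_split2]
    simp [h']

lemma fc_one (M : Finset (V × V)) (A B : List V) (x y : V) (h : (x, y) ∈ M) :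
    fc M (A ++ x :: y :: B) = fc M (A ++ [x]) + fc M (y :: B) + 1 := by
  unfold fc
  rw [cp_split2]
  simp only [List.countP_append, List.countP_cons, h, decide_true, if_true]
  omega

lemma arcs_opt {M : Finset (V × V)}
    (hf : ∀ x y y', (x, y) ∈ M → (x, y') ∈ M → y = y')
    (hi : ∀ x x' y, (x, y) ∈ M → (x', y) ∈ M → x = x')
    {l : List V} (hl : l.Nodup) (hall : ∀ x, x ∈ l)
    (hmax : ∀ l' : List V, l'.Perm l → fc M l' ≤ fc M l) {x y : V} (hxy : (x, y) ∈ M) (hne : x ≠ y)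
    (hun : (x, y) ∉ cp l) :
    ∃ U W Z, l = U ++ (y :: (W ++ [x])) ++ Z ∧ ∀ q ∈ cp (y :: (W ++ [x])), q ∈ M := by
  obtain ⟨U, S, hUS⟩ := List.append_of_mem (hall x)
  have hy := hall y
  rw [hUS] at hy
  simp only [List.mem_append, List.mem_cons] at hy
  rcases hy with hy | hy | hy
  · -- y before x
    obtain ⟨U', W, rfl⟩ := List.append_of_mem hy
    refine ⟨U', W, S, by simp [hUS], ?_⟩
    by_contra hq
    push Not at hq
    obtain ⟨⟨c, d⟩, hcd, hcdM⟩ := hq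
    obtain ⟨C1, C2, hC⟩ := mem_cp_iff.1 hcd
    have hl2 : l = U' ++ ((C1 ++ c :: d :: C2) ++ S) := by rw [← hC, hUS]; simp
    have hxS : ∀ b ∈ S, (x, b) ∉ M := by
      intro b hb hM
      have := hf _ _ _ hxy hM
      subst this
      rw [hUS] at hl
      simp [List.nodup_append] at hl
      tauto
    have hyU : ∀ a ∈ U', (a, y) ∉ M := by
      intro a ha hM
      have := hi _ _ _ hxy hM
      subst this
      rw [hUS] at hl
      simp [List.nodup_append] at hl
      have := hl.2.2 x ha
      exact this.2 x (Or.inr (Or.inl rfl)) rfl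
    have hlast : (C1 ++ c :: d :: C2).getLast? = some x := by rw [← hC, ← List.cons_append, List.getLast?_concat]
    have hhead : (C1 ++ c :: d :: C2).head? = some y := by rw [← hC]; simp
    have f1 : fc M l = fc M U' + (fc M (C1 ++ c :: d :: C2) + fc M S) := by
      rw [hl2, fc_eq, fc_eq]
      · intro a b ha hb
        rw [hlast] at ha
        simp at ha; subst ha
        exact hxS b (List.mem_of_mem_head? hb)
      · intro a b ha hb
        rw [List.head?_append, hhead] at hb
        simp at hb; subst hb
        exact hyU a (List.mem_of_getLast? ha)
    have f2 : fc M (C1 ++ c :: d :: C2) = fc M (C1 ++ [c]) + fc M (d :: C2) := by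
      have e : C1 ++ c :: d :: C2 = (C1 ++ [c]) ++ (d :: C2) := by simp
      rw [e, fc_eq]
      intro a b ha hb
      simp at ha hb
      rw [← ha, ← hb]; exact hcdM
    have f3 : fc M ((d :: C2) ++ (C1 ++ [c])) = fc M (d :: C2) + fc M (C1 ++ [c]) + 1 := by
      obtain ⟨E, e0, hE⟩ : ∃ E e0, d :: C2 = E ++ [e0] := by
        have := List.eq_nil_or_concat (d :: C2)
        simpa using this
      obtain ⟨g0, G, hG⟩ := snoc_cases C1 c
      have e1 : x = e0 := by
        have : C1 ++ c :: d :: C2 = C1 ++ c :: (E ++ [e0]) := by rw [hE]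
        rw [this, ← List.cons_append, ← List.append_assoc, List.getLast?_concat] at hlast
        simpa using hlast.symm
      have e2 : y = g0 := by
        have : C1 ++ c :: d :: C2 = g0 :: (G ++ d :: C2) := by
          have : C1 ++ c :: d :: C2 = (C1 ++ [c]) ++ d :: C2 := by simp
          rw [this, hG]; simp
        rw [this] at hhead
        simpa using hhead.symm
      rw [hE, hG, ← e1, ← e2]
      have : E ++ [x] ++ y :: G = E ++ x :: y :: G := by simp
      rw [this, fc_one _ _ _ _ _ hxy]
    have f4 := hmax (U' ++ (((d :: C2) ++ (C1 ++ [c])) ++ S)) (by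
      rw [hl2]
      refine List.Perm.append_left _ (List.Perm.append_right _ ?_)
      have e : C1 ++ c :: d :: C2 = (C1 ++ [c]) ++ (d :: C2) := by simp
      rw [e]; exact List.perm_append_comm)
    have f5 := fc_super M U' (((d :: C2) ++ (C1 ++ [c])) ++ S)
    have f6 := fc_super M ((d :: C2) ++ (C1 ++ [c])) S
    omega
  · exact absurd hy hne.symm
  · -- x before y
    exfalso
    obtain ⟨W, Z, rfl⟩ := List.append_of_mem hy
    cases W with
    | nil =>
      apply hun
      rw [mem_cp_iff]
      exact ⟨U, Z, by simpa using hUS⟩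
    | cons w W =>
    have hl2 : l = (U ++ [x]) ++ ((w :: W) ++ (y :: Z)) := by rw [hUS]; simp
    have f1 : fc M l = fc M (U ++ [x]) + (fc M (w :: W) + fc M (y :: Z)) := by
      rw [hl2, fc_eq M (U ++ [x]), fc_eq M (w :: W)]
      · intro a b ha hb hM
        simp only [List.head?_cons, Option.some.injEq] at hb
        subst hb
        have := hi _ _ _ hxy hM
        subst this
        have := List.mem_of_getLast? ha
        rw [hUS] at hl
        simp [List.nodup_append] at hl this
        tauto
      · intro a b ha hb hM
        simp at ha hb
        subst ha; subst hb
        have := hf _ _ _ hxy hM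
        subst this
        rw [hUS] at hl
        simp [List.nodup_append] at hl
    have f2 := hmax ((w :: W) ++ (U ++ x :: y :: Z)) (by
      rw [hl2]
      have e : (w :: W) ++ (U ++ x :: y :: Z) = ((w :: W) ++ (U ++ [x])) ++ (y :: Z) := by simp
      have e' : (U ++ [x]) ++ ((w :: W) ++ (y :: Z)) = ((U ++ [x]) ++ (w :: W)) ++ (y :: Z) := by simp
      rw [e, e']
      exact List.Perm.append_right _ List.perm_append_comm)
    have f3 := fc_super M (w :: W) (U ++ x :: y :: Z)
    have f4 := fc_one M U Z x y hxy
    omega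

/-- number of short cyclic tuples -/
noncomputable def ncyc [Fintype V] (K : ℕ) (A : Finset (Sym2 V)) : ℕ :=
  ∑ k ∈ Icc 3 K, ((univ : Finset (List.Vector V k)).filter
    (fun t => t.toList.Nodup ∧ ∀ e ∈ ce t.toList, e ∈ A)).card

lemma arcs_list [Fintype V] {M : Finset (V × V)} {A : Finset (Sym2 V)} (K : ℕ)
    (hf : ∀ x y y', (x, y) ∈ M → (x, y') ∈ M → y = y')
    (hi : ∀ x x' y, (x, y) ∈ M → (x', y) ∈ M → x = x')
    (hirr : ∀ x y, (x, y) ∈ M → x ≠ y) (has : ∀ x y, (x, y) ∈ M → (y, x) ∉ M)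
    (hA : ∀ x y, (x, y) ∈ M → s(x, y) ∈ A) :
    ∃ l : List V, l.Nodup ∧ (∀ x, x ∈ l) ∧ ∃ a, a * K ≤ Fintype.card V ∧
      M.card ≤ (M.filter (fun q => q ∈ cp l)).card + a + ncyc K A := by
  obtain ⟨l, ⟨hl, hall⟩, hmax⟩ : ∃ l : List V, (l.Nodup ∧ ∀ x, x ∈ l) ∧
      ∀ l' : List V, l'.Perm l → fc M l' ≤ fc M l := by
    set l0 := (univ : Finset V).toList with hl0
    obtain ⟨l, hl, hm⟩ := Set.exists_max_image {l : List V | l.Perm l0} (fc M)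
      (by
        refine (l0.permutations.toFinset.finite_toSet).subset ?_
        intro l hl
        simpa [List.mem_permutations] using hl) ⟨l0, List.Perm.refl _⟩
    refine ⟨l, ⟨(List.Perm.nodup_iff hl).2 (nodup_toList _), fun x => ?_⟩, fun l' hl' => ?_⟩
    · exact (List.Perm.mem_iff hl).2 (by simp [hl0])
    · exact hm l' (hl'.trans hl)
  refine ⟨l, hl, hall, ?_⟩
  set U0 := M.filter (fun q => q ∉ cp l) with hU0
  have hC : ∀ q : V × V, q ∈ U0 → ∃ C : List V, (∃ U Z, l = U ++ C ++ Z) ∧ (∃ W, C = q.2 :: (W ++ [q.1])) ∧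
      ∀ e ∈ cp C, e ∈ M := by
    rintro ⟨x, y⟩ hq
    rw [hU0, mem_filter] at hq
    obtain ⟨U, W, Z, h1, h2⟩ := arcs_opt hf hi hl hall hmax hq.1 (hirr _ _ hq.1) hq.2
    exact ⟨_, ⟨U, Z, h1⟩, ⟨W, rfl⟩, h2⟩
  choose! C hC1 hC2 hC3 using hC
  have hCnd : ∀ q ∈ U0, (C q).Nodup := by
    intro q hq
    obtain ⟨U, Z, h⟩ := hC1 q hq
    rw [h] at hl
    rw [List.nodup_append, List.nodup_append] at hl
    exact hl.1.2.1
  have hcpl : ∀ q ∈ U0, ∀ e ∈ cp (C q), e ∈ cp l := by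
    rintro q hq ⟨a, b⟩ he
    obtain ⟨U, Z, h⟩ := hC1 q hq
    obtain ⟨P, S, hP⟩ := mem_cp_iff.1 he
    rw [mem_cp_iff]
    exact ⟨U ++ P, S ++ Z, by rw [h, hP]; simp⟩
  have hstart : ∀ q ∈ U0, ∀ q' ∈ U0, q'.2 ∈ C q → q'.2 = q.2 := by
    intro q hq q' hq' hm
    obtain ⟨W, hW⟩ := hC2 q hq
    obtain ⟨P, S, hP⟩ := List.append_of_mem hm
    rcases List.eq_nil_or_concat P with rfl | ⟨P', u, rfl⟩
    · rw [hW] at hP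
      simp at hP
      exact hP.1.symm
    · exfalso
      have h1 : (u, q'.2) ∈ cp (C q) := by
        rw [mem_cp_iff]
        exact ⟨P', S, by rw [hP]; simp⟩
      have h2 := hC3 q hq _ h1
      have hq2 := (mem_filter.1 hq')
      have : u = q'.1 := hi _ _ _ h2 hq2.1
      subst this
      exact hq2.2 (hcpl q hq _ h1)
  have hinj : ∀ q ∈ U0, ∀ q' ∈ U0, q'.2 = q.2 → q' = q := by
    intro q hq q' hq' h
    have h1 := (mem_filter.1 hq).1
    have h2 := (mem_filter.1 hq').1
    refine Prod.ext ?_ h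
    have h2' : (q'.1, q.2) ∈ M := by rw [← h]; exact h2
    exact hi _ _ _ h2' h1
  have hdisj : ∀ q ∈ U0, ∀ q' ∈ U0, q ≠ q' → Disjoint (C q).toFinset (C q').toFinset := by
    intro q hq q' hq' hne
    rw [Finset.disjoint_left]
    intro v hv hv'
    rw [List.mem_toFinset] at hv hv'
    apply hne
    obtain ⟨U, Z, h⟩ := hC1 q hq
    obtain ⟨U', Z', h'⟩ := hC1 q' hq'
    obtain ⟨W, hW⟩ := hC2 q hq
    obtain ⟨W', hW'⟩ := hC2 q' hq'
    obtain ⟨C1, C2, h1⟩ := List.append_of_mem hv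
    obtain ⟨C1', C2', h1'⟩ := List.append_of_mem hv'
    have hsplit : U ++ C1 = U' ++ C1' := by
      have e1 : l = (U ++ C1) ++ v :: (C2 ++ Z) := by rw [h, h1]; simp
      have e2 : l = (U' ++ C1') ++ v :: (C2' ++ Z') := by rw [h', h1']; simp
      have n1 : v ∉ U ++ C1 := by
        intro hm
        rw [e1, List.nodup_append] at hl
        exact hl.2.2 v hm v (by simp) rfl
      have n2 : v ∉ U' ++ C1' := by
        intro hm
        rw [e2, List.nodup_append] at hl
        exact hl.2.2 v hm v (by simp) rfl
      have e3 := e1.symm.trans e2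
      have := congrArg (fun t => t.idxOf v) e3
      rw [List.idxOf_append_of_notMem n1, List.idxOf_append_of_notMem n2] at this
      simp only [List.idxOf_cons_self] at this
      exact (List.append_inj e3 (by omega)).1
    have m1 : q.2 ∈ C1 ++ [v] := by
      rw [hW] at h1
      cases C1 with
      | nil => simp at h1; simp [h1.1]
      | cons a C1 => simp at h1; simp [h1.1]
    have m2 : q'.2 ∈ C1' ++ [v] := by
      rw [hW'] at h1'
      cases C1' with
      | nil => simp at h1'; simp [h1'.1]
      | cons a C1 => simp at h1'; simp [h1'.1]
    rcases List.append_eq_append_iff.1 hsplit with ⟨a, ha, ha'⟩ | ⟨a, ha, ha'⟩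
    · -- C1 = a ++ C1'
      refine (hinj q hq q' hq' (hstart q hq q' hq' ?_)).symm
      rw [h1, ha']
      simp at m2 ⊢
      tauto
    · refine hinj q' hq' q hq (hstart q' hq' q hq ?_)
      rw [h1', ha']
      simp at m1 ⊢
      tauto
  set Lg := U0.filter (fun q => K < (C q).length) with hLg
  set Sh := U0.filter (fun q => ¬ K < (C q).length) with hSh
  refine ⟨Lg.card, ?_, ?_⟩
  · calc Lg.card * K = ∑ q ∈ Lg, K := by simp
      _ ≤ ∑ q ∈ Lg, (C q).toFinset.card := by
          refine sum_le_sum fun q hq => ?_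
          rw [hLg, mem_filter] at hq
          rw [List.toFinset_card_of_nodup (hCnd q hq.1)]
          omega
      _ = (Lg.biUnion (fun q => (C q).toFinset)).card := by
          rw [card_biUnion]
          intro q hq q' hq' hne
          exact hdisj q (mem_filter.1 hq).1 q' (mem_filter.1 hq').1 hne
      _ ≤ Fintype.card V := card_le_univ _
  · have c1 : M.card = (M.filter (fun q => q ∈ cp l)).card + U0.card :=
      (card_filter_add_card_filter_not _).symm
    have c2 : U0.card = Lg.card + Sh.card := (card_filter_add_card_filter_not _).symm
    have c3 : Sh.card ≤ ncyc K A := by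
      have hlen : ∀ q ∈ Sh, (C q).length ∈ Icc 3 K := by
        intro q hq
        rw [hSh, mem_filter] at hq
        obtain ⟨W, hW⟩ := hC2 q hq.1
        rw [mem_Icc]
        refine ⟨?_, by omega⟩
        cases W with
        | nil =>
          exfalso
          have := hC3 q hq.1 (q.2, q.1) (by rw [hW]; simp)
          exact has _ _ this (mem_filter.1 hq.1).1
        | cons w W => rw [hW]; simp
      rw [card_eq_sum_card_fiberwise hlen, ncyc]
      refine sum_le_sum fun k _ => ?_
      refine card_le_card_of_forall_subsingleton (fun q t => t.toList = C q) ?_ ?_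
      · intro q hq
        rw [mem_filter] at hq
        have hq0 := (mem_filter.1 hq.1).1
        refine ⟨⟨C q, hq.2⟩, ?_, rfl⟩
        refine mem_filter.2 ⟨mem_univ _, hCnd q hq0, ?_⟩
        intro e he
        replace he : e ∈ ce (C q) := he
        obtain ⟨W, hW⟩ := hC2 q hq0
        rw [hW, ce_snoc, List.mem_append, List.mem_singleton, ← hW] at he
        rcases he with he | rfl
        · induction e with | _ a b
          rcases mem_pe_iff.1 he with h | h
          · exact hA _ _ (hC3 q hq0 _ h)
          · rw [Sym2.eq_swap]; exact hA _ _ (hC3 q hq0 _ h)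
        · exact hA _ _ (mem_filter.1 hq0).1
      · rintro t _ q ⟨hq, h1⟩ q' ⟨hq', h2⟩
        have hq0 := (mem_filter.1 (mem_filter.1 hq).1).1
        have hq0' := (mem_filter.1 (mem_filter.1 hq').1).1
        obtain ⟨W, hW⟩ := hC2 q hq0
        obtain ⟨W', hW'⟩ := hC2 q' hq0'
        have h3 : C q = C q' := h1.symm.trans h2
        rw [hW, hW'] at h3
        simp at h3
        exact hinj q' hq0' q hq0 h3.1
    omega

end arcs

section mono
open scoped Classical
open Finset

/-- edges between `P` and `Q` -/
noncomputable def eb {V : Type*} (A : Finset (Sym2 V)) (P Q : Finset V) : Finset (Sym2 V) :=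
  A.filter (fun e => ∃ x ∈ P, ∃ y ∈ Q, e = s(x, y))

lemma mem_eb {V : Type*} {A : Finset (Sym2 V)} {P Q : Finset V} {e : Sym2 V} :
    e ∈ eb A P Q ↔ e ∈ A ∧ ∃ x ∈ P, ∃ y ∈ Q, e = s(x, y) := by
  unfold eb; exact mem_filter

lemma eb_sub {V : Type*} {A : Finset (Sym2 V)} {P Q : Finset V} : eb A P Q ⊆ A := by
  unfold eb; exact filter_subset _ _

lemma eb_comm {V : Type*} (A : Finset (Sym2 V)) (P Q : Finset V) : eb A P Q = eb A Q P := by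
  unfold eb
  refine filter_congr fun e _ => ?_
  constructor
  · rintro ⟨x, hx, y, hy, rfl⟩; exact ⟨y, hy, x, hx, Sym2.eq_swap⟩
  · rintro ⟨x, hx, y, hy, rfl⟩; exact ⟨y, hy, x, hx, Sym2.eq_swap⟩

lemma orient {n : ℕ} (H : Finset (Sym2 (Fin n))) (hH : H ⊆ edg n) :
    ∃ D : Fin n → Fin n → Prop, (∀ x y, D x y → s(x, y) ∈ H) ∧ (∀ x y, D x y → ¬ D y x) ∧
      ∀ P Q : Finset (Fin n), Disjoint P Q → (∀ x ∈ P, ∀ y ∈ Q, ¬ D x y) →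
        (eb H P Q).card ≤ 2 * n := by
  by_contra hcon
  push Not at hcon
  set D : Finset (Sym2 (Fin n)) → Fin n → Fin n → Prop :=
    fun O x y => s(x, y) ∈ H ∧ (x < y ↔ s(x, y) ∈ O) with hD
  have key : ∀ O : Finset (Sym2 (Fin n)), ∃ q : Finset (Fin n) × Finset (Fin n), Disjoint q.1 q.2 ∧
      (∀ x ∈ q.1, ∀ y ∈ q.2, ¬ D O x y) ∧ 2 * n < (eb H q.1 q.2).card := by
    intro O
    obtain ⟨P, Q, h1, h2, h3⟩ := hcon (D O) (fun x y h => h.1) (by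
      rintro x y ⟨h1, h2⟩ ⟨h3, h4⟩
      rw [Sym2.eq_swap] at h4
      have hne : x ≠ y := mem_edg.1 (hH h1)
      rcases lt_or_gt_of_ne hne with h | h
      · exact absurd (h4.2 (h2.1 h)) (not_lt.2 h.le)
      · exact absurd (h2.2 (h4.1 h)) (not_lt.2 h.le))
    exact ⟨(P, Q), h1, h2, h3⟩
  choose q hq1 hq2 hq3 using key
  have hcard : ∀ b : Finset (Fin n) × Finset (Fin n),
      (H.powerset.filter (fun O => q O = b)).card * 2 ^ (2 * n + 1) ≤ 2 ^ H.card := by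
    intro b
    by_cases hb : ∃ O, q O = b
    · obtain ⟨O0, rfl⟩ := hb
      set E := eb H (q O0).1 (q O0).2 with hE
      have hEH : E ⊆ H := eb_sub
      have h1 : (H.powerset.filter (fun O => q O = q O0)).card ≤ (H \ E).powerset.card := by
        refine card_le_card_of_injOn (fun O => O \ E) ?_ ?_
        · intro O hO
          have hO' := mem_filter.1 hO
          exact mem_powerset.2 (sdiff_subset_sdiff (mem_powerset.1 hO'.1) le_rfl)
        · intro O hO O' hO' heq
          have h1 := mem_filter.1 hO
          have h2 := mem_filter.1 hO'
          ext e
          by_cases he : e ∈ E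
          · have he' := he
            rw [hE, mem_eb] at he'
            obtain ⟨heH, x, hx, y, hy, rfl⟩ := he'
            have a1 := hq2 O x (by rw [h1.2]; exact hx) y (by rw [h1.2]; exact hy)
            have a2 := hq2 O' x (by rw [h2.2]; exact hx) y (by rw [h2.2]; exact hy)
            simp only [hD] at a1 a2
            tauto
          · have := congrArg (fun T => e ∈ T) heq
            simp only [mem_sdiff, eq_iff_iff] at this
            tauto
      have h2 : E.card + (H \ E).card = H.card := by
        have := card_sdiff_add_card_eq_card hEH
        omega
      have h3 : 2 * n + 1 ≤ E.card := hq3 O0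
      rw [card_powerset] at h1
      calc _ ≤ 2 ^ (H \ E).card * 2 ^ E.card :=
            Nat.mul_le_mul h1 (Nat.pow_le_pow_right (by norm_num) h3)
        _ = 2 ^ H.card := by rw [← pow_add, add_comm, h2]
    · push Not at hb
      have : H.powerset.filter (fun O => q O = b) = ∅ := by
        rw [filter_eq_empty_iff]; intro O _; exact hb O
      rw [this]; simp
  have htot : (H.powerset).card = ∑ b : Finset (Fin n) × Finset (Fin n),
      (H.powerset.filter (fun O => q O = b)).card :=
    card_eq_sum_card_fiberwise (fun O _ => mem_univ _)
  have h4 : (H.powerset).card * 2 ^ (2 * n + 1) ≤ 2 ^ (2 * n) * 2 ^ H.card := by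
    rw [htot, sum_mul]
    refine (sum_le_sum fun b _ => hcard b).trans ?_
    rw [sum_const, smul_eq_mul, card_univ, Fintype.card_prod]
    simp only [Fintype.card_finset, Fintype.card_fin]
    rw [← pow_add, two_mul]
  rw [card_powerset, pow_succ] at h4
  have h5 : 0 < 2 ^ H.card * 2 ^ (2 * n) := by positivity
  nlinarith

lemma hall_arcs {n t : ℕ} (D : Fin n → Fin n → Prop) (ht : t ≤ n) :
    (∃ M : Finset (Fin n × Fin n), (∀ x y, (x, y) ∈ M → D x y) ∧
      (∀ x y y', (x, y) ∈ M → (x, y') ∈ M → y = y') ∧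
      (∀ x x' y, (x, y) ∈ M → (x', y) ∈ M → x = x') ∧ t ≤ M.card) ∨
    ∃ X Y : Finset (Fin n), (∀ x ∈ X, ∀ y ∈ Y, ¬ D x y) ∧ Xᶜ.card + Yᶜ.card < t := by
  set T : Fin n → Finset (Fin n ⊕ Fin (n - t)) := fun x =>
    (univ.filter (fun y => D x y)).image Sum.inl ∪ univ.image Sum.inr with hT
  by_cases hh : ∀ s : Finset (Fin n), s.card ≤ (s.biUnion T).card
  · left
    obtain ⟨f, hf, hfT⟩ := (Finset.all_card_le_biUnion_card_iff_exists_injective T).1 hh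
    refine ⟨univ.filter (fun q => f q.1 = Sum.inl q.2), ?_, ?_, ?_, ?_⟩
    · intro x y h
      simp only [mem_filter, mem_univ, true_and] at h
      have := hfT x
      rw [h] at this
      simpa [hT] using this
    · intro x y y' h h'
      simp only [mem_filter, mem_univ, true_and] at h h'
      rw [h] at h'
      exact Sum.inl.inj h'
    · intro x x' y h h'
      simp only [mem_filter, mem_univ, true_and] at h h'
      exact hf (h.trans h'.symm)
    · have h1 : (univ.filter (fun x => ∃ y, f x = Sum.inl y)).card ≤
          (univ.filter (fun q : Fin n × Fin n => f q.1 = Sum.inl q.2)).card := by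
        refine card_le_card_of_forall_subsingleton (fun x q => q.1 = x) ?_ ?_
        · intro x hx
          simp only [mem_filter, mem_univ, true_and] at hx
          obtain ⟨y, hy⟩ := hx
          exact ⟨(x, y), by simp [hy], rfl⟩
        · rintro q _ x ⟨_, h⟩ x' ⟨_, h'⟩
          exact h.symm.trans h'
      have h2 : (univ.filter (fun x => ¬ ∃ y, f x = Sum.inl y)).card ≤ n - t := by
        have : (univ.filter (fun x => ¬ ∃ y, f x = Sum.inl y)).card ≤ (univ : Finset (Fin (n-t))).card := by
          refine card_le_card_of_forall_subsingleton (fun x z => f x = Sum.inr z) ?_ ?_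
          · intro x hx
            simp only [mem_filter, mem_univ, true_and] at hx
            cases hfx : f x with
            | inl y => exact absurd ⟨y, hfx⟩ hx
            | inr z => exact ⟨z, mem_univ _, rfl⟩
          · rintro z _ x ⟨_, h⟩ x' ⟨_, h'⟩
            exact hf (Eq.trans h h'.symm)
        simpa using this
      have h3 := card_filter_add_card_filter_not (s := (univ : Finset (Fin n))) (fun x => ∃ y, f x = Sum.inl y)
      simp only [card_univ, Fintype.card_fin] at h3
      omega
  · right
    push Not at hh
    obtain ⟨X, hX⟩ := hh
    set NX := univ.filter (fun y => ∃ x ∈ X, D x y) with hNX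
    refine ⟨X, NXᶜ, ?_, ?_⟩
    · intro x hx y hy hD
      rw [mem_compl] at hy
      exact hy (by simp only [hNX, mem_filter, mem_univ, true_and]; exact ⟨x, hx, hD⟩)
    · have h1 : NX.card + (n - t) ≤ (X.biUnion T).card := by
        have hne : X.Nonempty := by
          rw [nonempty_iff_ne_empty]; rintro rfl; simp at hX
        obtain ⟨x0, hx0⟩ := hne
        have hsub : NX.image Sum.inl ∪ (univ : Finset (Fin (n-t))).image Sum.inr ⊆ X.biUnion T := by
          intro z hz
          rw [mem_biUnion]
          rw [mem_union] at hz
          rcases hz with hz | hz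
          · obtain ⟨y, hy, rfl⟩ := mem_image.1 hz
            simp only [hNX, mem_filter, mem_univ, true_and] at hy
            obtain ⟨x, hx, hxy⟩ := hy
            exact ⟨x, hx, by simp [hT, hxy]⟩
          · exact ⟨x0, hx0, mem_union_right _ hz⟩
        refine le_trans ?_ (card_le_card hsub)
        rw [card_union_of_disjoint, card_image_of_injective _ Sum.inl_injective,
          card_image_of_injective _ Sum.inr_injective]
        · simp
        · rw [Finset.disjoint_left]
          intro z hz hz'
          obtain ⟨y, _, rfl⟩ := mem_image.1 hz
          simp at hz'
      have h2 := card_compl_add_card X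
      simp only [Fintype.card_fin] at h2
      rw [compl_compl]
      omega

/-- weight -/
def wt (b : Bool × Bool) : ℕ := (if b.1 then 0 else 1) + (if b.2 then 0 else 1)

lemma mono_arcs {n r t g : ℕ} (A : Finset (Sym2 (Fin n))) (hA : A ⊆ edg n)
    (c : Sym2 (Fin n) → Fin r) (ht0 : 1 ≤ t) (htn : t ≤ n)
    (hd : ∀ P Q : Finset (Fin n), Disjoint P Q → g ≤ P.card → g ≤ Q.card →
      2 * r * n < (eb A P Q).card)
    (hnum : (r + 1) * t + 4 * 4 ^ r * g ≤ 2 * n) :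
    ∃ i : Fin r, ∃ M : Finset (Fin n × Fin n), (∀ x y, (x, y) ∈ M → s(x, y) ∈ A ∧ c s(x, y) = i) ∧
      (∀ x y, (x, y) ∈ M → (y, x) ∉ M) ∧
      (∀ x y y', (x, y) ∈ M → (x, y') ∈ M → y = y') ∧
      (∀ x x' y, (x, y) ∈ M → (x', y) ∈ M → x = x') ∧ t ≤ M.card := by
  by_contra hcon
  push Not at hcon
  set Ai : Fin r → Finset (Sym2 (Fin n)) := fun i => A.filter (fun e => c e = i) with hAi
  have hXY : ∀ i : Fin r, ∃ X Y : Finset (Fin n), Xᶜ.card + Yᶜ.card < t ∧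
      ∀ P ⊆ X, ∀ Q ⊆ Y, Disjoint P Q → (eb (Ai i) P Q).card ≤ 2 * n := by
    intro i
    obtain ⟨D, hD1, hD2, hD3⟩ := orient (Ai i) ((filter_subset _ _).trans hA)
    rcases hall_arcs D htn with ⟨M, h1, h2, h3, h4⟩ | ⟨X, Y, h1, h2⟩
    · exfalso
      have := hcon i M (fun x y h => by simpa [hAi] using hD1 x y (h1 x y h))
        (fun x y h h' => hD2 _ _ (h1 _ _ h) (h1 _ _ h')) h2 h3
      omega
    · exact ⟨X, Y, h2, fun P hP Q hQ hPQ => hD3 P Q hPQ fun x hx y hy => h1 x (hP hx) y (hQ hy)⟩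
  choose X Y hXY1 hXY2 using hXY
  set tp : Fin n → Fin r → Bool × Bool := fun v i => (decide (v ∈ X i), decide (v ∈ Y i)) with htp
  set cls : (Fin r → Bool × Bool) → Finset (Fin n) := fun s => univ.filter (fun v => tp v = s) with hcls
  have hbool : ∀ a b : Bool × Bool, wt a + wt b < 2 → (a.1 = true ∧ b.2 = true) ∨ (b.1 = true ∧ a.2 = true) := by
    decide
  have hclsX : ∀ s i, (s i).1 = true → cls s ⊆ X i := by
    intro s i h v hv
    simp only [hcls, mem_filter, mem_univ, true_and] at hv
    rw [← hv] at h
    simpa [htp] using h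
  have hclsY : ∀ s i, (s i).2 = true → cls s ⊆ Y i := by
    intro s i h v hv
    simp only [hcls, mem_filter, mem_univ, true_and] at hv
    rw [← hv] at h
    simpa [htp] using h
  have hlarge : ∀ s s', 2 * g ≤ (cls s).card → 2 * g ≤ (cls s').card →
      ∃ i, 2 ≤ wt (s i) + wt (s' i) := by
    intro s s' hs hs'
    by_contra hno
    push Not at hno
    obtain ⟨P, Q, hP, hQ, hPQ, hPc, hQc⟩ : ∃ P Q, P ⊆ cls s ∧ Q ⊆ cls s' ∧ Disjoint P Q ∧
        g ≤ P.card ∧ g ≤ Q.card := by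
      by_cases hss : s = s'
      · subst hss
        obtain ⟨P, hP, hPc⟩ := exists_subset_card_eq (s := cls s) (n := g) (by omega)
        refine ⟨P, cls s \ P, hP, sdiff_subset, disjoint_sdiff, by omega, ?_⟩
        rw [card_sdiff_of_subset hP]; omega
      · refine ⟨cls s, cls s', le_rfl, le_rfl, ?_, by omega, by omega⟩
        rw [Finset.disjoint_left]
        intro v hv hv'
        simp only [hcls, mem_filter, mem_univ, true_and] at hv hv'
        exact hss (hv.symm.trans hv')
    have h1 := hd P Q hPQ hPc hQc
    have h2 : eb A P Q ⊆ univ.biUnion (fun i => eb (Ai i) P Q) := by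
      intro e he
      rw [mem_eb] at he
      rw [mem_biUnion]
      refine ⟨c e, mem_univ _, ?_⟩
      rw [mem_eb]
      exact ⟨by simp [hAi, he.1], he.2⟩
    have h3 : ∀ i, (eb (Ai i) P Q).card ≤ 2 * n := by
      intro i
      rcases hbool _ _ (hno i) with ⟨a1, a2⟩ | ⟨a1, a2⟩
      · exact hXY2 i P (hP.trans (hclsX s i a1)) Q (hQ.trans (hclsY s' i a2)) hPQ
      · rw [eb_comm]
        exact hXY2 i Q (hQ.trans (hclsX s' i a1)) P (hP.trans (hclsY s i a2)) hPQ.symm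
    have h4 := (card_le_card h2).trans card_biUnion_le
    have h5 : ∑ i : Fin r, (eb (Ai i) P Q).card ≤ r * (2 * n) := by
      refine (sum_le_sum fun i _ => h3 i).trans ?_
      simp
    have h6 : r * (2 * n) = 2 * r * n := by ring
    omega
  set Big : Finset (Fin n) := univ.filter (fun v => 2 * g ≤ (cls (tp v)).card) with hBig
  have hBc : n ≤ Big.card + 4 ^ r * (2 * g) := by
    have h1 := card_filter_add_card_filter_not (s := (univ : Finset (Fin n)))
      (fun v => 2 * g ≤ (cls (tp v)).card)
    simp only [card_univ, Fintype.card_fin] at h1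
    rw [← hBig] at h1
    have h2 : (univ.filter (fun v => ¬ 2 * g ≤ (cls (tp v)).card)).card ≤ 4 ^ r * (2 * g) := by
      rw [card_eq_sum_card_fiberwise (f := tp) (t := univ) (fun v _ => mem_univ _)]
      have : ∀ s ∈ (univ : Finset (Fin r → Bool × Bool)), ((univ.filter
          (fun v => ¬ 2 * g ≤ (cls (tp v)).card)).filter (fun v => tp v = s)).card ≤ 2 * g := by
        intro s _
        by_cases hs : 2 * g ≤ (cls s).card
        · have : ((univ.filter (fun v => ¬ 2 * g ≤ (cls (tp v)).card)).filter (fun v => tp v = s)) = ∅ := by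
            rw [filter_eq_empty_iff]
            intro v hv h
            simp only [mem_filter, mem_univ, true_and] at hv
            rw [h] at hv; exact hv hs
          rw [this]; simp
        · refine le_trans (card_le_card ?_) (Nat.le_of_lt (not_le.1 hs))
          intro v hv
          simp only [mem_filter, mem_univ, true_and, hcls] at hv ⊢
          exact hv.2
      refine (sum_le_sum this).trans ?_
      rw [sum_const, card_univ]
      simp
    omega
  have hsum : ∀ i, ∑ v : Fin n, wt (tp v i) = (X i)ᶜ.card + (Y i)ᶜ.card := by
    intro i
    simp only [wt, htp, sum_add_distrib]
    congr 1
    · rw [card_eq_sum_ones, sum_ite, sum_const_zero, zero_add]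
      refine sum_congr ?_ fun _ _ => rfl
      ext v; simp
    · rw [card_eq_sum_ones, sum_ite, sum_const_zero, zero_add]
      refine sum_congr ?_ fun _ _ => rfl
      ext v; simp
  have hsum' : ∀ i, ∑ v : Fin n, wt (tp v i) ≤ t - 1 := by
    intro i
    rw [hsum]; have := hXY1 i; omega
  have htot : ∑ v : Fin n, ∑ i, wt (tp v i) ≤ r * (t - 1) := by
    rw [sum_comm]
    refine (sum_le_sum fun i _ => hsum' i).trans ?_
    simp
  have hfin : ∀ f : Fin n → ℕ, (∀ v ∈ Big, 2 ≤ f v) → ∑ v, f v ≤ (r + 1) * (t - 1) → False := by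
    intro f hf1 hf2
    have h1 : Big.card * 2 ≤ ∑ v, f v := by
      calc Big.card * 2 = ∑ v ∈ Big, 2 := by simp
        _ ≤ ∑ v ∈ Big, f v := sum_le_sum hf1
        _ ≤ _ := sum_le_sum_of_subset (subset_univ _)
    have h2 : (r + 1) * (t - 1) + (r + 1) = (r + 1) * t := by
      obtain ⟨t', rfl⟩ : ∃ t', t = t' + 1 := ⟨t - 1, by omega⟩
      simp; ring
    have h3 : 4 ^ r * (2 * g) * 2 = 4 * 4 ^ r * g := by ring
    omega
  by_cases hcase : ∃ v ∈ Big, ∑ i, wt (tp v i) ≤ 1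
  · obtain ⟨v, hv, hv1⟩ := hcase
    have hvB : 2 * g ≤ (cls (tp v)).card := by simpa [hBig] using hv
    obtain ⟨i, hi⟩ := hlarge _ _ hvB hvB
    have hle : ∀ j, wt (tp v j) + (if j = i then 0 else 1) ≤ 1 := by
      intro j
      split_ifs with hji
      · have : wt (tp v j) ≤ ∑ i, wt (tp v i) := single_le_sum (f := fun i => wt (tp v i)) (fun _ _ => Nat.zero_le _) (mem_univ j)
        omega
      · have : wt (tp v j) + wt (tp v i) ≤ ∑ i, wt (tp v i) := by
          rw [← sum_pair (f := fun i => wt (tp v i)) hji]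
          exact sum_le_sum_of_subset (subset_univ _)
        omega
    refine hfin (fun u => wt (tp u i) + ∑ j, wt (tp u j)) ?_ ?_
    · intro u hu
      have huB : 2 * g ≤ (cls (tp u)).card := by simpa [hBig] using hu
      obtain ⟨j, hj⟩ := hlarge _ _ hvB huB
      have h1 : wt (tp u j) ≤ ∑ k, wt (tp u k) := single_le_sum (f := fun i => wt (tp u i)) (fun _ _ => Nat.zero_le _) (mem_univ j)
      have h2 := hle j
      by_cases hji : j = i
      · subst hji
        simp at h2
        show 2 ≤ wt (tp u j) + ∑ k, wt (tp u k)
        omega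
      · rw [if_neg hji] at h2
        show 2 ≤ wt (tp u i) + ∑ k, wt (tp u k)
        omega
    · rw [sum_add_distrib]
      have := hsum' i
      calc _ ≤ (t - 1) + r * (t - 1) := by omega
        _ = _ := by ring
  · push Not at hcase
    refine hfin (fun u => ∑ j, wt (tp u j)) (fun v hv => hcase v hv) (htot.trans ?_)
    exact Nat.mul_le_mul_right _ (by omega)

end mono

section det
open scoped Classical
open Finset

/-- neighbours -/
noncomputable def nb {n : ℕ} (A : Finset (Sym2 (Fin n))) (v : Fin n) : Finset (Fin n) :=
  univ.filter (fun u => s(v, u) ∈ A)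

lemma mem_nb {n : ℕ} {A : Finset (Sym2 (Fin n))} {v u : Fin n} : u ∈ nb A v ↔ s(v, u) ∈ A := by
  simp [nb]

/-- two small vertices close together -/
def closeSmall {n : ℕ} (D : ℕ) (A : Finset (Sym2 (Fin n))) : Prop :=
  ∃ x y, x ≠ y ∧ (nb A x).card < D ∧ (nb A y).card < D ∧
    (s(x, y) ∈ A ∨ (∃ u, u ≠ x ∧ u ≠ y ∧ s(x, u) ∈ A ∧ s(u, y) ∈ A) ∨
      ∃ u v w, [x, u, v, w, y].Nodup ∧ s(x, u) ∈ A ∧ s(u, v) ∈ A ∧ s(v, w) ∈ A ∧ s(w, y) ∈ A)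

/-- edges inside -/
noncomputable def ei {n : ℕ} (A : Finset (Sym2 (Fin n))) (W : Finset (Fin n)) : Finset (Sym2 (Fin n)) :=
  A.filter (fun e => e ∈ W.sym2)

lemma expander {n q bt : ℕ} {A : Finset (Sym2 (Fin n))} (hA : A ⊆ edg n) (R : Finset (Fin n))
    (h1 : ∀ v, 2 ≤ (nb A v).card) (h2 : ¬ closeSmall (8 * q + 3) A)
    (h3 : ∀ W : Finset (Fin n), W.Nonempty → W.card ≤ 4 * bt → (ei A W).card < q * W.card) :
    ∃ N : Fin n → Finset (Fin n), (∀ v, N v ⊆ nb A v) ∧ (∀ v, (N v).card ≤ 8 * q + 3) ∧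
      (∀ v, 8 * q + 3 ≤ (nb A v ∩ R).card → N v ⊆ R) ∧
      ∀ S : Finset (Fin n), S.card ≤ bt → 2 * S.card ≤ ((S.biUnion N) \ S).card := by
  set D := 8 * q + 3 with hD
  have hex : ∀ v, ∃ T : Finset (Fin n), T ⊆ nb A v ∧ T.card ≤ D ∧ (D ≤ (nb A v ∩ R).card → T ⊆ R) ∧
      ((nb A v).card < D → T.card = 2) ∧ (D ≤ (nb A v).card → T.card = D) := by
    intro v
    by_cases hs : (nb A v).card < D
    · obtain ⟨T, hT, hc⟩ := exists_subset_card_eq (h1 v)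
      refine ⟨T, hT, by omega, fun h => ?_, fun _ => hc, fun h => by omega⟩
      have := card_le_card (inter_subset_left (s₁ := nb A v) (s₂ := R))
      omega
    · by_cases hr : D ≤ (nb A v ∩ R).card
      · obtain ⟨T, hT, hc⟩ := exists_subset_card_eq hr
        exact ⟨T, hT.trans inter_subset_left, by omega, fun _ => hT.trans inter_subset_right,
          fun h => by omega, fun _ => hc⟩
      · obtain ⟨T, hT, hc⟩ := exists_subset_card_eq (not_lt.1 hs)
        exact ⟨T, hT, by omega, fun h => absurd h hr, fun h => by omega, fun _ => hc⟩
  choose N hN1 hN2 hN3 hN4 hN5 using hex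
  refine ⟨N, hN1, hN2, hN3, ?_⟩
  intro S hS
  have hNA : ∀ v u, u ∈ N v → s(v, u) ∈ A := fun v u h => mem_nb.1 (hN1 v h)
  have hNne : ∀ v u, u ∈ N v → v ≠ u := fun v u h => mem_edg.1 (hA (hNA v u h))
  set Sm : Finset (Fin n) := univ.filter (fun v => (nb A v).card < D) with hSm
  have hmSm : ∀ v, v ∈ Sm ↔ (nb A v).card < D := fun v => by simp [hSm]
  set X := Sm ∪ Sm.biUnion N with hX
  have close1 : ∀ x ∈ Sm, ∀ y ∈ Sm, s(x, y) ∉ A := by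
    intro x hx y hy h
    exact h2 ⟨x, y, mem_edg.1 (hA h), (hmSm x).1 hx, (hmSm y).1 hy, Or.inl h⟩
  have close2 : ∀ x ∈ Sm, ∀ y ∈ Sm, x ≠ y → ∀ u, s(x, u) ∈ A → s(y, u) ∉ A := by
    intro x hx y hy hne u h h'
    refine h2 ⟨x, y, hne, (hmSm x).1 hx, (hmSm y).1 hy, Or.inr (Or.inl ⟨u, ?_, ?_, h, ?_⟩)⟩
    · exact (mem_edg.1 (hA h)).symm
    · exact (mem_edg.1 (hA h')).symm
    · rw [Sym2.eq_swap]; exact h'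
  -- few neighbours in X
  have hfew : ∀ v, v ∉ Sm → (N v ∩ X).card ≤ 3 := by
    intro v hv
    have c1 : (N v ∩ Sm).card ≤ 1 := by
      rw [card_le_one]
      intro a ha b hb
      rw [mem_inter] at ha hb
      by_contra hne
      refine close2 a ha.2 b hb.2 hne v ?_ ?_
      · rw [Sym2.eq_swap]; exact hNA _ _ ha.1
      · rw [Sym2.eq_swap]; exact hNA _ _ hb.1
    have c2 : (N v ∩ Sm.biUnion N).card ≤ 2 := by
      by_cases hemp : ∃ u, u ∈ N v ∩ Sm.biUnion N
      · obtain ⟨u, hu⟩ := hemp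
        rw [mem_inter, mem_biUnion] at hu
        obtain ⟨huv, x, hx, hux⟩ := hu
        have hsub : N v ∩ Sm.biUnion N ⊆ N x := by
          intro w hw
          rw [mem_inter, mem_biUnion] at hw
          obtain ⟨hwv, y, hy, hwy⟩ := hw
          by_cases hxy : x = y
          · rw [hxy]; exact hwy
          · exfalso
            have e1 := hNA _ _ hux
            have e2 := hNA _ _ huv
            have e3 := hNA _ _ hwv
            have e4 := hNA _ _ hwy
            refine h2 ⟨x, y, hxy, (hmSm x).1 hx, (hmSm y).1 hy, Or.inr (Or.inr ⟨u, v, w, ?_, e1, ?_, e3, ?_⟩)⟩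
            · have n1 := hNne _ _ hux
              have n2 := hNne _ _ huv
              have n3 := hNne _ _ hwv
              have n4 := hNne _ _ hwy
              have n5 : u ≠ w := by
                rintro rfl
                exact close2 x hx y hy hxy u e1 e4
              have n6 : u ≠ y := by
                rintro rfl
                exact close1 x hx u hy e1
              have n7 : w ≠ x := by
                rintro rfl
                exact close1 y hy w hx e4
              have n8 : v ≠ x := by rintro rfl; exact hv hx
              have n9 : v ≠ y := by rintro rfl; exact hv hy
              simp only [List.nodup_cons, List.mem_cons, List.not_mem_nil, or_false, not_or, not_false_eq_true, List.nodup_nil, and_true]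
              exact ⟨⟨n1, n8.symm, n7.symm, hxy⟩, ⟨n2.symm, n5, n6⟩, ⟨n3, n9⟩, n4.symm⟩
            · rw [Sym2.eq_swap]; exact e2
            · rw [Sym2.eq_swap]; exact e4
        exact (card_le_card hsub).trans (hN4 x ((hmSm x).1 hx)).le
      · push Not at hemp
        rw [eq_empty_of_forall_notMem hemp]; simp
    rw [hX, inter_union_distrib_left]
    exact (card_union_le _ _).trans (by omega)
  set S1 := S.filter (fun v => v ∈ Sm) with hS1
  set S2 := S.filter (fun v => v ∉ Sm) with hS2
  have hSc : S1.card + S2.card = S.card := card_filter_add_card_filter_not _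
  have hc1 : (S1.biUnion N).card = 2 * S1.card := by
    rw [card_biUnion]
    · rw [sum_congr rfl (fun v hv => hN4 v ((hmSm v).1 (mem_filter.1 hv).2))]
      rw [sum_const, smul_eq_mul, mul_comm]
    · intro x hx y hy hne
      rw [Function.onFun, Finset.disjoint_left]
      intro u hu hu'
      exact close2 x (mem_filter.1 hx).2 y (mem_filter.1 hy).2 hne u (hNA _ _ hu) (hNA _ _ hu')
  set U := (S2.biUnion (fun v => N v \ X)) \ S2 with hU
  have hc2 : 3 * S2.card ≤ U.card := by
    by_contra hlt
    push Not at hlt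
    have hne : S2.Nonempty := by
      rw [← card_pos]; omega
    have hle : S2.card ≤ S.card := by omega
    have hW := h3 (S2 ∪ U) (hne.mono subset_union_left) ((card_union_le _ _).trans (by omega))
    have hWc : (S2 ∪ U).card ≤ 4 * S2.card := (card_union_le _ _).trans (by omega)
    have hpairs : S2.card * (8 * q) ≤ (S2.sigma (fun v => N v \ X)).card := by
      rw [card_sigma]
      calc S2.card * (8 * q) = ∑ v ∈ S2, 8 * q := by simp
        _ ≤ _ := by
          refine sum_le_sum fun v hv => ?_
          have hv' := (mem_filter.1 hv).2
          have a1 := hfew v hv'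
          have a2 := hN5 v (not_lt.1 (fun h => hv' ((hmSm v).2 h)))
          have a3 := card_sdiff_add_card_inter (N v) X
          omega
    have h2to1 : (S2.sigma (fun v => N v \ X)).card ≤ 2 * (ei A (S2 ∪ U)).card := by
      refine card_le_mul_card_image_of_maps_to (f := fun q : (_ : Fin n) × Fin n => s(q.1, q.2)) ?_ 2 ?_
      · rintro ⟨v, u⟩ hq
        simp only [mem_sigma, mem_sdiff] at hq
        rw [ei, mem_filter]
        refine ⟨hNA _ _ hq.2.1, ?_⟩
        rw [mk_mem_sym2_iff]
        refine ⟨mem_union_left _ hq.1, ?_⟩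
        by_cases hu : u ∈ S2
        · exact mem_union_left _ hu
        · refine mem_union_right _ ?_
          rw [hU, mem_sdiff, mem_biUnion]
          exact ⟨⟨v, hq.1, mem_sdiff.2 hq.2⟩, hu⟩
      · intro e _
        induction e with | _ x y
        refine (card_le_card (t := {⟨x, y⟩, ⟨y, x⟩}) ?_).trans card_le_two
        rintro ⟨a, b⟩ hq
        simp only [mem_filter, Sym2.eq_iff] at hq
        simp only [mem_insert, mem_singleton]
        rcases hq.2 with ⟨rfl, rfl⟩ | ⟨rfl, rfl⟩
        · exact Or.inl rfl
        · exact Or.inr rfl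
    have h8 : q * (S2 ∪ U).card ≤ q * (4 * S2.card) := Nat.mul_le_mul_left _ hWc
    have h9 : S2.card * (8 * q) = 2 * (q * (4 * S2.card)) := by ring
    omega
  have hc3 : 2 * S1.card ≤ ((S1.biUnion N) \ S2).card + S2.card := by
    have := card_le_card_sdiff_add_card (s := S1.biUnion N) (t := S2)
    omega
  have hsub : ((S1.biUnion N) \ S2) ∪ U ⊆ (S.biUnion N) \ S := by
    intro u hu
    rw [mem_union] at hu
    rcases hu with hu | hu
    · rw [mem_sdiff, mem_biUnion] at hu
      obtain ⟨⟨x, hx, hxu⟩, hu2⟩ := hu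
      rw [mem_sdiff, mem_biUnion]
      refine ⟨⟨x, (mem_filter.1 hx).1, hxu⟩, fun huS => ?_⟩
      by_cases hus : u ∈ Sm
      · exact close1 x (mem_filter.1 hx).2 u hus (hNA _ _ hxu)
      · exact hu2 (mem_filter.2 ⟨huS, hus⟩)
    · rw [hU, mem_sdiff, mem_biUnion] at hu
      obtain ⟨⟨x, hx, hxu⟩, hu2⟩ := hu
      rw [mem_sdiff] at hxu
      rw [mem_sdiff, mem_biUnion]
      refine ⟨⟨x, (mem_filter.1 hx).1, hxu.1⟩, fun huS => ?_⟩
      by_cases hus : u ∈ Sm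
      · exact hxu.2 (mem_union_left _ hus)
      · exact hu2 (mem_filter.2 ⟨huS, hus⟩)
  have hdis : Disjoint ((S1.biUnion N) \ S2) U := by
    rw [Finset.disjoint_left]
    intro u hu hu'
    rw [mem_sdiff, mem_biUnion] at hu
    rw [hU, mem_sdiff, mem_biUnion] at hu'
    obtain ⟨⟨x, hx, hxu⟩, _⟩ := hu
    obtain ⟨⟨y, hy, hyu⟩, _⟩ := hu'
    rw [mem_sdiff] at hyu
    exact hyu.2 (mem_union_right _ (mem_biUnion.2 ⟨x, (mem_filter.1 hx).2, hxu⟩))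
  have := card_le_card hsub
  rw [card_union_of_disjoint hdis] at this
  omega

lemma hitting {α : Type*} (A : Finset α) (F : Finset (Finset α)) (ρ : ℝ) (hρ1 : ρ ≤ 1)
    (hF : ∀ H ∈ F, H ⊆ A ∧ ρ * A.card ≤ H.card) (hA : A.Nonempty) (k : ℕ) :
    ∃ T ⊆ A, T.card ≤ k ∧
      ((F.filter (fun H => Disjoint H T)).card : ℝ) ≤ F.card * (1 - ρ) ^ k := by
  induction k with
  | zero => exact ⟨∅, empty_subset _, by simp, by simp⟩
  | succ k ih =>
    obtain ⟨T, hTA, hTk, hT⟩ := ih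
    set F' := F.filter (fun H => Disjoint H T) with hF'
    have hex : ∃ a ∈ A, ρ * F'.card ≤ ((F'.filter (fun H => a ∈ H)).card : ℝ) := by
      by_contra hno
      push Not at hno
      have h1 : ∑ a ∈ A, ((F'.filter (fun H => a ∈ H)).card : ℝ) < ∑ a ∈ A, ρ * F'.card :=
        sum_lt_sum_of_nonempty hA hno
      have h2 : ∑ a ∈ A, ((F'.filter (fun H => a ∈ H)).card : ℝ) = ∑ H ∈ F', (H.card : ℝ) := by
        have : ∑ a ∈ A, ((F'.filter (fun H => a ∈ H)).card : ℝ)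
            = ∑ a ∈ A, ∑ H ∈ F', (if a ∈ H then (1:ℝ) else 0) := by
          refine sum_congr rfl fun a _ => ?_
          rw [card_filter]; push_cast; rfl
        rw [this, sum_comm]
        refine sum_congr rfl fun H hH => ?_
        have hHA := (hF H (mem_filter.1 hH).1).1
        rw [← sum_filter, sum_const, nsmul_eq_mul, mul_one, filter_mem_eq_inter,
          inter_eq_right.2 hHA]
      have h3 : ∑ H ∈ F', (ρ * A.card : ℝ) ≤ ∑ H ∈ F', (H.card : ℝ) :=
        sum_le_sum fun H hH => (hF H (mem_filter.1 hH).1).2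
      simp only [sum_const, nsmul_eq_mul] at h1 h3
      rw [h2] at h1
      nlinarith
    obtain ⟨a, ha, hρ⟩ := hex
    refine ⟨insert a T, insert_subset ha hTA, (card_insert_le _ _).trans (by omega), ?_⟩
    have h4 : F.filter (fun H => Disjoint H (insert a T)) = F'.filter (fun H => ¬ a ∈ H) := by
      rw [hF', filter_filter]
      refine filter_congr fun H _ => ?_
      rw [disjoint_insert_right, and_comm]
    rw [h4]
    have h5 : ((F'.filter (fun H => a ∈ H)).card : ℝ) + (F'.filter (fun H => ¬ a ∈ H)).card = F'.card := by
      exact_mod_cast card_filter_add_card_filter_not _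
    calc ((F'.filter (fun H => ¬ a ∈ H)).card : ℝ) ≤ F'.card * (1 - ρ) := by linarith
      _ ≤ F.card * (1 - ρ) ^ k * (1 - ρ) := mul_le_mul_of_nonneg_right hT (by linarith)
      _ = _ := by ring

lemma hit_pairs {n g k : ℕ} {A : Finset (Sym2 (Fin n))} (ρ : ℝ) (hρ0 : 0 < ρ) (hρ1 : ρ ≤ 1)
    (hn : 1 ≤ n) (hA : A.Nonempty)
    (hd : ∀ P Q : Finset (Fin n), Disjoint P Q → g ≤ P.card → g ≤ Q.card →
      ρ * A.card ≤ (eb A P Q).card) (hk : 2 * n ≤ ρ * k) :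
    ∃ T ⊆ A, T.card ≤ k ∧ ∀ P Q : Finset (Fin n), Disjoint P Q → g ≤ P.card → g ≤ Q.card →
      ∃ x ∈ P, ∃ y ∈ Q, s(x, y) ∈ T := by
  set F : Finset (Finset (Sym2 (Fin n))) := ((univ : Finset (Finset (Fin n) × Finset (Fin n))).filter
    (fun q => Disjoint q.1 q.2 ∧ g ≤ q.1.card ∧ g ≤ q.2.card)).image (fun q => eb A q.1 q.2) with hF
  obtain ⟨T, hTA, hTk, hT⟩ := hitting A F ρ hρ1 (by
    intro H hH
    obtain ⟨q, hq, rfl⟩ := mem_image.1 hH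
    have hq' := (mem_filter.1 hq).2
    exact ⟨eb_sub, hd _ _ hq'.1 hq'.2.1 hq'.2.2⟩) hA k
  refine ⟨T, hTA, hTk, ?_⟩
  have hmF : ∀ P Q : Finset (Fin n), Disjoint P Q → g ≤ P.card → g ≤ Q.card → eb A P Q ∈ F :=
    fun P Q h1 h2 h3 => mem_image.2 ⟨(P, Q), by simp [h1, h2, h3], rfl⟩
  have hFc : (F.card : ℝ) ≤ 4 ^ n := by
    have h1 : F.card ≤ 2 ^ n * 2 ^ n := by
      refine card_image_le.trans ((card_filter_le _ _).trans ?_)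
      rw [card_univ, Fintype.card_prod]
      simp
    have : (2:ℝ) ^ n * 2 ^ n = 4 ^ n := by rw [← mul_pow]; norm_num
    rw [← this]; exact_mod_cast h1
  clear_value F
  have hlt : ((F.filter (fun H => Disjoint H T)).card : ℝ) < 1 := by
    have hT2 : ((F.filter (fun H => Disjoint H T)).card : ℝ) ≤ F.card * (1 - ρ) ^ k := by convert hT
    refine lt_of_le_of_lt hT2 ?_
    have h1 : (1 - ρ) ^ k ≤ Real.exp (-(2 * n)) := by
      calc (1 - ρ) ^ k ≤ (Real.exp (-ρ)) ^ k := by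
            refine pow_le_pow_left₀ (by linarith) ?_ k
            have := Real.add_one_le_exp (-ρ); linarith
        _ = Real.exp (-(ρ * k)) := by rw [← Real.exp_nat_mul]; congr 1; ring
        _ ≤ _ := Real.exp_le_exp.2 (by linarith)
    have h2 : (4:ℝ) ^ n < Real.exp (2 * n) := by
      have : Real.exp (2 * n) = (Real.exp 2) ^ n := by
        rw [← Real.exp_nat_mul]; congr 1; ring
      rw [this]
      refine pow_lt_pow_left₀ ?_ (by norm_num) (by omega)
      have e1 := Real.exp_one_gt_d9
      have : Real.exp 2 = Real.exp 1 * Real.exp 1 := by rw [← Real.exp_add]; norm_num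
      rw [this]; nlinarith
    calc (F.card : ℝ) * (1 - ρ) ^ k ≤ 4 ^ n * Real.exp (-(2 * n)) := by
          apply mul_le_mul hFc h1 (pow_nonneg (by linarith) _) (by positivity)
      _ < Real.exp (2 * n) * Real.exp (-(2 * n)) := mul_lt_mul_of_pos_right h2 (Real.exp_pos _)
      _ = 1 := by rw [← Real.exp_add]; simp
  have hz : F.filter (fun H => Disjoint H T) = ∅ := by
    rw [← card_eq_zero]
    have : (F.filter (fun H => Disjoint H T)).card < 1 := by exact_mod_cast hlt
    omega
  intro P Q hPQ hP hQ
  by_contra hno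
  push Not at hno
  have : eb A P Q ∈ F.filter (fun H => Disjoint H T) := by
    rw [mem_filter]
    refine ⟨hmF P Q hPQ hP hQ, ?_⟩
    rw [Finset.disjoint_left]
    intro e he heT
    obtain ⟨_, x, hx, y, hy, rfl⟩ := mem_eb.1 he
    exact hno x hx y hy heT
  rw [hz] at this
  simp at this

end det

section detthm
open scoped Classical
open Finset

/-- vertices with few neighbours in `R` -/
noncomputable def badR {n : ℕ} (D : ℕ) (R : Finset (Fin n)) (A : Finset (Sym2 (Fin n))) : Finset (Fin n) :=
  univ.filter (fun v => (nb A v ∩ R).card < D)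

lemma cp_ce {V : Type*} {l : List V} {x y : V} (h : (x, y) ∈ cp l) : s(x, y) ∈ ce l := by
  have h1 : s(x, y) ∈ pe l := mem_pe_iff.2 (Or.inl h)
  rcases List.eq_nil_or_concat l with rfl | ⟨L, b, rfl⟩
  · simp at h1
  · cases L with
    | nil => simp at h1
    | cons a L =>
      rw [List.concat_eq_append, List.cons_append] at h1 ⊢
      rw [ce_snoc]
      exact List.mem_append_left _ h1

lemma arcs_avoid {V : Type*} {M : Finset (V × V)} {Z : Finset V}
    (hf : ∀ x y y', (x, y) ∈ M → (x, y') ∈ M → y = y')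
    (hi : ∀ x x' y, (x, y) ∈ M → (x', y) ∈ M → x = x') :
    M.card ≤ (M.filter (fun q => q.1 ∉ Z ∧ q.2 ∉ Z)).card + 2 * Z.card := by
  have h1 : (M.filter (fun q => q.1 ∈ Z)).card ≤ Z.card := by
    refine card_le_card_of_injOn Prod.fst (fun q hq => (mem_filter.1 hq).2) ?_
    rintro ⟨x, y⟩ hq ⟨x', y'⟩ hq' h
    simp only at h
    subst h
    rw [hf x y y' (mem_filter.1 hq).1 (mem_filter.1 hq').1]
  have h2 : (M.filter (fun q => q.2 ∈ Z)).card ≤ Z.card := by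
    refine card_le_card_of_injOn Prod.snd (fun q hq => (mem_filter.1 hq).2) ?_
    rintro ⟨x, y⟩ hq ⟨x', y'⟩ hq' h
    simp only at h
    subst h
    rw [hi x x' y (mem_filter.1 hq).1 (mem_filter.1 hq').1]
  have h3 : M ⊆ (M.filter (fun q => q.1 ∉ Z ∧ q.2 ∉ Z)) ∪ ((M.filter (fun q => q.1 ∈ Z)) ∪
      (M.filter (fun q => q.2 ∈ Z))) := by
    intro q hq
    simp only [mem_union, mem_filter, hq, true_and]
    tauto
  have h4 := card_le_card h3
  have h5 := card_union_le (M.filter (fun q => q.1 ∉ Z ∧ q.2 ∉ Z)) ((M.filter (fun q => q.1 ∈ Z)) ∪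
      (M.filter (fun q => q.2 ∈ Z)))
  have h6 := card_union_le (M.filter (fun q => q.1 ∈ Z)) (M.filter (fun q => q.2 ∈ Z))
  omega

lemma arcs_all {V : Type*} [Fintype V] {M : Finset (V × V)} {A : Finset (Sym2 V)} (K : ℕ) (Z : Finset V)
    (hf : ∀ x y y', (x, y) ∈ M → (x, y') ∈ M → y = y')
    (hi : ∀ x x' y, (x, y) ∈ M → (x', y) ∈ M → x = x')
    (hirr : ∀ x y, (x, y) ∈ M → x ≠ y) (has : ∀ x y, (x, y) ∈ M → (y, x) ∉ M)
    (hA : ∀ x y, (x, y) ∈ M → s(x, y) ∈ A) :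
    ∃ l : List V, l.Nodup ∧ (∀ x, x ∈ l) ∧ ∃ a, a * K ≤ Fintype.card V ∧ ∃ Mz ⊆ M,
      (∀ x y, (x, y) ∈ Mz → (x, y) ∈ cp l ∧ x ∉ Z ∧ y ∉ Z) ∧
      M.card ≤ Mz.card + 2 * Z.card + a + ncyc K A := by
  obtain ⟨l, hl, hall, a, ha, hal⟩ := arcs_list (A := A) K hf hi hirr has hA
  refine ⟨l, hl, hall, a, ha, (M.filter (fun q => q ∈ cp l)).filter (fun q => q.1 ∉ Z ∧ q.2 ∉ Z),
    (filter_subset _ _).trans (filter_subset _ _), ?_, ?_⟩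
  · intro x y h
    have h' := mem_filter.1 h
    exact ⟨(mem_filter.1 h'.1).2, h'.2⟩
  · have := arcs_avoid (M := M.filter (fun q => q ∈ cp l)) (Z := Z)
      (fun x y y' h h' => hf x y y' (mem_filter.1 h).1 (mem_filter.1 h').1)
      (fun x x' y h h' => hi x x' y (mem_filter.1 h).1 (mem_filter.1 h').1)
    omega

/-- number of path edges outside `T` -/
noncomputable def miss {V : Type*} (l : List V) (T : Finset (Sym2 V)) : ℕ := ((pe l).toFinset \ T).card

lemma ham_opt2 {V : Type*} [Fintype V] {A Γ F : Finset (Sym2 V)} {Z R : Finset V} {bt gm g s0 M m b : ℕ}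
    (hRZ : R ⊆ Z) (hΓ : Γ ⊆ A) (hFA : F ⊆ A)
    (hFZ : ∀ e ∈ F, ∀ x ∈ Z, x ∉ e)
    (l0 : List V) (hl0 : l0.Nodup) (hall0 : ∀ x, x ∈ l0) (hF0 : ∀ e ∈ F, e ∈ ce l0)
    (h3 : 3 ≤ Fintype.card V)
    (hexp1 : ∀ S : Finset V, S.card ≤ bt → ∃ U ⊆ Z, 2 * S.card ≤ U.card ∧
      ∀ u ∈ U, u ∉ S ∧ ∃ v ∈ S, s(v, u) ∈ Γ)
    (hexp2 : ∀ S : Finset V, bt ≤ S.card → ∀ U ⊆ R, (∀ u ∈ U, u ∉ S ∧ ¬ ∃ v ∈ S, s(v, u) ∈ Γ) →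
      U.card ≤ gm)
    (hs0 : 3 * s0 + gm ≤ R.card)
    (hdense : ∀ X Y : Finset V, Disjoint X Y → g ≤ X.card → g ≤ Y.card →
      ∃ x ∈ X, ∃ y ∈ Y, s(x, y) ∈ A)
    (hg : 2 * g ≤ m + 1) (hM : Fintype.card V + Γ.card ≤ M) (hb : 2 * b ≤ s0 * s0)
    (hboost : ∀ l : List V, l.Nodup → (∀ x, x ∈ l) → ∀ T ⊆ A, T.card ≤ M →
      miss l T ≤ m → b ≤ (boost l T Z).card → ∃ e ∈ boost l T Z, e ∈ A) :
    ∃ l : List V, l.Nodup ∧ (∀ x, x ∈ l) ∧ (∀ e ∈ ce l, e ∈ A) ∧ ∀ e ∈ F, e ∈ ce l := by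
  refine ham_opt (bt := bt) hRZ hΓ hFA hFZ l0 hl0 hall0 hF0 h3 ?_ ?_ hs0 hdense hg hM hb hboost
  · intro S hS
    obtain ⟨U, hU, hc, hm⟩ := hexp1 S hS
    exact hc.trans (card_le_card (fun u hu => mem_filter.2 ⟨hU hu, hm u hu⟩))
  · intro S hS
    exact hexp2 S hS _ (filter_subset _ _) (fun u hu => (mem_filter.1 hu).2)

lemma det_thm {n r t g q bt k s0 M m b K : ℕ} {A : Finset (Sym2 (Fin n))} (hA : A ⊆ edg n)
    (c : Sym2 (Fin n) → Fin r) (R : Finset (Fin n)) (hn : 3 ≤ n)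
    (h1 : ∀ v, 2 ≤ (nb A v).card) (h2 : ¬ closeSmall (8 * q + 3) A)
    (h3 : ∀ W : Finset (Fin n), W.Nonempty → W.card ≤ 4 * bt → (ei A W).card < q * W.card)
    (ρ : ℝ) (hρ0 : 0 < ρ) (hρ1 : ρ ≤ 1)
    (hd : ∀ P Q : Finset (Fin n), Disjoint P Q → g ≤ P.card → g ≤ Q.card →
      2 * r * n < (eb A P Q).card ∧ ρ * A.card ≤ (eb A P Q).card) (hk : 2 * n ≤ ρ * k)
    (ht0 : 1 ≤ t) (htn : t ≤ n) (hnum : (r + 1) * t + 4 * 4 ^ r * g ≤ 2 * n)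
    (hgb : g ≤ bt) (hs0 : 3 * s0 + g ≤ R.card) (hg : 2 * g ≤ m + 1)
    (hM : n + (n * (8 * q + 3) + k) ≤ M) (hb : 2 * b ≤ s0 * s0)
    (hboost : ∀ Z : Finset (Fin n), ∀ l : List (Fin n), l.Nodup → (∀ x, x ∈ l) → ∀ T ⊆ A, T.card ≤ M →
      miss l T ≤ m → b ≤ (boost l T Z).card → ∃ e ∈ boost l T Z, e ∈ A) :
    ∃ (i : Fin r) (v : Fin n) (w : (SimpleGraph.fromEdgeSet (A : Set (Sym2 (Fin n)))).Walk v v),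
      w.IsHamiltonianCycle ∧ ∃ a, a * K ≤ n ∧
      t ≤ (w.edges.filter (fun e => c e = i)).length + a + ncyc K A
        + 2 * (R.card + (8 * q + 3) * (badR (8 * q + 3) R A).card) := by
  obtain ⟨i, Ma, hM1, hM2, hM3, hM4, hM5⟩ := mono_arcs A hA c ht0 htn
    (fun P Q a b c => (hd P Q a b c).1) hnum
  obtain ⟨N, hN1, hN2, hN3, hN4⟩ := expander hA R h1 h2 h3
  have hAne : A.Nonempty := by
    have := h1 ⟨0, by omega⟩
    obtain ⟨u, hu⟩ := card_pos.1 (show 0 < (nb A ⟨0, by omega⟩).card by omega)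
    exact ⟨_, mem_nb.1 hu⟩
  obtain ⟨T, hTA, hTk, hT⟩ := hit_pairs ρ hρ0 hρ1 (by omega) hAne
    (fun P Q a b c => (hd P Q a b c).2) hk
  set D := 8 * q + 3 with hD
  set Z := R ∪ (badR D R A).biUnion N with hZ
  have hNZ : ∀ v, N v ⊆ Z := by
    intro v
    by_cases hv : D ≤ (nb A v ∩ R).card
    · exact (hN3 v hv).trans subset_union_left
    · refine Subset.trans ?_ subset_union_right
      intro u hu
      rw [mem_biUnion]
      exact ⟨v, by rw [badR, mem_filter]; exact ⟨mem_univ _, by omega⟩, hu⟩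
  have hZc : Z.card ≤ R.card + D * (badR D R A).card := by
    refine (card_union_le _ _).trans (Nat.add_le_add_left ?_ _)
    refine card_biUnion_le.trans ?_
    refine (sum_le_sum (fun v _ => hN2 v)).trans ?_
    rw [sum_const, smul_eq_mul, mul_comm]
  set Γ := (univ.biUnion (fun v => (N v).image (fun u => s(v, u)))) ∪ T with hΓ
  have hΓA : Γ ⊆ A := by
    refine union_subset ?_ hTA
    intro e he
    obtain ⟨v, -, he⟩ := mem_biUnion.1 he
    obtain ⟨u, hu, rfl⟩ := mem_image.1 he
    exact mem_nb.1 (hN1 v hu)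
  have hΓc : Γ.card ≤ n * D + k := by
    refine (card_union_le _ _).trans (Nat.add_le_add ?_ hTk)
    refine card_biUnion_le.trans ?_
    refine (sum_le_sum (fun v _ => card_image_le.trans (hN2 v))).trans ?_
    rw [sum_const, smul_eq_mul, card_univ, Fintype.card_fin]
  have hNΓ : ∀ v u, u ∈ N v → s(v, u) ∈ Γ := fun v u h =>
    mem_union_left _ (mem_biUnion.2 ⟨v, mem_univ _, mem_image.2 ⟨u, h, rfl⟩⟩)
  obtain ⟨l, hl, hall, a, ha, Mz, hMzM, hMz, hMc⟩ := arcs_all (A := A) K Z hM3 hM4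
    (fun x y h => mem_edg.1 (hA (hM1 x y h).1)) hM2 (fun x y h => (hM1 x y h).1)
  rw [Fintype.card_fin] at ha
  have hMz1 : ∀ x y, (x, y) ∈ Mz → (x, y) ∈ Ma ∧ (x, y) ∈ cp l ∧ x ∉ Z ∧ y ∉ Z :=
    fun x y h => ⟨hMzM h, hMz x y h⟩
  set F := Mz.image (fun q => s(q.1, q.2)) with hF
  have hFc : F.card = Mz.card := by
    refine card_image_of_injOn ?_
    rintro ⟨x, y⟩ hq ⟨x', y'⟩ hq' h
    simp only [Sym2.eq_iff] at h
    rcases h with ⟨rfl, rfl⟩ | ⟨rfl, rfl⟩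
    · rfl
    · exact absurd (hMz1 _ _ hq').1 (hM2 _ _ (hMz1 _ _ hq).1)
  have hFm : ∀ e ∈ F, ∃ x y, (x, y) ∈ Mz ∧ e = s(x, y) := by
    intro e he
    obtain ⟨⟨x, y⟩, hq, rfl⟩ := mem_image.1 he
    exact ⟨x, y, hq, rfl⟩
  obtain ⟨l', hl', hall', hce', hF'⟩ := ham_opt2 (A := A) (Γ := Γ) (F := F) (Z := Z) (R := R)
    (bt := bt) (gm := g) (g := g) (s0 := s0) (M := M) (m := m) (b := b)
    subset_union_left hΓA
    (by
      intro e he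
      obtain ⟨x, y, hq, rfl⟩ := hFm e he
      exact (hM1 _ _ (hMz1 _ _ hq).1).1)
    (by
      intro e he z hz hze
      obtain ⟨x, y, hq, rfl⟩ := hFm e he
      have := hMz1 _ _ hq
      rcases Sym2.mem_iff.1 hze with rfl | rfl
      · exact this.2.2.1 hz
      · exact this.2.2.2 hz)
    l hl hall
    (by
      intro e he
      obtain ⟨x, y, hq, rfl⟩ := hFm e he
      exact cp_ce (hMz1 _ _ hq).2.1)
    (by rw [Fintype.card_fin]; exact hn)
    (by
      intro S hS
      refine ⟨_, ?_, hN4 S hS, ?_⟩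
      · intro u hu
        rw [mem_sdiff, mem_biUnion] at hu
        obtain ⟨⟨v, hv, hvu⟩, hu⟩ := hu
        exact hNZ v hvu
      · intro u hu
        rw [mem_sdiff, mem_biUnion] at hu
        obtain ⟨⟨v, hv, hvu⟩, hu⟩ := hu
        exact ⟨hu, v, hv, hNΓ v u hvu⟩)
    (by
      intro S hS U hUR hU
      by_contra hlt
      push Not at hlt
      obtain ⟨x, hx, y, hy, hxy⟩ := hT S U (by
        rw [Finset.disjoint_left]
        intro u hu hu'
        exact (hU u hu').1 hu) (by omega) hlt.le
      exact (hU y hy).2 ⟨x, hx, mem_union_right _ hxy⟩)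
    hs0
    (by
      intro X Y hXY hX hY
      have := (hd X Y hXY hX hY).1
      obtain ⟨e, he⟩ := card_pos.1 (show 0 < (eb A X Y).card by omega)
      obtain ⟨heA, x, hx, y, hy, rfl⟩ := mem_eb.1 he
      exact ⟨x, hx, y, hy, heA⟩)
    hg (by rw [Fintype.card_fin]; omega) hb (hboost Z)
  obtain ⟨v, w, hw, hwp⟩ := ham_conv hn hA hl' hall' hce'
  refine ⟨i, v, w, hw, a, ha, ?_⟩
  have hFl : F.card ≤ (w.edges.filter (fun e => c e = i)).length := by
    refine le_trans (card_le_card ?_) (List.toFinset_card_le _)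
    intro e he
    rw [List.mem_toFinset, List.mem_filter]
    refine ⟨hwp.mem_iff.2 (hF' e he), ?_⟩
    obtain ⟨x, y, hq, rfl⟩ := hFm e he
    simpa using (hM1 _ _ (hMz1 _ _ hq).1).2
  omega

end detthm

section whp
open scoped Classical
open Finset

lemma PR_union {n : ℕ} {p : ℝ} (h0 : 0 ≤ p) (h1 : p ≤ 1) {Q : Finset (Sym2 (Fin n)) → Prop}
    {ι : Type*} (s : Finset ι) (f : ι → Finset (Sym2 (Fin n)) → ℝ) (c : ι → ℝ)
    (hf : ∀ i ∈ s, ∀ A, 0 ≤ f i A)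
    (h : ∀ A, A ⊆ edg n → Q A → ∃ i ∈ s, 1 ≤ f i A) (hc : ∀ i ∈ s, EX n p (f i) ≤ c i) :
    PR n p Q ≤ ∑ i ∈ s, c i := by
  refine le_trans (PR_le h0 h1 (f := fun A => ∑ i ∈ s, f i A) ?_ ?_) ?_
  · intro A; exact sum_nonneg fun i hi => hf i hi A
  · intro A hA hQ
    obtain ⟨i, hi, h2⟩ := h A hA hQ
    exact h2.trans (single_le_sum (f := fun i => f i A) (fun j hj => hf j hj A) hi)
  · rw [EX_sum]; exact sum_le_sum hc

lemma PR_or {n : ℕ} {p : ℝ} (h0 : 0 ≤ p) (h1 : p ≤ 1) {Q Q1 Q2 : Finset (Sym2 (Fin n)) → Prop}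
    (h : ∀ A, A ⊆ edg n → Q A → Q1 A ∨ Q2 A) : PR n p Q ≤ PR n p Q1 + PR n p Q2 := by
  unfold PR
  rw [← EX_add]
  refine EX_mono h0 h1 fun A hA => ?_
  by_cases hq : Q A
  · rcases h A hA hq with h' | h' <;> simp only [hq, h', if_true] <;> split_ifs <;> norm_num
  · simp only [hq, if_false]; split_ifs <;> norm_num

/-- star at `v` towards `R` -/
noncomputable def stv {n : ℕ} (v : Fin n) (R : Finset (Fin n)) : Finset (Sym2 (Fin n)) :=
  (R.erase v).image (fun u => s(v, u))

lemma mem_stv {n : ℕ} {v : Fin n} {R : Finset (Fin n)} {e : Sym2 (Fin n)} :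
    e ∈ stv v R ↔ ∃ u, u ∈ R ∧ u ≠ v ∧ e = s(v, u) := by
  unfold stv
  simp only [mem_image, mem_erase]
  constructor
  · rintro ⟨u, ⟨h1, h2⟩, rfl⟩; exact ⟨u, h2, h1, rfl⟩
  · rintro ⟨u, h1, h2, rfl⟩; exact ⟨u, ⟨h2, h1⟩, rfl⟩

lemma stv_sub {n : ℕ} {v : Fin n} {R : Finset (Fin n)} : stv v R ⊆ edg n := by
  intro e he
  obtain ⟨u, _, h2, rfl⟩ := mem_stv.1 he
  exact mem_edg.2 h2.symm

lemma card_stv {n : ℕ} (v : Fin n) (R : Finset (Fin n)) : R.card - 1 ≤ (stv v R).card := by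
  unfold stv
  rw [card_image_of_injective _ (fun a b h => by
    rcases Sym2.eq_iff.1 h with ⟨_, h⟩ | ⟨h, h'⟩
    · exact h
    · exact h'.trans h)]
  exact pred_card_le_card_erase

lemma inter_stv {n : ℕ} {A : Finset (Sym2 (Fin n))} (v : Fin n) (R : Finset (Fin n)) :
    (A ∩ stv v R).card ≤ (nb A v ∩ R).card := by
  have : A ∩ stv v R ⊆ (nb A v ∩ R).image (fun u => s(v, u)) := by
    intro e he
    rw [mem_inter] at he
    obtain ⟨u, h1, h2, rfl⟩ := mem_stv.1 he.2
    exact mem_image.2 ⟨u, mem_inter.2 ⟨mem_nb.2 he.1, h1⟩, rfl⟩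
  exact (card_le_card this).trans card_image_le

/-- P1 -/
lemma bound1 {n : ℕ} {p : ℝ} (h0 : 0 ≤ p) (h1 : p ≤ 1) (hn : 2 ≤ n) :
    PR n p (fun A => ¬ ∀ v, 2 ≤ (nb A v).card) ≤
      n * Real.exp (-(p * (n - 1))) + n * n * p * Real.exp (-(p * (n - 2))) := by
  refine (PR_or h0 h1 (Q1 := fun A => ∃ v, (nb A v).card = 0)
    (Q2 := fun A => ∃ v, (nb A v).card = 1) ?_).trans (add_le_add ?_ ?_)
  · intro A hA h
    push Not at h
    obtain ⟨v, hv⟩ := h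
    have : (nb A v).card = 0 ∨ (nb A v).card = 1 := by omega
    rcases this with h | h
    · exact Or.inl ⟨v, h⟩
    · exact Or.inr ⟨v, h⟩
  · have := PR_union (n := n) h0 h1 (Q := fun A => ∃ v, (nb A v).card = 0) univ
      (fun v A => (0:ℝ) ^ (A ∩ stv v univ).card) (fun _ => Real.exp (-(p * (n - 1)))) ?_ ?_ ?_
    · simpa using this
    · intros; positivity
    · rintro A hA ⟨v, hv⟩
      refine ⟨v, mem_univ _, ?_⟩
      have := inter_stv (A := A) v univ
      rw [inter_univ] at this
      have h : (A ∩ stv v univ).card = 0 := by omega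
      rw [h]; simp
    · intro v _
      refine (EX_B_le h0 h1 stv_sub le_rfl).trans (Real.exp_le_exp.2 ?_)
      have h2 := card_stv v (univ : Finset (Fin n))
      rw [card_univ, Fintype.card_fin] at h2
      have h3 : ((n:ℝ) - 1) ≤ (stv v (univ : Finset (Fin n))).card := by
        have : n ≤ (stv v (univ : Finset (Fin n))).card + 1 := by omega
        have : (n:ℝ) ≤ (stv v (univ : Finset (Fin n))).card + 1 := by exact_mod_cast this
        linarith
      have := mul_le_mul_of_nonneg_left h3 h0
      linarith
  · have := PR_union (n := n) h0 h1 (Q := fun A => ∃ v, (nb A v).card = 1)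
      ((univ : Finset (Fin n × Fin n)).filter (fun q => q.1 ≠ q.2))
      (fun q A => (if ({s(q.1, q.2)} : Finset (Sym2 (Fin n))) ⊆ A then 1 else 0) *
        (0:ℝ) ^ (A ∩ (stv q.1 (univ.erase q.2))).card) (fun _ => p * Real.exp (-(p * (n - 2)))) ?_ ?_ ?_
    · refine this.trans ?_
      rw [sum_const, nsmul_eq_mul]
      have hc : (((univ : Finset (Fin n × Fin n)).filter (fun q => q.1 ≠ q.2)).card : ℝ) ≤ n * n := by
        have : ((univ : Finset (Fin n × Fin n)).filter (fun q => q.1 ≠ q.2)).card ≤ n * n := by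
          refine (card_filter_le _ _).trans ?_
          simp
        exact_mod_cast this
      have h5 : 0 ≤ p * Real.exp (-(p * (n - 2))) := by positivity
      calc _ ≤ (n * n : ℝ) * (p * Real.exp (-(p * (n - 2)))) := mul_le_mul_of_nonneg_right hc h5
        _ = _ := by ring
    · intros; positivity
    · rintro A hA ⟨v, hv⟩
      obtain ⟨u, hu⟩ := card_eq_one.1 hv
      have huA : s(v, u) ∈ A := mem_nb.1 (by rw [hu]; exact mem_singleton_self _)
      refine ⟨(v, u), by simpa using mem_edg.1 (hA huA), ?_⟩
      have := inter_stv (A := A) v (univ.erase u)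
      rw [hu, inter_erase] at this
      have h : (A ∩ stv v (univ.erase u)).card = 0 := by simpa using this
      simp only [h, singleton_subset_iff, huA, if_true]; norm_num
    · rintro ⟨v, u⟩ hvu
      have hvu : v ≠ u := by simpa using hvu
      have hdis : Disjoint ({s(v, u)} : Finset (Sym2 (Fin n))) (stv v (univ.erase u)) := by
        rw [disjoint_singleton_left]
        intro h
        obtain ⟨w, hw, _, h⟩ := mem_stv.1 h
        have : u = w := by
          rcases Sym2.eq_iff.1 h with ⟨_, h⟩ | ⟨h, h'⟩
          · exact h
          · exact h'.trans h
        exact (mem_erase.1 hw).1 this.symm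
      refine (EX_FB_le h0 h1 (singleton_subset_iff.2 (mem_edg.2 hvu)) stv_sub hdis le_rfl).trans ?_
      rw [card_singleton, pow_one]
      refine mul_le_mul_of_nonneg_left (Real.exp_le_exp.2 ?_) h0
      have h2 := card_stv v ((univ : Finset (Fin n)).erase u)
      rw [card_erase_of_mem (mem_univ _), card_univ, Fintype.card_fin] at h2
      have h3 : ((n:ℝ) - 2) ≤ (stv v ((univ : Finset (Fin n)).erase u)).card := by
        have : n ≤ (stv v ((univ : Finset (Fin n)).erase u)).card + 2 := by omega
        have : (n:ℝ) ≤ (stv v ((univ : Finset (Fin n)).erase u)).card + 2 := by exact_mod_cast this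
        linarith
      have := mul_le_mul_of_nonneg_left h3 h0
      linarith

lemma pe_sub {n : ℕ} {l : List (Fin n)} (hl : l.Nodup) : (pe l).toFinset ⊆ edg n := by
  intro e he
  rw [List.mem_toFinset] at he
  induction e with | _ x y
  rw [mem_edg]
  rintro rfl
  have h : (x, x) ∈ cp l := by
    rcases mem_pe_iff.1 he with h | h <;> exact h
  obtain ⟨P, Q, rfl⟩ := mem_cp_iff.1 h
  simp [List.nodup_append] at hl

lemma bound2a {n k D : ℕ} {p : ℝ} (h0 : 0 ≤ p) (h1 : p ≤ 1) (hk : k ≤ 4) {x y : Fin n} (hxy : x ≠ y)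
    {F : Finset (Sym2 (Fin n))} (hF : F ⊆ edg n) (hFk : F.card = k) :
    EX n p (fun A => if F ⊆ A ∧ (nb A x).card < D ∧ (nb A y).card < D then 1 else 0) ≤
      p ^ k * (8 ^ (2 * D) * Real.exp (-(7 / 8 * p * (2 * n - 7)))) := by
  set B := (stv x univ ∪ stv y univ) \ F with hB
  have hBe : B ⊆ edg n := sdiff_subset.trans (union_subset stv_sub stv_sub)
  have hdis : Disjoint F B := disjoint_sdiff
  have hc : 2 * n ≤ B.card + 7 := by
    have a1 := card_stv x (univ : Finset (Fin n))
    have a2 := card_stv y (univ : Finset (Fin n))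
    rw [card_univ, Fintype.card_fin] at a1 a2
    have a3 := card_union_add_card_inter (stv x univ) (stv y univ)
    have a4 : (stv x univ ∩ stv y univ).card ≤ 1 := by
      refine (card_le_card (t := {s(x, y)}) ?_).trans (card_singleton _).le
      intro e he
      rw [mem_inter] at he
      obtain ⟨u, -, hu, rfl⟩ := mem_stv.1 he.1
      obtain ⟨w, -, hw, h⟩ := mem_stv.1 he.2
      rw [mem_singleton]
      rcases Sym2.eq_iff.1 h with ⟨h, _⟩ | ⟨h, h'⟩
      · exact absurd h hxy
      · rw [h']
    have a5 := card_le_card_sdiff_add_card (s := stv x univ ∪ stv y univ) (t := F)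
    rw [← hB] at a5
    omega
  have hc' : 2 * (n:ℝ) - 7 ≤ B.card := by
    have : (2 * n : ℝ) ≤ B.card + 7 := by exact_mod_cast hc
    linarith
  have e1 : EX n p (fun A => if F ⊆ A ∧ (nb A x).card < D ∧ (nb A y).card < D then 1 else 0) ≤
      EX n p (fun A => 8 ^ (2 * D) * ((if F ⊆ A then 1 else 0) * (1 / 8 : ℝ) ^ (A ∩ B).card)) := by
    refine EX_mono h0 h1 fun A hA => ?_
    split_ifs with h2 h3 h3
    · have b1 := inter_stv (A := A) x univ
      have b2 := inter_stv (A := A) y univ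
      rw [inter_univ] at b1 b2
      have b3 : A ∩ B ⊆ (A ∩ stv x univ) ∪ (A ∩ stv y univ) := by
        intro e he
        rw [mem_inter, hB, mem_sdiff, mem_union] at he
        rw [mem_union, mem_inter, mem_inter]
        tauto
      have b4 := (card_le_card b3).trans (card_union_le _ _)
      have b5 : (A ∩ B).card ≤ 2 * D := by omega
      rw [one_mul, one_div, inv_pow, ← div_eq_mul_inv, le_div_iff₀ (by positivity), one_mul]
      exact pow_le_pow_right₀ (by norm_num) b5
    · exact absurd h2.1 h3
    · positivity
    · positivity
  refine e1.trans ?_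
  rw [EX_mul]
  have e2 := EX_FB_le h0 h1 hF hBe hdis (z := 1 / 8) (by norm_num)
  rw [hFk] at e2
  have e3 : Real.exp (-(1 - 1 / 8) * p * B.card) ≤ Real.exp (-(7 / 8 * p * (2 * n - 7))) := by
    refine Real.exp_le_exp.2 ?_
    have := mul_le_mul_of_nonneg_left hc' h0
    linarith
  calc _ ≤ (8:ℝ) ^ (2 * D) * (p ^ k * Real.exp (-(7 / 8 * p * (2 * n - 7)))) := by
        refine mul_le_mul_of_nonneg_left (e2.trans ?_) (by positivity)
        exact mul_le_mul_of_nonneg_left e3 (by positivity)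
    _ = _ := by ring

/-- P2 -/
lemma bound2b {n D : ℕ} (k : ℕ) {p : ℝ} (h0 : 0 ≤ p) (h1 : p ≤ 1) (hk : k + 1 ≤ 4) :
    PR n p (fun A => ∃ x y, ∃ t : List (Fin n), t.length = k ∧ (x :: (t ++ [y])).Nodup ∧
      (∀ e ∈ pe (x :: (t ++ [y])), e ∈ A) ∧ (nb A x).card < D ∧ (nb A y).card < D) ≤
      n ^ (k + 2) * (p ^ (k + 1) * (8 ^ (2 * D) * Real.exp (-(7 / 8 * p * (2 * n - 7))))) := by
  have := PR_union (n := n) h0 h1 (Q := (fun A => ∃ x y, ∃ t : List (Fin n), t.length = k ∧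
      (x :: (t ++ [y])).Nodup ∧
      (∀ e ∈ pe (x :: (t ++ [y])), e ∈ A) ∧ (nb A x).card < D ∧ (nb A y).card < D))
    ((univ : Finset (Fin n × Fin n × List.Vector (Fin n) k)).filter
      (fun q => (q.1 :: (q.2.2.toList ++ [q.2.1])).Nodup))
    (fun q A => if (pe (q.1 :: (q.2.2.toList ++ [q.2.1]))).toFinset ⊆ A ∧ (nb A q.1).card < D ∧
      (nb A q.2.1).card < D then 1 else 0)
    (fun _ => p ^ (k + 1) * (8 ^ (2 * D) * Real.exp (-(7 / 8 * p * (2 * n - 7))))) ?_ ?_ ?_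
  · refine this.trans ?_
    rw [sum_const, nsmul_eq_mul]
    refine mul_le_mul_of_nonneg_right ?_ (by positivity)
    have h2 : ((univ : Finset (Fin n × Fin n × List.Vector (Fin n) k)).filter
      (fun q => (q.1 :: (q.2.2.toList ++ [q.2.1])).Nodup)).card ≤ n ^ (k + 2) := by
      refine (card_filter_le _ _).trans ?_
      rw [card_univ, Fintype.card_prod, Fintype.card_prod, card_vector, Fintype.card_fin]
      exact le_of_eq (by ring)
    exact_mod_cast h2
  · intros; positivity
  · rintro A hA ⟨x, y, t, ht, h3, h4, h5, h6⟩
    refine ⟨(x, y, ⟨t, ht⟩), ?_, ?_⟩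
    · rw [mem_filter]; exact ⟨mem_univ _, h3⟩
    · rw [if_pos]
      refine ⟨?_, h5, h6⟩
      intro e he
      exact h4 e (List.mem_toFinset.1 he)
  · rintro ⟨x, y, t⟩ hq
    have hq : (x :: (t.toList ++ [y])).Nodup := (mem_filter.1 hq).2
    have hxy : x ≠ y := by
      rintro rfl
      simp at hq
    refine bound2a h0 h1 hk hxy (pe_sub hq) ?_
    rw [List.toFinset_card_of_nodup (pe_nodup hq), length_pe]
    simp

lemma bound2 {n D : ℕ} {p : ℝ} (h0 : 0 ≤ p) (h1 : p ≤ 1) :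
    PR n p (fun A => closeSmall D A) ≤
      (n ^ 2 * p ^ 1 + n ^ 3 * p ^ 2 + n ^ 5 * p ^ 4) *
        (8 ^ (2 * D) * Real.exp (-(7 / 8 * p * (2 * n - 7)))) := by
  set Q : ℕ → Finset (Sym2 (Fin n)) → Prop := fun k A => ∃ x y, ∃ t : List (Fin n), t.length = k ∧ (x :: (t ++ [y])).Nodup ∧
      (∀ e ∈ pe (x :: (t ++ [y])), e ∈ A) ∧ (nb A x).card < D ∧ (nb A y).card < D with hQ
  have h2 := PR_or (n := n) h0 h1 (Q := fun A => closeSmall D A) (Q1 := Q 0)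
    (Q2 := fun A => Q 1 A ∨ Q 3 A) (by
      rintro A hA ⟨x, y, hxy, hx, hy, h | ⟨u, hux, huy, h, h'⟩ | ⟨u, v, w, hnd, a1, a2, a3, a4⟩⟩
      · exact Or.inl ⟨x, y, [], rfl, by simpa using hxy, by simpa using h, hx, hy⟩
      · refine Or.inr (Or.inl ⟨x, y, [u], rfl, ?_, ?_, hx, hy⟩)
        · simp [hux.symm, hxy, huy]
        · simp [h, h']
      · refine Or.inr (Or.inr ⟨x, y, [u, v, w], rfl, ?_, ?_, hx, hy⟩)
        · simpa using hnd
        · simp [a1, a2, a3, a4])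
  have h3 := PR_or (n := n) h0 h1 (Q := fun A => Q 1 A ∨ Q 3 A) (Q1 := Q 1) (Q2 := Q 3)
    (fun A _ h => h)
  have b0 : PR n p (Q 0) ≤ _ := bound2b (D := D) 0 h0 h1 (by norm_num)
  have b1 : PR n p (Q 1) ≤ _ := bound2b (D := D) 1 h0 h1 (by norm_num)
  have b3 : PR n p (Q 3) ≤ _ := bound2b (D := D) 3 h0 h1 (by norm_num)
  norm_num at b0 b1 b3
  calc _ ≤ _ := h2.trans (add_le_add_right h3 _)
    _ ≤ _ := add_le_add b0 (add_le_add b1 b3)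
    _ = _ := by norm_num; ring

end whp

section whp2
open scoped Classical
open Finset

/-- P3 -/
lemma bound3 {n q w0 : ℕ} {p zz c1 : ℝ} (h0 : 0 ≤ p) (h1 : p ≤ 1) (hz : 1 ≤ zz) (hw : p * zz * w0 ≤ c1) :
    PR n p (fun A => ¬ ∀ W : Finset (Fin n), W.Nonempty → W.card ≤ w0 → (ei A W).card < q * W.card) ≤
      (1 + Real.exp c1 / zz ^ q) ^ n - 1 := by
  have hz0 : 0 < zz := by linarith
  set x := Real.exp c1 / zz ^ q with hx
  have hx0 : 0 ≤ x := by positivity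
  have key := PR_union (n := n) h0 h1 (Q := (fun A => ¬ ∀ W : Finset (Fin n), W.Nonempty →
      W.card ≤ w0 → (ei A W).card < q * W.card))
    ((univ : Finset (Finset (Fin n))).filter (fun W => W.Nonempty ∧ W.card ≤ w0))
    (fun W A => (1 / zz ^ (q * W.card)) * zz ^ (A ∩ ((edg n).filter (fun e => e ∈ W.sym2))).card)
    (fun W => x ^ W.card) ?_ ?_ ?_
  · refine key.trans ?_
    have h2 : ∑ W : Finset (Fin n), x ^ W.card = (1 + x) ^ n := by
      have := Finset.sum_pow_mul_eq_add_pow x 1 (univ : Finset (Fin n))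
      simp only [one_pow, mul_one, card_univ, Fintype.card_fin, powerset_univ] at this
      rw [this, add_comm]
    rw [← h2, ← add_sum_erase univ _ (mem_univ (∅ : Finset (Fin n)))]
    simp only [card_empty, pow_zero, add_sub_cancel_left]
    refine sum_le_sum_of_subset_of_nonneg ?_ (fun _ _ _ => by positivity)
    intro W hW
    rw [mem_erase]
    exact ⟨(mem_filter.1 hW).2.1.ne_empty, mem_univ _⟩
  · intros; positivity
  · intro A hA h
    push Not at h
    obtain ⟨W, hW1, hW2, hW3⟩ := h
    refine ⟨W, mem_filter.2 ⟨mem_univ _, hW1, hW2⟩, ?_⟩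
    have : A ∩ ((edg n).filter (fun e => e ∈ W.sym2)) = ei A W := by
      ext e
      rw [mem_inter, mem_filter, ei, mem_filter]
      constructor
      · rintro ⟨a, b, c⟩; exact ⟨a, c⟩
      · rintro ⟨a, b⟩; exact ⟨a, hA a, b⟩
    rw [this, one_div, mul_comm, ← div_eq_mul_inv, le_div_iff₀ (by positivity), one_mul]
    exact pow_le_pow_right₀ hz hW3
  · intro W hW
    have hW2 := (mem_filter.1 hW).2
    rw [EX_mul]
    set B := (edg n).filter (fun e => e ∈ W.sym2) with hB
    have hBc : B.card ≤ W.card * W.card := by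
      have h3 : B.card ≤ W.sym2.card := card_le_card (fun e he => (mem_filter.1 he).2)
      rw [card_sym2, Nat.choose_two_right] at h3
      have h4 : 1 ≤ W.card := card_pos.2 hW2.1
      refine h3.trans (Nat.div_le_of_le_mul ?_)
      simp only [Nat.add_sub_cancel]
      nlinarith
    have h5 := EX_B_le h0 h1 (B := B) (filter_subset _ _) hz0.le
    have h6 : -(1 - zz) * p * B.card ≤ c1 * W.card := by
      have a1 : (B.card : ℝ) ≤ W.card * W.card := by exact_mod_cast hBc
      have a2 : (W.card : ℝ) ≤ w0 := by exact_mod_cast hW2.2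
      calc -(1 - zz) * p * B.card ≤ (p * zz) * B.card := by
            have : 0 ≤ p * (B.card : ℝ) := by positivity
            nlinarith
        _ ≤ (p * zz) * (w0 * W.card) := by
            refine mul_le_mul_of_nonneg_left (a1.trans ?_) (by positivity)
            exact mul_le_mul_of_nonneg_right a2 (by positivity)
        _ = (p * zz * w0) * W.card := by ring
        _ ≤ _ := mul_le_mul_of_nonneg_right hw (by positivity)
    calc _ ≤ 1 / zz ^ (q * W.card) * Real.exp (c1 * W.card) := by
          refine mul_le_mul_of_nonneg_left (h5.trans (Real.exp_le_exp.2 h6)) (by positivity)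
      _ = _ := by
          rw [hx, div_pow, ← pow_mul, ← Real.exp_nat_mul]
          rw [mul_comm (W.card : ℝ) c1]; ring

/-- P4 -/
lemma bound4 {n D : ℕ} {p c : ℝ} (h0 : 0 ≤ p) (h1 : p ≤ 1) (hc : 0 < c) (R : Finset (Fin n)) :
    PR n p (fun A => ¬ ((D * (badR D R A).card : ℕ) : ℝ) ≤ c) ≤
      D / c * (n * (2 ^ D * Real.exp (-(p * (R.card - 1) / 2)))) := by
  have key := PR_le (n := n) h0 h1 (Q := (fun A => ¬ ((D * (badR D R A).card : ℕ) : ℝ) ≤ c))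
    (f := fun A => D / c * ∑ v : Fin n, 2 ^ D * (1 / 2 : ℝ) ^ (A ∩ stv v R).card) ?_ ?_
  · refine key.trans ?_
    rw [EX_mul, EX_sum]
    refine mul_le_mul_of_nonneg_left ?_ (by positivity)
    have : ∀ v ∈ (univ : Finset (Fin n)), EX n p (fun A => 2 ^ D * (1 / 2 : ℝ) ^ (A ∩ stv v R).card) ≤
        2 ^ D * Real.exp (-(p * (R.card - 1) / 2)) := by
      intro v _
      rw [EX_mul]
      refine mul_le_mul_of_nonneg_left ?_ (by positivity)
      refine (EX_B_le h0 h1 stv_sub (by norm_num)).trans (Real.exp_le_exp.2 ?_)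
      have h2 := card_stv v R
      have h3 : ((R.card:ℝ) - 1) ≤ (stv v R).card := by
        have : R.card ≤ (stv v R).card + 1 := by omega
        have : (R.card:ℝ) ≤ (stv v R).card + 1 := by exact_mod_cast this
        linarith
      have := mul_le_mul_of_nonneg_left h3 h0
      linarith
    refine (sum_le_sum this).trans ?_
    simp
  · intro A; positivity
  · intro A hA h
    push Not at h
    have h2 : ((badR D R A).card : ℝ) ≤ ∑ v : Fin n, 2 ^ D * (1 / 2 : ℝ) ^ (A ∩ stv v R).card := by
      rw [badR, card_filter]
      push_cast
      refine sum_le_sum fun v _ => ?_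
      split_ifs with hv
      · have := inter_stv (A := A) v R
        rw [one_div, inv_pow, ← div_eq_mul_inv, le_div_iff₀ (by positivity), one_mul]
        exact pow_le_pow_right₀ (by norm_num) (by omega)
      · positivity
    push_cast at h
    rw [div_mul_eq_mul_div, le_div_iff₀ hc, one_mul]
    exact h.le.trans (mul_le_mul_of_nonneg_left h2 (by positivity))

/-- P5 -/
lemma bound5 {n g : ℕ} {p c : ℝ} (h0 : 0 ≤ p) (h1 : p ≤ 1) :
    PR n p (fun A => ¬ ∀ P Q : Finset (Fin n), Disjoint P Q → g ≤ P.card → g ≤ Q.card →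
      c ≤ (eb A P Q).card) ≤ 4 ^ n * (Real.exp (Real.log 2 * c) * Real.exp (-(p * (g * g) / 2))) := by
  have key := PR_union (n := n) h0 h1 (Q := (fun A => ¬ ∀ P Q : Finset (Fin n), Disjoint P Q →
      g ≤ P.card → g ≤ Q.card → c ≤ (eb A P Q).card))
    ((univ : Finset (Finset (Fin n) × Finset (Fin n))).filter
      (fun q => Disjoint q.1 q.2 ∧ g ≤ q.1.card ∧ g ≤ q.2.card))
    (fun q A => Real.exp (Real.log 2 * c) * (1 / 2 : ℝ) ^ (A ∩ eb (edg n) q.1 q.2).card)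
    (fun _ => Real.exp (Real.log 2 * c) * Real.exp (-(p * (g * g) / 2))) ?_ ?_ ?_
  · refine key.trans ?_
    rw [sum_const, nsmul_eq_mul]
    refine mul_le_mul_of_nonneg_right ?_ (by positivity)
    have h1 : ((univ : Finset (Finset (Fin n) × Finset (Fin n))).filter
      (fun q => Disjoint q.1 q.2 ∧ g ≤ q.1.card ∧ g ≤ q.2.card)).card ≤ 2 ^ n * 2 ^ n := by
      refine (card_filter_le _ _).trans ?_
      rw [card_univ, Fintype.card_prod]
      simp
    have : (2:ℝ) ^ n * 2 ^ n = 4 ^ n := by rw [← mul_pow]; norm_num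
    rw [← this]; exact_mod_cast h1
  · intros; positivity
  · intro A hA h
    push Not at h
    obtain ⟨P, Q, hPQ, hP, hQ, h⟩ := h
    refine ⟨(P, Q), mem_filter.2 ⟨mem_univ _, hPQ, hP, hQ⟩, ?_⟩
    have : A ∩ eb (edg n) P Q = eb A P Q := by
      ext e
      rw [mem_inter, mem_eb, mem_eb]
      constructor
      · rintro ⟨a, b, c⟩; exact ⟨a, c⟩
      · rintro ⟨a, b⟩; exact ⟨a, hA a, b⟩
    simp only [this]
    have e1 : (1 / 2 : ℝ) ^ (eb A P Q).card = Real.exp (-(Real.log 2 * (eb A P Q).card)) := by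
      rw [Real.exp_neg, mul_comm, Real.exp_nat_mul, Real.exp_log (by norm_num), one_div, inv_pow]
    rw [e1, ← Real.exp_add]
    refine Real.one_le_exp ?_
    have := mul_le_mul_of_nonneg_left h.le (Real.log_nonneg (by norm_num : (1:ℝ) ≤ 2))
    linarith
  · rintro ⟨P, Q⟩ hq
    have hq := (mem_filter.1 hq).2
    simp only at hq ⊢
    rw [EX_mul]
    refine mul_le_mul_of_nonneg_left ?_ (by positivity)
    refine (EX_B_le h0 h1 eb_sub (by norm_num)).trans (Real.exp_le_exp.2 ?_)
    have h3 : g * g ≤ (eb (edg n) P Q).card := by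
      refine (Nat.mul_le_mul hq.2.1 hq.2.2).trans ?_
      rw [← card_product]
      refine card_le_card_of_injOn (fun q => s(q.1, q.2)) ?_ ?_
      · rintro ⟨x, y⟩ hxy
        have hxy := mem_product.1 hxy
        refine mem_eb.2 ⟨mem_edg.2 ?_, x, hxy.1, y, hxy.2, rfl⟩
        intro h
        have h : x = y := h
        subst h
        exact (Finset.disjoint_left.1 hq.1 hxy.1) hxy.2
      · rintro ⟨x, y⟩ hxy ⟨x', y'⟩ hxy' h
        have hxy := mem_product.1 hxy
        have hxy' := mem_product.1 hxy'
        rcases Sym2.eq_iff.1 h with ⟨h, h'⟩ | ⟨h, h'⟩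
        · exact Prod.ext h h'
        · simp only at h h'
          rw [h] at hxy
          exact absurd hxy'.2 (Finset.disjoint_left.1 hq.1 hxy.1)
    have h4 : (g * g : ℝ) ≤ (eb (edg n) P Q).card := by exact_mod_cast h3
    have := mul_le_mul_of_nonneg_left h4 h0
    linarith

/-- P6 -/
lemma bound6 {n : ℕ} {p c : ℝ} (h0 : 0 ≤ p) (h1 : p ≤ 1) :
    PR n p (fun A => ¬ (A.card : ℝ) ≤ c) ≤ Real.exp (-(Real.log 2 * c)) * Real.exp (p * n ^ 2 / 2) := by
  have key := PR_le (n := n) h0 h1 (Q := (fun A => ¬ (A.card : ℝ) ≤ c))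
    (f := fun A => Real.exp (-(Real.log 2 * c)) * (2 : ℝ) ^ (A ∩ edg n).card) ?_ ?_
  · refine key.trans ?_
    rw [EX_mul]
    refine mul_le_mul_of_nonneg_left ?_ (by positivity)
    refine (EX_B_le h0 h1 subset_rfl (by norm_num)).trans (Real.exp_le_exp.2 ?_)
    have := mul_le_mul_of_nonneg_left (card_edg_le n) h0
    linarith
  · intros; positivity
  · intro A hA h
    push Not at h
    rw [inter_eq_left.2 hA]
    have e1 : (2 : ℝ) ^ A.card = Real.exp (Real.log 2 * A.card) := by
      rw [mul_comm, Real.exp_nat_mul, Real.exp_log (by norm_num)]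
    rw [e1, ← Real.exp_add]
    refine Real.one_le_exp ?_
    have := mul_le_mul_of_nonneg_left h.le (Real.log_nonneg (by norm_num : (1:ℝ) ≤ 2))
    linarith

lemma ce_sub {n : ℕ} {l : List (Fin n)} (hl : l.Nodup) (h3 : 2 ≤ l.length) : (ce l).toFinset ⊆ edg n := by
  rcases List.eq_nil_or_concat l with rfl | ⟨L, b, rfl⟩
  · simp at h3
  · cases L with
    | nil => simp at h3
    | cons a L =>
      rw [List.concat_eq_append, List.cons_append] at hl ⊢
      rw [ce_snoc, List.toFinset_append]
      refine union_subset (pe_sub hl) ?_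
      intro e he
      simp only [List.toFinset_cons, List.toFinset_nil, insert_empty_eq, mem_singleton] at he
      rw [he, mem_edg]
      rintro rfl
      simp at hl

lemma mem_ncyc_eq {n K : ℕ} (A : Finset (Sym2 (Fin n))) : (ncyc K A : ℝ) =
    ∑ k ∈ Icc 3 K, ∑ t ∈ (univ : Finset (List.Vector (Fin n) k)).filter (fun t => t.toList.Nodup),
      (if (ce t.toList).toFinset ⊆ A then (1:ℝ) else 0) := by
  unfold ncyc
  push_cast
  refine sum_congr rfl fun k _ => ?_
  rw [← sum_filter, sum_const, nsmul_eq_mul, mul_one, filter_filter]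
  congr 2
  ext t
  simp only [mem_filter, mem_univ, true_and]
  refine and_congr_right fun _ => ?_
  constructor
  · intro h e he; exact h e (List.mem_toFinset.1 he)
  · intro h e he; exact h (List.mem_toFinset.2 he)

/-- P7 -/
lemma bound7 {n K : ℕ} {p c : ℝ} (h0 : 0 ≤ p) (h1 : p ≤ 1) (hc : 0 < c) :
    PR n p (fun A => ¬ (ncyc K A : ℝ) ≤ c) ≤ 1 / c * ∑ k ∈ Icc 3 K, (n * p) ^ k := by
  have key := PR_le (n := n) h0 h1 (Q := (fun A => ¬ (ncyc K A : ℝ) ≤ c))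
    (f := fun A => 1 / c * (ncyc K A : ℝ)) ?_ ?_
  · refine key.trans ?_
    rw [EX_mul]
    refine mul_le_mul_of_nonneg_left ?_ (by positivity)
    simp only [mem_ncyc_eq]
    rw [EX_sum]
    refine sum_le_sum fun k hk => ?_
    rw [EX_sum]
    have : ∀ t ∈ (univ : Finset (List.Vector (Fin n) k)).filter (fun t => t.toList.Nodup),
        EX n p (fun A => if (ce t.toList).toFinset ⊆ A then (1:ℝ) else 0) ≤ p ^ k := by
      intro t ht
      have ht := (mem_filter.1 ht).2
      have hk3 : 3 ≤ k := (mem_Icc.1 hk).1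
      have hlen : t.toList.length = k := t.toList_length
      have h2 := EX_FB_le h0 h1 (ce_sub ht (by omega)) (empty_subset (edg n)) (disjoint_empty_right _)
        (z := 1) (by norm_num)
      rw [List.toFinset_card_of_nodup (ce_nodup ht (by omega)), length_ce, hlen] at h2
      simpa using h2
    refine (sum_le_sum this).trans ?_
    rw [sum_const, nsmul_eq_mul, mul_pow]
    refine mul_le_mul_of_nonneg_right ?_ (by positivity)
    have h3 : ((univ : Finset (List.Vector (Fin n) k)).filter (fun t => t.toList.Nodup)).card ≤ n ^ k := by
      refine (card_filter_le _ _).trans ?_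
      rw [card_univ, card_vector, Fintype.card_fin]
    exact_mod_cast h3
  · intro A; positivity
  · intro A hA h
    push Not at h
    rw [one_div, mul_comm, ← div_eq_mul_inv, le_div_iff₀ hc, one_mul]
    exact h.le

end whp2

section whp3
open scoped Classical
open Finset

lemma boost_sub {V : Type*} [Fintype V] {l : List V} (hl : l.Nodup) {T : Finset (Sym2 V)} {Z : Finset V}
    {x y : V} (h : s(x, y) ∈ boost l T Z) : x ≠ y := by
  unfold boost at h
  obtain ⟨-, a, L, b, h1, h2⟩ := mem_filter.1 h
  have h3 := (boost_inv (A := T) (F := ∅) subset_rfl (by simp) h1 (by simp)).1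
  have h4 := h3.nodup_iff.2 hl
  have hab : a ≠ b := by
    rintro rfl
    simp at h4
  rcases Sym2.eq_iff.1 h2 with ⟨rfl, rfl⟩ | ⟨rfl, rfl⟩
  · exact hab
  · exact hab.symm

lemma miss_eq {n : ℕ} (l : List (Fin n)) (T : Finset (Sym2 (Fin n))) :
    miss l T = ((pe l).toFinset \ T).card := by
  unfold miss
  congr 1
  ext e
  simp

lemma sumT {n : ℕ} {p z : ℝ} (h0 : 0 ≤ p) (hz0 : 0 ≤ z) (hz1 : z ≤ 1) {l : List (Fin n)}
    (hl : l.Nodup) (hn : l.length = n) :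
    ∑ T ∈ (edg n).powerset, z ^ T.card * p ^ (miss l T) * p ^ T.card ≤
      (2 * p) ^ (n - 1) * Real.exp (p * z * n ^ 2 / 2) := by
  set E := (pe l).toFinset with hE
  have hEe : E ⊆ edg n := pe_sub hl
  have hEc : E.card = n - 1 := by
    rw [hE, List.toFinset_card_of_nodup (pe_nodup hl), length_pe, hn]
  have h1 : ∀ T ∈ (edg n).powerset, z ^ T.card * p ^ (miss l T) * p ^ T.card =
      ∏ e ∈ edg n, (if e ∈ T then p * z else if e ∈ E then p else 1) := by
    intro T hT
    rw [mem_powerset] at hT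
    rw [← prod_sdiff hT, miss_eq]
    have a1 : ∏ e ∈ T, (if e ∈ T then p * z else if e ∈ E then p else 1) = (p * z) ^ T.card := by
      rw [← prod_const]
      exact prod_congr rfl fun e he => by simp [he]
    have a2 : ∏ e ∈ edg n \ T, (if e ∈ T then p * z else if e ∈ E then p else 1)
        = p ^ (E \ T).card := by
      have : ∀ e ∈ edg n \ T, (if e ∈ T then p * z else if e ∈ E then p else 1) =
          if e ∈ E \ T then p else 1 := by
        intro e he
        have := (mem_sdiff.1 he).2
        simp [this]
      rw [prod_congr rfl this, prod_ite_mem, prod_const]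
      congr 2
      rw [inter_eq_right]
      exact sdiff_subset_sdiff hEe subset_rfl
    rw [a1, a2, mul_pow]; ring
  rw [sum_congr rfl h1, prod_split]
  calc _ ≤ ∏ e ∈ edg n, ((if e ∈ E then 2 * p else 1) * Real.exp (p * z)) := by
        refine prod_le_prod ?_ ?_
        · intro e _; split_ifs <;> positivity
        · intro e _
          have h2 := Real.add_one_le_exp (p * z)
          have h3 : 0 ≤ p * z := by positivity
          split_ifs
          · have : p * z ≤ p := by nlinarith
            nlinarith
          · linarith
    _ = (2 * p) ^ (n - 1) * Real.exp (p * z) ^ (edg n).card := by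
        rw [prod_mul_distrib, prod_ite_mem, inter_eq_right.2 hEe, prod_const, prod_const, hEc]
    _ ≤ _ := by
        refine mul_le_mul_of_nonneg_left ?_ (by positivity)
        rw [← Real.exp_nat_mul]
        refine Real.exp_le_exp.2 ?_
        have := mul_le_mul_of_nonneg_left (card_edg_le n) (mul_nonneg h0 hz0)
        linarith

/-- P8 -/
lemma bound8 {n M m b : ℕ} {p z : ℝ} (h0 : 0 < p) (h1 : p ≤ 1) (hz0 : 0 < z) (hz1 : z ≤ 1) :
    PR n p (fun A => ¬ ∀ Z : Finset (Fin n), ∀ l : List (Fin n), l.Nodup → (∀ x, x ∈ l) →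
      ∀ T ⊆ A, T.card ≤ M →
      miss l T ≤ m → b ≤ (boost l T Z).card → ∃ e ∈ boost l T Z, e ∈ A) ≤
    2 ^ n * n ^ n * (((1 / z) ^ M * (1 / p) ^ m * Real.exp (-(p * b))) *
      ((2 * p) ^ (n - 1) * Real.exp (p * z * n ^ 2 / 2))) := by
  set s1 := (univ : Finset (Finset (Fin n) × List.Vector (Fin n) n)).filter
    (fun q => q.2.toList.Nodup) with hs1
  set C := (1 / z) ^ M * (1 / p) ^ m * Real.exp (-(p * b)) with hC
  have hC0 : 0 ≤ C := by positivity
  have key := PR_union (n := n) h0.le h1 (Q := (fun A => ¬ ∀ Z : Finset (Fin n), ∀ l : List (Fin n),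
      l.Nodup → (∀ x, x ∈ l) → ∀ T ⊆ A, T.card ≤ M →
      miss l T ≤ m → b ≤ (boost l T Z).card → ∃ e ∈ boost l T Z, e ∈ A))
    ((s1 ×ˢ (edg n).powerset).filter (fun q => q.2.card ≤ M ∧ miss q.1.2.toList q.2 ≤ m ∧
      b ≤ (boost q.1.2.toList q.2 q.1.1).card ∧ Disjoint q.2 (boost q.1.2.toList q.2 q.1.1)))
    (fun q A => (if q.2 ⊆ A then 1 else 0) * (0:ℝ) ^ (A ∩ boost q.1.2.toList q.2 q.1.1).card)
    (fun q => C * (z ^ q.2.card * p ^ (miss q.1.2.toList q.2) * p ^ q.2.card)) ?_ ?_ ?_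
  · refine key.trans ?_
    refine (sum_le_sum_of_subset_of_nonneg (filter_subset _ _) (fun _ _ _ => by positivity)).trans ?_
    rw [sum_product]
    have h2 : ∀ q ∈ s1, ∑ T ∈ (edg n).powerset, C * (z ^ T.card * p ^ (miss q.2.toList T) * p ^ T.card)
        ≤ C * ((2 * p) ^ (n - 1) * Real.exp (p * z * n ^ 2 / 2)) := by
      intro q hq
      rw [← mul_sum]
      exact mul_le_mul_of_nonneg_left (sumT h0.le hz0.le hz1 (mem_filter.1 hq).2 q.2.toList_length) hC0
    refine (sum_le_sum h2).trans ?_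
    rw [sum_const, nsmul_eq_mul]
    refine mul_le_mul_of_nonneg_right ?_ (by positivity)
    have h3 : s1.card ≤ 2 ^ n * n ^ n := by
      refine (card_filter_le _ _).trans ?_
      rw [card_univ, Fintype.card_prod, card_vector, Fintype.card_fin, Fintype.card_finset,
        Fintype.card_fin]
    exact_mod_cast h3
  · intros; positivity
  · intro A hA h
    push Not at h
    obtain ⟨Z, l, hl, hall, T, hTA, hTM, hm, hb, hno⟩ := h
    have hlen : l.length = n := by
      have h5 : l.toFinset = univ := by ext x; simp [hall]
      rw [← List.toFinset_card_of_nodup hl, h5, card_univ, Fintype.card_fin]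
    refine ⟨((Z, ⟨l, hlen⟩), T), ?_, ?_⟩
    · rw [mem_filter, mem_product]
      refine ⟨⟨mem_filter.2 ⟨mem_univ _, hl⟩, mem_powerset.2 (hTA.trans hA)⟩, hTM, hm, hb, ?_⟩
      rw [Finset.disjoint_left]
      intro e he he'
      exact hno e he' (hTA he)
    · have h6 : A ∩ boost l T Z = ∅ := by
        rw [← disjoint_iff_inter_eq_empty, Finset.disjoint_left]
        intro e he he'
        exact hno e he' he
      change 1 ≤ (if T ⊆ A then (1:ℝ) else 0) * (0:ℝ) ^ (A ∩ boost l T Z).card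
      rw [h6, if_pos hTA]; simp
  · rintro ⟨⟨Z, t⟩, T⟩ hq
    obtain ⟨hq1, hM, hm, hb, hdis⟩ := mem_filter.1 hq
    obtain ⟨hq1, hT⟩ := mem_product.1 hq1
    have hnd : t.toList.Nodup := (mem_filter.1 hq1).2
    rw [mem_powerset] at hT
    simp only at hM hm hb hdis hT ⊢
    set B := boost t.toList T Z with hB
    have hBe : B ⊆ edg n := by
      intro e he
      induction e with | _ x y
      exact mem_edg.2 (boost_sub hnd he)
    refine (EX_FB_le h0.le h1 hT hBe hdis le_rfl).trans ?_
    have e1 : Real.exp (-(1 - 0) * p * B.card) ≤ Real.exp (-(p * b)) := by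
      refine Real.exp_le_exp.2 ?_
      have : (b:ℝ) ≤ B.card := by exact_mod_cast hb
      have := mul_le_mul_of_nonneg_left this h0.le
      linarith
    have e2 : 1 ≤ (1 / z) ^ M * z ^ T.card := by
      rw [one_div, inv_pow, mul_comm, ← div_eq_mul_inv, le_div_iff₀ (by positivity), one_mul]
      exact pow_le_pow_of_le_one hz0.le hz1 hM
    have e3 : 1 ≤ (1 / p) ^ m * p ^ (miss t.toList T) := by
      rw [one_div, inv_pow, mul_comm, ← div_eq_mul_inv, le_div_iff₀ (by positivity), one_mul]
      exact pow_le_pow_of_le_one h0.le h1 hm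
    calc _ ≤ p ^ T.card * Real.exp (-(p * b)) := mul_le_mul_of_nonneg_left e1 (by positivity)
      _ ≤ (((1 / z) ^ M * z ^ T.card) * ((1 / p) ^ m * p ^ (miss t.toList T))) *
          (p ^ T.card * Real.exp (-(p * b))) := by
            refine le_mul_of_one_le_left (by positivity) ?_
            exact one_le_mul_of_one_le_of_one_le e2 e3
      _ = _ := by rw [hC]; ring

end whp3

section asym
open scoped Classical
open Finset Filter

/-- regime of `p` -/
structure GP (p : ℕ → ℝ) : Prop where
  h0 : ∀ n, 0 ≤ p n
  h1 : ∀ n, p n ≤ 1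
  lo : ∀ᶠ n : ℕ in atTop, Real.log n ≤ n * p n
  up : ∀ᶠ n : ℕ in atTop, n * p n ≤ 2 * Real.log n

lemma tL : Tendsto (fun n : ℕ => Real.log n) atTop atTop :=
  Real.tendsto_log_atTop.comp tendsto_natCast_atTop_atTop

lemma evL (c : ℝ) : ∀ᶠ n : ℕ in atTop, c ≤ Real.log n := tL.eventually_ge_atTop c

lemma evN (c : ℝ) : ∀ᶠ n : ℕ in atTop, c ≤ (n : ℝ) := tendsto_natCast_atTop_atTop.eventually_ge_atTop c

lemma expN : Tendsto (fun n : ℕ => Real.exp (-(n:ℝ))) atTop (nhds 0) :=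
  Real.tendsto_exp_neg_atTop_nhds_zero.comp tendsto_natCast_atTop_atTop

lemma powL (k : ℕ) {c : ℝ} (hc : 0 < c) :
    Tendsto (fun n : ℕ => Real.log n ^ k * Real.exp (-(c * Real.log n))) atTop (nhds 0) := by
  have h1 := (Real.tendsto_pow_mul_exp_neg_atTop_nhds_zero k).comp (tL.const_mul_atTop hc)
  have h2 := h1.const_mul ((1 / c) ^ k)
  rw [mul_zero] at h2
  refine h2.congr fun n => ?_
  simp only [Function.comp]
  rw [← mul_assoc, ← mul_pow]
  congr 2
  field_simp

lemma exp_log_cast {n : ℕ} (hn : 1 ≤ (n:ℝ)) : Real.exp (Real.log n) = n := Real.exp_log (by linarith)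

lemma lim1 {p : ℕ → ℝ} (hp : GP p)
    (hω : Tendsto (fun n : ℕ => n * p n - Real.log n - Real.log (Real.log n)) atTop atTop) :
    Tendsto (fun n => PR n (p n) (fun A => ¬ ∀ v, 2 ≤ (nb A v).card)) atTop (nhds 0) := by
  have hlim : Tendsto (fun n : ℕ => 3 * Real.exp 2 *
      Real.exp (-(n * p n - Real.log n - Real.log (Real.log n)))) atTop (nhds 0) := by
    have := (Real.tendsto_exp_neg_atTop_nhds_zero.comp hω).const_mul (3 * Real.exp 2)
    simpa using this
  refine squeeze_zero' (Eventually.of_forall fun n => PR_nonneg (hp.h0 n) (hp.h1 n) _) ?_ hlim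
  filter_upwards [hp.up, evL 1, evN 2] with n hup hL hn
  have h0 := hp.h0 n
  have h1 := hp.h1 n
  have hn2 : 2 ≤ n := by exact_mod_cast hn
  refine (bound1 h0 h1 hn2).trans ?_
  set P := p n
  set L := Real.log n with hLdef
  have e1 : Real.exp (-(P * (n - 1))) ≤ Real.exp 2 * Real.exp (-(n * P)) := by
    rw [← Real.exp_add]; exact Real.exp_le_exp.2 (by nlinarith)
  have e2 : Real.exp (-(P * (n - 2))) ≤ Real.exp 2 * Real.exp (-(n * P)) := by
    rw [← Real.exp_add]; exact Real.exp_le_exp.2 (by nlinarith)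
  have e3 : Real.exp (-(n * P - L - Real.log L)) = L * n * Real.exp (-(n * P)) := by
    have : -(n * P - L - Real.log L) = Real.log L + L + -(n * P) := by ring
    rw [this, Real.exp_add, Real.exp_add, Real.exp_log (by linarith), exp_log_cast (by linarith)]
  rw [e3]
  set W := Real.exp (-(n * P)) with hW
  have hW0 : 0 < W := Real.exp_pos _
  have hE0 : 0 < Real.exp 2 := Real.exp_pos _
  calc (n:ℝ) * Real.exp (-(P * (n - 1))) + n * n * P * Real.exp (-(P * (n - 2)))
      ≤ n * (Real.exp 2 * W) + n * n * P * (Real.exp 2 * W) := by gcongr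
    _ = (1 + n * P) * (n * (Real.exp 2 * W)) := by ring
    _ ≤ (3 * L) * (n * (Real.exp 2 * W)) :=
        mul_le_mul_of_nonneg_right (by linarith) (by positivity)
    _ = _ := by ring

lemma lim2 {p : ℕ → ℝ} (hp : GP p) {D : ℕ → ℕ} {η : ℝ} (hη : η ≤ 1 / 200)
    (hD : ∀ᶠ n : ℕ in atTop, (D n : ℝ) ≤ 9 * η * Real.log n) :
    Tendsto (fun n => PR n (p n) (fun A => closeSmall (D n) A)) atTop (nhds 0) := by
  have hlim : Tendsto (fun n : ℕ => 48 * Real.exp 7 *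
      (Real.log n ^ 4 * Real.exp (-(1 / 2 * Real.log n)))) atTop (nhds 0) := by
    have := (powL 4 (c := 1 / 2) (by norm_num)).const_mul (48 * Real.exp 7)
    simpa using this
  refine squeeze_zero' (Eventually.of_forall fun n => PR_nonneg (hp.h0 n) (hp.h1 n) _) ?_ hlim
  filter_upwards [hp.up, hp.lo, evL 1, evN 2, hD] with n hup hlo hL hn hD
  have h0 := hp.h0 n
  have h1 := hp.h1 n
  refine (bound2 h0 h1).trans ?_
  set P := p n
  set L := Real.log n with hLdef
  have hx0 : 0 ≤ n * P := by positivity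
  have e1 : (n:ℝ) ^ 2 * P ^ 1 + n ^ 3 * P ^ 2 + n ^ 5 * P ^ 4 ≤ 48 * L ^ 4 * n := by
    have a1 : n * P ≤ (2 * L) ^ 4 := hup.trans (le_self_pow₀ (by linarith) (by norm_num))
    have a2 : (n * P) ^ 2 ≤ (2 * L) ^ 4 :=
      (pow_le_pow_left₀ hx0 hup 2).trans (pow_le_pow_right₀ (by linarith) (by norm_num))
    have a3 : (n * P) ^ 4 ≤ (2 * L) ^ 4 := pow_le_pow_left₀ hx0 hup 4
    calc (n:ℝ) ^ 2 * P ^ 1 + n ^ 3 * P ^ 2 + n ^ 5 * P ^ 4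
        = (n * P + (n * P) ^ 2 + (n * P) ^ 4) * n := by ring
      _ ≤ ((2 * L) ^ 4 + (2 * L) ^ 4 + (2 * L) ^ 4) * n := by gcongr
      _ = _ := by ring
  have e2 : (8:ℝ) ^ (2 * D n) ≤ Real.exp (1 / 4 * L) := by
    have : (8:ℝ) ^ (2 * D n) = Real.exp ((2 * D n : ℕ) * (3 * Real.log 2)) := by
      rw [Real.exp_nat_mul]
      congr 1
      have h8 : 3 * Real.log 2 = Real.log 8 := by
        rw [show (8:ℝ) = 2 ^ 3 by norm_num, Real.log_pow]; norm_num
      rw [h8, Real.exp_log (by norm_num)]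
    rw [this]
    refine Real.exp_le_exp.2 ?_
    push_cast
    have l2 := Real.log_two_lt_d9
    have l3 : 0 < Real.log 2 := Real.log_pos (by norm_num)
    have a4 : (D n : ℝ) ≤ 9 / 200 * L := by nlinarith
    nlinarith
  have e3 : Real.exp (-(7 / 8 * P * (2 * n - 7))) ≤ Real.exp (7 - 7 / 4 * L) :=
    Real.exp_le_exp.2 (by nlinarith)
  calc _ ≤ (48 * L ^ 4 * n) * (Real.exp (1 / 4 * L) * Real.exp (7 - 7 / 4 * L)) := by gcongr
    _ = 48 * L ^ 4 * (Real.exp L * (Real.exp (1 / 4 * L) * Real.exp (7 - 7 / 4 * L))) := by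
        rw [exp_log_cast (by linarith)]; ring
    _ = 48 * L ^ 4 * (Real.exp 7 * Real.exp (-(1 / 2 * L))) := by
        rw [← Real.exp_add, ← Real.exp_add, ← Real.exp_add]; congr 2; ring
    _ = _ := by ring

lemma lim3 {p : ℕ → ℝ} (hp : GP p) {q w0 : ℕ → ℕ} {η : ℝ} (hη : 0 < η)
    (hq : ∀ᶠ n : ℕ in atTop, η * Real.log n ≤ q n)
    (hw : ∀ᶠ n : ℕ in atTop, Real.exp (4 / η) * w0 n ≤ n) :
    Tendsto (fun n => PR n (p n) (fun A => ¬ ∀ W : Finset (Fin n), W.Nonempty → W.card ≤ w0 n →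
      (ei A W).card < q n * W.card)) atTop (nhds 0) := by
  have hlim : Tendsto (fun n : ℕ => Real.exp (Real.exp (-Real.log n)) - 1) atTop (nhds 0) := by
    have h1 : Tendsto (fun n : ℕ => Real.exp (-Real.log n)) atTop (nhds 0) :=
      Real.tendsto_exp_neg_atTop_nhds_zero.comp tL
    have h2 := ((Real.continuous_exp.tendsto 0).comp h1).sub_const 1
    simpa using h2
  refine squeeze_zero' (Eventually.of_forall fun n => PR_nonneg (hp.h0 n) (hp.h1 n) _) ?_ hlim
  filter_upwards [hp.up, evL 1, evN 2, hq, hw] with n hup hL hn hq hw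
  have h0 := hp.h0 n
  have h1 := hp.h1 n
  set L := Real.log n with hLdef
  have hz : 1 ≤ Real.exp (4 / η) := Real.one_le_exp (by positivity)
  refine (bound3 h0 h1 (zz := Real.exp (4 / η)) (c1 := 2 * L) hz ?_).trans ?_
  · have := mul_le_mul_of_nonneg_left hw h0
    linarith
  · have e1 : Real.exp (2 * L) / Real.exp (4 / η) ^ q n ≤ Real.exp (-(2 * L)) := by
      rw [← Real.exp_nat_mul, ← Real.exp_sub]
      refine Real.exp_le_exp.2 ?_
      have : 4 * L ≤ q n * (4 / η) := by
        rw [mul_div_assoc', le_div_iff₀ hη]; linarith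
      linarith
    have e2 : (1 + Real.exp (2 * L) / Real.exp (4 / η) ^ q n) ^ n ≤ Real.exp (Real.exp (-L)) := by
      calc (1 + Real.exp (2 * L) / Real.exp (4 / η) ^ q n) ^ n
          ≤ (Real.exp (Real.exp (-(2 * L)))) ^ n := by
            refine pow_le_pow_left₀ (by positivity) ?_ n
            have := Real.add_one_le_exp (Real.exp (-(2 * L)))
            linarith
        _ = Real.exp (Real.exp L * Real.exp (-(2 * L))) := by
            rw [← Real.exp_nat_mul, exp_log_cast (by linarith)]
        _ = _ := by rw [← Real.exp_add]; congr 2; ring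
    linarith

lemma lim4 {p : ℕ → ℝ} (hp : GP p) {D : ℕ → ℕ} {η δ : ℝ} (hδ0 : 0 < δ) (hη : η ≤ δ / 40) (hη2 : η ≤ 1 / 200)
    (hD : ∀ᶠ n : ℕ in atTop, (D n : ℝ) ≤ 9 * η * Real.log n) (R : ∀ n : ℕ, Finset (Fin n))
    (hR : ∀ n : ℕ, δ * n - 1 ≤ ((R n).card : ℝ)) :
    Tendsto (fun n => PR n (p n) (fun A => ¬ ((D n * (badR (D n) (R n) A).card : ℕ) : ℝ) ≤ δ * n))
      atTop (nhds 0) := by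
  have hlim : Tendsto (fun n : ℕ => Real.exp 1 / δ *
      (Real.log n ^ 1 * Real.exp (-(δ / 4 * Real.log n)))) atTop (nhds 0) := by
    have := (powL 1 (c := δ / 4) (by positivity)).const_mul (Real.exp 1 / δ)
    simpa using this
  refine squeeze_zero' (Eventually.of_forall fun n => PR_nonneg (hp.h0 n) (hp.h1 n) _) ?_ hlim
  filter_upwards [hp.up, hp.lo, evL 1, evN 2, hD] with n hup hlo hL hn hD
  have h0 := hp.h0 n
  have h1 := hp.h1 n
  have hn0 : (0:ℝ) < n := by linarith
  refine (bound4 h0 h1 (by positivity) (R n)).trans ?_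
  have hR := hR n
  set P := p n
  set L := Real.log n with hLdef
  have e1 : (2:ℝ) ^ D n ≤ Real.exp (δ / 5 * L) := by
    have : (2:ℝ) ^ D n = Real.exp (D n * Real.log 2) := by
      rw [Real.exp_nat_mul, Real.exp_log (by norm_num)]
    rw [this]
    refine Real.exp_le_exp.2 ?_
    have l2 := Real.log_two_lt_d9
    have l3 : 0 < Real.log 2 := Real.log_pos (by norm_num)
    have a4 : (D n : ℝ) ≤ 9 / 40 * δ * L := by nlinarith
    have a5 : (D n : ℝ) * Real.log 2 ≤ (9 / 40 * δ * L) * Real.log 2 := by gcongr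
    have a6 : 0 < δ * L := by positivity
    nlinarith
  have e2 : Real.exp (-(P * ((R n).card - 1) / 2)) ≤ Real.exp (1 - δ / 2 * L) := by
    refine Real.exp_le_exp.2 ?_
    have a1 := mul_le_mul_of_nonneg_left hR h0
    have a2 := mul_le_mul_of_nonneg_left hlo hδ0.le
    have : P * ((R n).card - 1) = P * (R n).card - P := by ring
    rw [this]
    have : P * (δ * n - 1) = δ * (n * P) - P := by ring
    rw [this] at a1
    linarith
  have e3 : (D n : ℝ) ≤ L := by nlinarith
  calc _ = (D n : ℝ) / δ * (2 ^ D n * Real.exp (-(P * ((R n).card - 1) / 2))) := by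
        field_simp
    _ ≤ L / δ * (Real.exp (δ / 5 * L) * Real.exp (1 - δ / 2 * L)) := by gcongr
    _ ≤ L / δ * (Real.exp 1 * Real.exp (-(δ / 4 * L))) := by
        rw [← Real.exp_add, ← Real.exp_add]
        refine mul_le_mul_of_nonneg_left (Real.exp_le_exp.2 ?_) (by positivity)
        have a6 : 0 < δ * L := by positivity
        linarith
    _ = _ := by ring

lemma lim5 {p : ℕ → ℝ} (hp : GP p) {g : ℕ → ℕ} {γ : ℝ} (hγ : 0 < γ) (hg : ∀ n : ℕ, γ * n ≤ g n) :
    Tendsto (fun n => PR n (p n) (fun A => ¬ ∀ P Q : Finset (Fin n), Disjoint P Q → g n ≤ P.card →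
      g n ≤ Q.card → γ ^ 2 / 4 * (n * Real.log n) ≤ (eb A P Q).card)) atTop (nhds 0) := by
  refine squeeze_zero' (Eventually.of_forall fun n => PR_nonneg (hp.h0 n) (hp.h1 n) _) ?_ expN
  filter_upwards [hp.lo, evL (12 / γ ^ 2), evL 1, evN 2] with n hlo hL2 hL hn
  have h0 := hp.h0 n
  have h1 := hp.h1 n
  refine (bound5 h0 h1).trans ?_
  set P := p n
  set L := Real.log n with hLdef
  have e0 : (4:ℝ) ^ n = Real.exp (n * (2 * Real.log 2)) := by
    rw [Real.exp_nat_mul]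
    congr 1
    rw [two_mul, Real.exp_add, Real.exp_log (by norm_num)]; norm_num
  rw [e0, ← Real.exp_add, ← Real.exp_add]
  refine Real.exp_le_exp.2 ?_
  have l2 := Real.log_two_lt_d9
  have l3 : 0 < Real.log 2 := Real.log_pos (by norm_num)
  have hg := hg n
  have a1 : γ ^ 2 * (n * L) ≤ P * (g n * g n) := by
    have b1 : (γ * n) * (γ * n) ≤ (g n : ℝ) * g n := mul_le_mul hg hg (by positivity) (by positivity)
    have b2 := mul_le_mul_of_nonneg_left b1 h0
    have b3 : γ ^ 2 * n * L ≤ γ ^ 2 * n * (n * P) := mul_le_mul_of_nonneg_left hlo (by positivity)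
    nlinarith
  have a2 : 12 ≤ γ ^ 2 * L := by
    rw [div_le_iff₀ (by positivity)] at hL2; linarith
  have a3 : 12 * (n:ℝ) ≤ γ ^ 2 * (n * L) := by nlinarith
  have a4 : Real.log 2 * (γ ^ 2 / 4 * (n * L)) ≤ 1 * (γ ^ 2 / 4 * (n * L)) :=
    mul_le_mul_of_nonneg_right (by linarith) (by positivity)
  have a5 : (n:ℝ) * (2 * Real.log 2) ≤ n * 2 := by nlinarith
  linarith

lemma lim6 {p : ℕ → ℝ} (hp : GP p) :
    Tendsto (fun n => PR n (p n) (fun A => ¬ (A.card : ℝ) ≤ 4 * (n * Real.log n))) atTop (nhds 0) := by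
  refine squeeze_zero' (Eventually.of_forall fun n => PR_nonneg (hp.h0 n) (hp.h1 n) _) ?_ expN
  filter_upwards [hp.up, evL 1, evN 2] with n hup hL hn
  have h0 := hp.h0 n
  have h1 := hp.h1 n
  refine (bound6 h0 h1).trans ?_
  set P := p n
  set L := Real.log n with hLdef
  rw [← Real.exp_add]
  refine Real.exp_le_exp.2 ?_
  have l2 := Real.log_two_gt_d9
  have a1 : n * (n * P) ≤ n * (2 * L) := mul_le_mul_of_nonneg_left hup (by positivity)
  have a2 : (n:ℝ) ≤ n * L := by nlinarith
  have a3 : 1 / 2 * (4 * (n * L)) ≤ Real.log 2 * (4 * (n * L)) :=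
    mul_le_mul_of_nonneg_right (by linarith) (by positivity)
  nlinarith

lemma lim7 {p : ℕ → ℝ} (hp : GP p) (K : ℕ) {δ : ℝ} (hδ : 0 < δ) :
    Tendsto (fun n => PR n (p n) (fun A => ¬ (ncyc K A : ℝ) ≤ δ * n)) atTop (nhds 0) := by
  have hlim : Tendsto (fun n : ℕ => (K * 2 ^ K / δ) *
      (Real.log n ^ K * Real.exp (-(1 * Real.log n)))) atTop (nhds 0) := by
    have := (powL K (c := 1) (by norm_num)).const_mul (K * 2 ^ K / δ)
    simpa using this
  refine squeeze_zero' (Eventually.of_forall fun n => PR_nonneg (hp.h0 n) (hp.h1 n) _) ?_ hlim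
  filter_upwards [hp.up, evL 1, evN 2] with n hup hL hn
  have h0 := hp.h0 n
  have h1 := hp.h1 n
  have hn0 : (0:ℝ) < n := by linarith
  refine (bound7 h0 h1 (by positivity)).trans ?_
  set P := p n
  set L := Real.log n with hLdef
  have e1 : ∑ k ∈ Icc 3 K, (n * P) ^ k ≤ K * (2 * L) ^ K := by
    have : ∀ k ∈ Icc 3 K, (n * P) ^ k ≤ (2 * L) ^ K := by
      intro k hk
      exact (pow_le_pow_left₀ (by positivity) hup k).trans
        (pow_le_pow_right₀ (by linarith) (mem_Icc.1 hk).2)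
    refine (sum_le_sum this).trans ?_
    rw [sum_const, nsmul_eq_mul]
    refine mul_le_mul_of_nonneg_right ?_ (by positivity)
    have : (Icc 3 K).card ≤ K := by rw [Nat.card_Icc]; omega
    exact_mod_cast this
  calc _ ≤ 1 / (δ * n) * (K * (2 * L) ^ K) := mul_le_mul_of_nonneg_left e1 (by positivity)
    _ = _ := by
        rw [one_mul, Real.exp_neg, exp_log_cast (by linarith), mul_pow]
        field_simp

lemma lim8 {p : ℕ → ℝ} (hp : GP p) {M m b : ℕ → ℕ} {κ η γ : ℝ} (hκ : 0 < κ) (hκ1 : κ ≤ 1)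
    (hη : 10 * η * Real.log (8 / κ) ≤ κ / 8) (hγ : 3 * γ ≤ κ / 8)
    (hM : ∀ᶠ n : ℕ in atTop, (M n : ℝ) ≤ 10 * η * (n * Real.log n))
    (hm : ∀ᶠ n : ℕ in atTop, (m n : ℝ) ≤ 3 * γ * n)
    (hb : ∀ᶠ n : ℕ in atTop, κ * n ^ 2 ≤ (b n : ℝ)) :
    Tendsto (fun n => PR n (p n) (fun A => ¬ ∀ Z : Finset (Fin n), ∀ l : List (Fin n), l.Nodup →
      (∀ x, x ∈ l) → ∀ T ⊆ A, T.card ≤ M n →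
      miss l T ≤ m n → b n ≤ (boost l T Z).card → ∃ e ∈ boost l T Z, e ∈ A)) atTop (nhds 0) := by
  refine squeeze_zero' (Eventually.of_forall fun n => PR_nonneg (hp.h0 n) (hp.h1 n) _) ?_ expN
  have hlog : ∀ᶠ n : ℕ in atTop, 3 + Real.log (4 * Real.log n) ≤ κ / 2 * Real.log n := by
    have h1 : ∀ᶠ x : ℝ in atTop, 3 + Real.log (4 * x) ≤ κ / 2 * x := by
      have h2 := Real.isLittleO_log_id_atTop.bound (c := κ / 4) (by positivity)
      filter_upwards [h2, eventually_ge_atTop 1, eventually_ge_atTop ((3 + Real.log 4) * (4 / κ))]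
        with x hx hx1 hx2
      rw [Real.log_mul (by norm_num) (by linarith)]
      simp only [id, Real.norm_eq_abs] at hx
      have h3 := (le_abs_self _).trans hx
      rw [abs_of_nonneg (by linarith)] at h3
      have h4 : 3 + Real.log 4 ≤ κ / 4 * x := by
        rw [mul_div_assoc', div_le_iff₀ hκ] at hx2
        linarith
      linarith
    exact tL.eventually h1
  filter_upwards [hp.up, hp.lo, evL 1, evN 2, hM, hm, hb, hlog] with n hup hlo hL hn hM hm hb hlog
  have h0 := hp.h0 n
  have h1 := hp.h1 n
  have hn0 : (0:ℝ) < n := by linarith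
  have hp0 : 0 < p n := by
    rcases h0.lt_or_eq with h | h
    · exact h
    · rw [← h] at hlo; linarith
  refine (bound8 (z := κ / 8) hp0 h1 (by positivity) (by linarith)).trans ?_
  set P := p n
  set L := Real.log n with hLdef
  have hnL : 0 < n * L := by positivity
  have hlz : 0 ≤ Real.log (8 / κ) := Real.log_nonneg (by rw [le_div_iff₀ hκ]; linarith)
  have e1 : (2:ℝ) ^ n ≤ Real.exp n := by
    have : Real.exp n = Real.exp 1 ^ n := by rw [← Real.exp_nat_mul, mul_one]
    rw [this]
    refine pow_le_pow_left₀ (by norm_num) ?_ n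
    have := Real.add_one_le_exp 1; linarith
  have e2 : (n:ℝ) ^ n * (2 * P) ^ (n - 1) ≤ Real.exp n * Real.exp (n * Real.log (4 * L)) := by
    have hn1 : n = (n - 1) + 1 := by
      have : 2 ≤ n := by exact_mod_cast hn
      omega
    have a1 : (n:ℝ) ^ n * (2 * P) ^ (n - 1) = n * (2 * (n * P)) ^ (n - 1) := by
      have : (n:ℝ) ^ n = n * n ^ (n - 1) := by
        rw [← pow_succ', Nat.sub_add_cancel (by omega)]
      rw [this, mul_assoc, ← mul_pow]; congr 2; ring
    rw [a1]
    have a2 : (n:ℝ) ≤ Real.exp n := by have := Real.add_one_le_exp (n:ℝ); linarith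
    have a3 : (2 * (n * P)) ^ (n - 1) ≤ (4 * L) ^ n :=
      (pow_le_pow_left₀ (by positivity) (by linarith) _).trans
        (pow_le_pow_right₀ (by linarith) (by omega))
    have a4 : (4 * L) ^ n = Real.exp (n * Real.log (4 * L)) := by
      rw [Real.exp_nat_mul, Real.exp_log (by linarith)]
    rw [← a4]
    exact mul_le_mul a2 a3 (by positivity) (by positivity)
  have e3 : (1 / (κ / 8)) ^ M n ≤ Real.exp (κ / 8 * (n * L)) := by
    have a1 : 1 / (κ / 8) = 8 / κ := by field_simp
    have a2 : (8 / κ) ^ M n = Real.exp (M n * Real.log (8 / κ)) := by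
      rw [Real.exp_nat_mul, Real.exp_log (by positivity)]
    rw [a1, a2]
    refine Real.exp_le_exp.2 ?_
    calc (M n : ℝ) * Real.log (8 / κ) ≤ 10 * η * (n * L) * Real.log (8 / κ) := by gcongr
      _ = (10 * η * Real.log (8 / κ)) * (n * L) := by ring
      _ ≤ _ := by gcongr
  have e4 : (1 / P) ^ m n ≤ Real.exp (κ / 8 * (n * L)) := by
    have a1 : 1 / P ≤ n := by rw [div_le_iff₀ hp0]; linarith
    calc (1 / P) ^ m n ≤ (n:ℝ) ^ m n := pow_le_pow_left₀ (by positivity) a1 _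
      _ = Real.exp (m n * L) := by rw [Real.exp_nat_mul, exp_log_cast (by linarith)]
      _ ≤ _ := by
        refine Real.exp_le_exp.2 ?_
        have a2 : (m n : ℝ) * L ≤ (3 * γ * n) * L := by gcongr
        have a3 : (3 * γ) * (n * L) ≤ κ / 8 * (n * L) := by gcongr
        linarith
  have e5 : Real.exp (-(P * b n)) ≤ Real.exp (-(κ * (n * L))) := by
    refine Real.exp_le_exp.2 ?_
    have a1 := mul_le_mul_of_nonneg_left hb h0
    have a2 : κ * n * L ≤ κ * n * (n * P) := mul_le_mul_of_nonneg_left hlo (by positivity)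
    nlinarith
  have e6 : Real.exp (P * (κ / 8) * n ^ 2 / 2) ≤ Real.exp (κ / 8 * (n * L)) := by
    refine Real.exp_le_exp.2 ?_
    have a2 : κ / 8 * n * (n * P) ≤ κ / 8 * n * (2 * L) := mul_le_mul_of_nonneg_left hup (by positivity)
    nlinarith
  calc _ = (2:ℝ) ^ n * ((n:ℝ) ^ n * (2 * P) ^ (n - 1)) * (((1 / (κ / 8)) ^ M n * (1 / P) ^ m n *
        Real.exp (-(P * b n))) * Real.exp (P * (κ / 8) * n ^ 2 / 2)) := by ring
    _ ≤ Real.exp n * (Real.exp n * Real.exp (n * Real.log (4 * L))) *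
        ((Real.exp (κ / 8 * (n * L)) * Real.exp (κ / 8 * (n * L)) * Real.exp (-(κ * (n * L)))) *
          Real.exp (κ / 8 * (n * L))) := by gcongr
    _ ≤ _ := by
      simp only [← Real.exp_add]
      refine Real.exp_le_exp.2 ?_
      have := mul_le_mul_of_nonneg_left hlog hn0.le
      nlinarith

end asym


section
open scoped Classical
open Finset Filter

lemma tand {p : ℕ → ℝ} (hp : GP p) {E F : ∀ n : ℕ, Finset (Sym2 (Fin n)) → Prop}
    (hE : Tendsto (fun n => PR n (p n) (fun A => ¬ E n A)) atTop (nhds 0))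
    (hF : Tendsto (fun n => PR n (p n) (fun A => ¬ F n A)) atTop (nhds 0)) :
    Tendsto (fun n => PR n (p n) (fun A => ¬ (E n A ∧ F n A))) atTop (nhds 0) := by
  have h := hE.add hF
  rw [add_zero] at h
  refine squeeze_zero' (Eventually.of_forall fun n => PR_nonneg (hp.h0 n) (hp.h1 n) _)
    (Eventually.of_forall fun n => ?_) h
  exact PR_or (hp.h0 n) (hp.h1 n) (fun A _ hA => by tauto)

lemma timp {p : ℕ → ℝ} (hp : GP p) {E F : ∀ n : ℕ, Finset (Sym2 (Fin n)) → Prop}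
    (hE : Tendsto (fun n => PR n (p n) (fun A => ¬ E n A)) atTop (nhds 0))
    (h : ∀ᶠ n in atTop, ∀ A, A ⊆ edg n → E n A → F n A) :
    Tendsto (fun n => PR n (p n) (fun A => ¬ F n A)) atTop (nhds 0) := by
  have h2 := hE.add hE
  rw [add_zero] at h2
  refine squeeze_zero' (Eventually.of_forall fun n => PR_nonneg (hp.h0 n) (hp.h1 n) _) ?_ h2
  filter_upwards [h] with n hn
  exact PR_or (hp.h0 n) (hp.h1 n) (fun A hA hA2 => Or.inl fun h3 => hA2 (hn A hA h3))

def HCprop (r : ℕ) (ε : ℝ) (n : ℕ) (G : SimpleGraph (Fin n)) : Prop :=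
  ∀ c : Sym2 (Fin n) → Fin r, ∃ i : Fin r, ∃ (v : Fin n) (w : G.Walk v v),
          w.IsHamiltonianCycle ∧
          (2 / (r + 1 : ℝ) - ε) * n ≤ ((w.edges.filter (fun e => c e = i)).length : ℝ)

lemma HCprop_mono {r : ℕ} {ε : ℝ} {n : ℕ} {G H : SimpleGraph (Fin n)} (h : G ≤ H)
    (hG : HCprop r ε n G) : HCprop r ε n H := by
  intro c
  obtain ⟨i, v, w, hw, hl⟩ := hG c
  refine ⟨i, v, w.mapLe h, ?_, ?_⟩
  · exact hw.map (f := SimpleGraph.Hom.ofLE h) Function.bijective_id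
  · rw [SimpleGraph.Walk.edges_mapLe_eq_edges]
    exact hl

lemma consts (r : ℕ) (hr : 2 ≤ r) {τ : ℝ} (hτ : 0 < τ) (hτ1 : τ ≤ 1 / (r + 1)) :
    ∃ δ κ η γ : ℝ, δ = τ / 20 ∧ κ = δ ^ 2 / 64 ∧ 0 < η ∧ η ≤ 1 / 200 ∧ η ≤ δ / 40 ∧
      10 * η * Real.log (8 / κ) ≤ κ / 8 ∧ 0 < γ ∧ γ ≤ 1 ∧ Real.exp (4 / η) * (8 * γ) ≤ 1 ∧ γ ≤ δ / 16 ∧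
      3 * γ ≤ κ / 8 ∧ 4 * 4 ^ r * γ ≤ τ / 8 := by
  have hδ : 0 < τ / 20 := by positivity
  have hκ : 0 < (τ / 20) ^ 2 / 64 := by positivity
  set δ := τ / 20 with hδd
  set κ := δ ^ 2 / 64 with hκd
  have hX : 0 < |Real.log (8 / κ)| + 1 := by positivity
  have hη : 0 < min (min (1 / 200) (δ / 40)) (κ / 80 / (|Real.log (8 / κ)| + 1)) := by positivity
  set η := min (min (1 / 200) (δ / 40)) (κ / 80 / (|Real.log (8 / κ)| + 1)) with hηd
  have hη1 : η ≤ 1 / 200 := (min_le_left _ _).trans (min_le_left _ _)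
  have hη2 : η ≤ δ / 40 := (min_le_left _ _).trans (min_le_right _ _)
  have hη3 : η ≤ κ / 80 / (|Real.log (8 / κ)| + 1) := min_le_right _ _
  have hγ : 0 < min (min (min 1 (1 / (8 * Real.exp (4 / η)))) (δ / 16)) (min (κ / 24) (τ / 8 / (4 * 4 ^ r))) := by
    positivity
  set γ := min (min (min 1 (1 / (8 * Real.exp (4 / η)))) (δ / 16)) (min (κ / 24) (τ / 8 / (4 * 4 ^ r))) with hγd
  have g1 : γ ≤ 1 := (min_le_left _ _).trans ((min_le_left _ _).trans (min_le_left _ _))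
  have g2 : γ ≤ 1 / (8 * Real.exp (4 / η)) :=
    (min_le_left _ _).trans ((min_le_left _ _).trans (min_le_right _ _))
  have g3 : γ ≤ δ / 16 := (min_le_left _ _).trans (min_le_right _ _)
  have g4 : γ ≤ κ / 24 := (min_le_right _ _).trans (min_le_left _ _)
  have g5 : γ ≤ τ / 8 / (4 * 4 ^ r) := (min_le_right _ _).trans (min_le_right _ _)
  refine ⟨δ, κ, η, γ, rfl, rfl, hη, hη1, hη2, ?_, hγ, g1, ?_, g3, by linarith, ?_⟩
  · rw [le_div_iff₀ hX] at hη3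
    have := le_abs_self (Real.log (8 / κ))
    nlinarith
  · rw [le_div_iff₀ (by positivity)] at g2
    linarith
  · rw [le_div_iff₀ (by positivity)] at g5
    linarith

set_option maxHeartbeats 1600000 in
lemma main_GP (r : ℕ) (hr : 2 ≤ r) (ε : ℝ) (hε : 0 < ε) {p : ℕ → ℝ} (hp : GP p)
    (hω : Tendsto (fun n : ℕ => n * p n - Real.log n - Real.log (Real.log n)) atTop atTop) :
    Tendsto (fun n => PR n (p n) (fun A => ¬ HCprop r ε n (SimpleGraph.fromEdgeSet (A : Set (Sym2 (Fin n))))))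
      atTop (nhds 0) := by
  have hr0 : (0:ℝ) < r + 1 := by positivity
  have hr3 : (3:ℝ) ≤ r + 1 := by
    have : (2:ℝ) ≤ r := by exact_mod_cast hr
    linarith
  have hτ : 0 < min ε (1 / ((r:ℝ) + 1)) := by positivity
  have hτε : min ε (1 / ((r:ℝ) + 1)) ≤ ε := min_le_left _ _
  have hτr : min ε (1 / ((r:ℝ) + 1)) ≤ 1 / ((r:ℝ) + 1) := min_le_right _ _
  generalize min ε (1 / ((r:ℝ) + 1)) = τ at hτ hτε hτr
  have hτ3 : τ ≤ 1 / 3 := hτr.trans (one_div_le_one_div_of_le (by norm_num) hr3)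
  have hτr' : τ * (r + 1) ≤ 1 := by rwa [le_div_iff₀ hr0] at hτr
  obtain ⟨δ, κ, η, γ, hδd, hκd, hη, hη1, hη2, hη3, hγ, g1, g2, g3, g4, g5⟩ := consts r hr hτ hτr
  have hδ : 0 < δ := by rw [hδd]; positivity
  have hδ1 : δ ≤ 1 / 60 := by linarith
  have hκ : 0 < κ := by rw [hκd]; positivity
  have hκ1 : κ ≤ 1 := by rw [hκd]; nlinarith
  obtain ⟨a, ha⟩ : ∃ a : ℝ, a = 2 / (r + 1) - τ / 4 := ⟨_, rfl⟩
  have har : a * (r + 1) = 2 - τ * (r + 1) / 4 := by rw [ha]; field_simp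
  have ha0 : 0 < a := by
    by_contra h
    push Not at h
    nlinarith
  have ha1 : a ≤ 2 / 3 := by
    have : 2 / ((r:ℝ) + 1) ≤ 2 / 3 := div_le_div_of_nonneg_left (by norm_num) (by norm_num) hr3
    linarith
  obtain ⟨ρ, hρ⟩ : ∃ ρ : ℝ, ρ = γ ^ 2 / 16 := ⟨_, rfl⟩
  have hρ0 : 0 < ρ := by rw [hρ]; positivity
  have hρ1 : ρ ≤ 1 := by rw [hρ]; nlinarith
  let t : ℕ → ℕ := fun n => ⌈a * n⌉₊
  let K : ℕ := ⌈4 / τ⌉₊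
  let q : ℕ → ℕ := fun n => ⌈η * Real.log n⌉₊
  let D : ℕ → ℕ := fun n => 8 * q n + 3
  let g : ℕ → ℕ := fun n => ⌈γ * n⌉₊
  let k : ℕ → ℕ := fun n => ⌈2 * n / ρ⌉₊
  let R : ∀ n : ℕ, Finset (Fin n) := fun n => univ.filter (fun v => v.val < ⌊δ * n⌋₊)
  let s0 : ℕ → ℕ := fun n => ⌊δ * n / 4⌋₊
  let b : ℕ → ℕ := fun n => s0 n * s0 n / 2
  let M : ℕ → ℕ := fun n => n + (n * (8 * q n + 3) + k n)
  let m : ℕ → ℕ := fun n => 2 * g n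
  have hRc : ∀ n, (R n).card = ⌊δ * n⌋₊ := by
    intro n
    have hle : ⌊δ * n⌋₊ ≤ n := by
      have : ⌊δ * n⌋₊ ≤ ⌊(n:ℝ)⌋₊ := Nat.floor_mono (by nlinarith [Nat.cast_nonneg (α := ℝ) n])
      simpa using this
    rw [show (R n).card = (univ.filter (fun v : Fin n => v.val < ⌊δ * n⌋₊)).card from rfl,
      Fin.card_filter_val_lt, min_eq_right hle]
  have hR1 : ∀ n : ℕ, δ * n - 1 ≤ ((R n).card : ℝ) := by
    intro n
    rw [hRc]
    have := Nat.lt_floor_add_one (δ * n)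
    linarith
  have hR2 : ∀ n : ℕ, ((R n).card : ℝ) ≤ δ * n := by
    intro n
    rw [hRc]
    exact Nat.floor_le (by positivity)
  have hq1 : ∀ n : ℕ, η * Real.log n ≤ q n := fun n => Nat.le_ceil _
  have hq2 : ∀ᶠ n : ℕ in atTop, (q n : ℝ) ≤ η * Real.log n + 1 := by
    filter_upwards [evL 0] with n hn
    exact (Nat.ceil_lt_add_one (by positivity)).le
  have hD : ∀ᶠ n : ℕ in atTop, (D n : ℝ) ≤ 9 * η * Real.log n := by
    filter_upwards [hq2, evL (11 / η)] with n hn hL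
    rw [div_le_iff₀ hη] at hL
    show ((8 * q n + 3 : ℕ) : ℝ) ≤ _
    push_cast
    linarith
  have hg1 : ∀ n : ℕ, γ * n ≤ g n := fun n => Nat.le_ceil _
  have hg2 : ∀ n : ℕ, (g n : ℝ) ≤ γ * n + 1 := fun n => (Nat.ceil_lt_add_one (by positivity)).le
  have hgw : ∀ᶠ n : ℕ in atTop, Real.exp (4 / η) * (4 * g n : ℕ) ≤ n := by
    filter_upwards [evN (1 / γ)] with n hn
    rw [div_le_iff₀ hγ] at hn
    push_cast
    have h1 := hg2 n
    have h2 : (g n : ℝ) ≤ 2 * γ * n := by linarith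
    calc Real.exp (4 / η) * (4 * g n) ≤ Real.exp (4 / η) * (4 * (2 * γ * n)) := by gcongr
      _ = Real.exp (4 / η) * (8 * γ) * n := by ring
      _ ≤ 1 * n := by gcongr
      _ = n := one_mul _
  have hm : ∀ᶠ n : ℕ in atTop, (m n : ℝ) ≤ 3 * γ * n := by
    filter_upwards [evN (2 / γ)] with n hn
    rw [div_le_iff₀ hγ] at hn
    have h1 := hg2 n
    show ((2 * g n : ℕ) : ℝ) ≤ _
    push_cast
    linarith
  have hk2 : ∀ n : ℕ, (k n : ℝ) ≤ 2 * n / ρ + 1 := fun n => (Nat.ceil_lt_add_one (by positivity)).le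
  have hk1 : ∀ n : ℕ, 2 * (n:ℝ) ≤ ρ * k n := by
    intro n
    have : 2 * n / ρ ≤ (k n : ℝ) := Nat.le_ceil _
    rw [div_le_iff₀ hρ0] at this
    linarith
  have hM : ∀ᶠ n : ℕ in atTop, (M n : ℝ) ≤ 10 * η * (n * Real.log n) := by
    filter_upwards [hD, evL ((2 + 2 / ρ) / η), evN 1] with n h1 h2 hn
    rw [div_le_iff₀ hη] at h2
    have h3 := hk2 n
    have h4 : (M n : ℝ) = n + (n * (D n : ℝ) + k n) := by
      show ((n + (n * (8 * q n + 3) + k n) : ℕ) : ℝ) = n + (n * ((8 * q n + 3 : ℕ) : ℝ) + k n)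
      push_cast; ring
    rw [h4]
    have hn0 : (0:ℝ) ≤ n := by linarith
    have h5 := mul_le_mul_of_nonneg_left h1 hn0
    have h6 := mul_le_mul_of_nonneg_left h2 hn0
    have h7 : 2 * n / ρ = n * (2 / ρ) := by ring
    nlinarith
  have hs : ∀ᶠ n : ℕ in atTop, δ * n / 4 - 1 ≤ s0 n := by
    refine Eventually.of_forall fun n => ?_
    have := Nat.lt_floor_add_one (δ * n / 4)
    show _ ≤ ((⌊δ * n / 4⌋₊ : ℕ) : ℝ)
    linarith
  have hb : ∀ᶠ n : ℕ in atTop, κ * n ^ 2 ≤ (b n : ℝ) := by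
    filter_upwards [hs, evN (100 / δ)] with n h1 h2
    rw [div_le_iff₀ hδ] at h2
    have h3 : (s0 n * s0 n : ℝ) ≤ 2 * b n + 1 := by
      have : s0 n * s0 n ≤ 2 * (s0 n * s0 n / 2) + 1 := by omega
      have h4 : ((s0 n * s0 n : ℕ) : ℝ) ≤ ((2 * (s0 n * s0 n / 2) + 1 : ℕ) : ℝ) := by exact_mod_cast this
      push_cast at h4
      exact_mod_cast h4
    have h5 : (δ * n / 4 - 1) ^ 2 ≤ s0 n * s0 n := by
      rw [← sq]; exact pow_le_pow_left₀ (by linarith) h1 2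
    rw [hκd]
    nlinarith
  have T1 := lim1 hp hω
  have T2 := lim2 hp hη1 hD
  have T2' : Tendsto (fun n => PR n (p n) (fun A => ¬ ¬ closeSmall (D n) A)) atTop (nhds 0) := by
    simpa only [not_not] using T2
  have T3 := lim3 hp (w0 := fun n => 4 * g n) hη (Eventually.of_forall hq1) hgw
  have T4 := lim4 hp hδ hη2 hη1 hD R hR1
  have T5 := lim5 hp hγ hg1
  have T6 := lim6 hp
  have T7 := lim7 hp K hδ
  have T8 := lim8 hp hκ hκ1 hη3 g4 hM hm hb
  have TT := tand hp T1 (tand hp T2' (tand hp T3 (tand hp T4 (tand hp T5 (tand hp T6 (tand hp T7 T8))))))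
  refine timp hp TT ?_
  filter_upwards [evN 3, evN (3 / a), evN (100 / δ), evN (8 * (r + 1 + 4 * 4 ^ r) / τ),
    evL (8 * (r + 1) / γ ^ 2), evL 1] with n n1 n2 n3 n4 n5 n6 A hA hE
  obtain ⟨e1, e2, e3, e4, e5, e6, e7, e8⟩ := hE
  have hn0 : (0:ℝ) < n := by linarith
  have hLn : 0 < n * Real.log n := by positivity
  rw [div_le_iff₀ ha0] at n2
  rw [div_le_iff₀ hδ] at n3
  rw [div_le_iff₀ hτ] at n4
  rw [div_le_iff₀ (by positivity)] at n5
  have ht1 : a * n ≤ t n := Nat.le_ceil _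
  have ht2 : (t n : ℝ) ≤ a * n + 1 := (Nat.ceil_lt_add_one (by positivity)).le
  have hgn := hg2 n
  intro c
  have hd : ∀ P Q : Finset (Fin n), Disjoint P Q → g n ≤ P.card → g n ≤ Q.card →
      2 * r * n < (eb A P Q).card ∧ ρ * A.card ≤ (eb A P Q).card := by
    intro P Q hPQ hP hQ
    have := e5 P Q hPQ hP hQ
    constructor
    · have h1 : (2 * r * n : ℝ) < (eb A P Q).card := by
        refine lt_of_lt_of_le ?_ this
        have y1 := mul_le_mul_of_nonneg_right n5 hn0.le
        have y2 : γ ^ 2 / 4 * (n * Real.log n) = Real.log n * γ ^ 2 * n / 4 := by ring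
        rw [y2]
        linarith
      exact_mod_cast h1
    · refine le_trans ?_ this
      have y1 := mul_le_mul_of_nonneg_left e6 hρ0.le
      have y2 : ρ * (4 * (n * Real.log n)) = γ ^ 2 / 4 * (n * Real.log n) := by rw [hρ]; ring
      rw [← y2]
      exact y1
  have hnum : (r + 1) * t n + 4 * 4 ^ r * g n ≤ 2 * n := by
    have h1 : ((r:ℝ) + 1) * t n + 4 * 4 ^ r * g n ≤ 2 * n := by
      have x1 : ((r:ℝ) + 1) * t n ≤ (r + 1) * (a * n + 1) := by gcongr
      have x2 : (4:ℝ) * 4 ^ r * g n ≤ 4 * 4 ^ r * (γ * n + 1) := by gcongr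
      have x3 := mul_le_mul_of_nonneg_right g5 hn0.le
      have x4 : ((r:ℝ) + 1) * (a * n + 1) = a * (r + 1) * n + (r + 1) := by ring
      rw [har] at x4
      have x5 : τ * n * 3 ≤ τ * n * (r + 1) := by gcongr
      nlinarith
    exact_mod_cast h1
  have hs0 : 3 * s0 n + g n ≤ (R n).card := by
    have h1 : (s0 n : ℝ) ≤ δ * n / 4 := Nat.floor_le (by positivity)
    have h2 := hR1 n
    have h3 := mul_le_mul_of_nonneg_right g3 hn0.le
    have : (3 * s0 n + g n : ℝ) ≤ (R n).card := by linarith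
    exact_mod_cast this
  have htn : t n ≤ n := by
    have : (t n : ℝ) ≤ n := by nlinarith
    exact_mod_cast this
  have ht0 : 1 ≤ t n := by
    have : (1 : ℝ) ≤ t n := by nlinarith
    exact_mod_cast this
  have hb2 : 2 * b n ≤ s0 n * s0 n := Nat.mul_div_le _ _
  obtain ⟨i, v, w, hw, a', ha', hfin⟩ := det_thm (K := K) (bt := g n) hA c (R n) (by exact_mod_cast n1) e1 e2 e3 ρ hρ0 hρ1
    hd (hk1 n) ht0 htn hnum le_rfl hs0 (show 2 * g n ≤ m n + 1 from Nat.le_succ (2 * g n)) (le_refl (M n)) hb2 e8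
  refine ⟨i, v, w, hw, ?_⟩
  have haK : (a' : ℝ) ≤ τ / 4 * n := by
    have h1 : 4 / τ ≤ (K : ℝ) := Nat.le_ceil _
    have h2 : (a' : ℝ) * K ≤ n := by exact_mod_cast ha'
    have h3 : (a' : ℝ) * (4 / τ) ≤ n := (mul_le_mul_of_nonneg_left h1 (Nat.cast_nonneg _)).trans h2
    have h4 : (a' : ℝ) = τ / 4 * (a' * (4 / τ)) := by field_simp
    rw [h4]; gcongr
  have hfin' : (t n : ℝ) ≤ (w.edges.filter (fun e => c e = i)).length + a' + ncyc K A
        + 2 * ((R n).card + ((D n * (badR (D n) (R n) A).card : ℕ) : ℝ)) := by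
    exact_mod_cast hfin
  have hRn := hR2 n
  have : (2 / ((r:ℝ) + 1) - ε) * n ≤ a * n - τ / 4 * n - 5 * δ * n := by
    have : 2 / ((r:ℝ) + 1) - ε ≤ a - τ / 4 - 5 * δ := by rw [ha, hδd]; linarith
    nlinarith
  linarith

end

section
open Filter

lemma GP_min {p : ℕ → ℝ} (hp01 : ∀ n, 0 ≤ p n ∧ p n ≤ 1)
    (hp : Tendsto (fun n : ℕ => n * p n - Real.log n - Real.log (Real.log n)) atTop atTop) :
    GP (fun n => min (p n) (2 * Real.log n / n)) ∧
    Tendsto (fun n : ℕ => n * min (p n) (2 * Real.log n / n) - Real.log n - Real.log (Real.log n))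
      atTop atTop := by
  have hmul : ∀ᶠ n : ℕ in atTop, n * min (p n) (2 * Real.log n / n) = min (n * p n) (2 * Real.log n) := by
    filter_upwards [evN 1] with n hn
    rw [mul_min_of_nonneg _ _ (by linarith), mul_div_cancel₀ _ (by linarith)]
  have hω : Tendsto (fun n : ℕ => n * min (p n) (2 * Real.log n / n) - Real.log n - Real.log (Real.log n))
      atTop atTop := by
    have h1 : Tendsto (fun n : ℕ => Real.log n - Real.log (Real.log n)) atTop atTop := by
      refine tendsto_atTop_mono' _ ?_ (tL.const_mul_atTop (show (0:ℝ) < 1 / 2 by norm_num))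
      have h2 := Real.isLittleO_log_id_atTop.bound (c := 1 / 2) (by positivity)
      filter_upwards [tL.eventually h2, evL 1] with n h3 hL
      have h4 := (le_abs_self _).trans h3
      simp only [id, Real.norm_eq_abs] at h4
      rw [abs_of_nonneg (by linarith)] at h4
      linarith
    refine tendsto_atTop.2 fun C => ?_
    filter_upwards [hmul, hp.eventually_ge_atTop C, h1.eventually_ge_atTop C] with n hn x1 x2
    rw [hn]
    rcases min_choice (n * p n) (2 * Real.log n) with h | h <;> rw [h] <;> linarith
  refine ⟨⟨fun n => le_min (hp01 n).1 ?_, fun n => (min_le_left _ _).trans (hp01 n).2, ?_, ?_⟩, hω⟩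
  · have := Real.log_natCast_nonneg n
    positivity
  · filter_upwards [hω.eventually_ge_atTop 0, evL 1] with n hn hL
    have := Real.log_nonneg hL
    linarith
  · filter_upwards [hmul] with n hn
    rw [hn]
    exact min_le_right _ _

end

theorem hamilton_cycle_many_edges_same_colour
    (r : ℕ) (hr : 2 ≤ r) (ε : ℝ) (hε : 0 < ε)
    (p : ℕ → ℝ) (hp01 : ∀ n, 0 ≤ p n ∧ p n ≤ 1)
    (hp : Filter.Tendsto
      (fun n : ℕ => n * p n - Real.log n - Real.log (Real.log n))
      Filter.atTop Filter.atTop) :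
    Filter.Tendsto
      (fun n : ℕ => gnpProb n (p n) (fun G =>
        ∀ c : Sym2 (Fin n) → Fin r, ∃ i : Fin r, ∃ (v : Fin n) (w : G.Walk v v),
          w.IsHamiltonianCycle ∧
          (2 / (r + 1 : ℝ) - ε) * n ≤ ((w.edges.filter (fun e => c e = i)).length : ℝ)))
      Filter.atTop (nhds 1) := by
  obtain ⟨hG, hω⟩ := GP_min hp01 hp
  have h1 := main_GP r hr ε hε hG hω
  have h2 := h1.const_sub 1
  rw [sub_zero] at h2
  have key : ∀ n : ℕ, gnpProb n (p n) (fun G =>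
        ∀ c : Sym2 (Fin n) → Fin r, ∃ i : Fin r, ∃ (v : Fin n) (w : G.Walk v v),
          w.IsHamiltonianCycle ∧
          (2 / (r + 1 : ℝ) - ε) * n ≤ ((w.edges.filter (fun e => c e = i)).length : ℝ))
      = PR n (p n) (fun A => HCprop r ε n (SimpleGraph.fromEdgeSet (A : Set (Sym2 (Fin n))))) := by
    intro n
    rw [gnpProb_eq]
    congr 1
  simp only [key]
  refine tendsto_of_tendsto_of_tendsto_of_le_of_le h2 tendsto_const_nhds (fun n => ?_) (fun n => ?_)
  · show 1 - PR n _ (fun A => ¬ HCprop r ε n (SimpleGraph.fromEdgeSet (A : Set (Sym2 (Fin n))))) ≤ _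
    rw [← PR_compl_add (n := n) (fun A => HCprop r ε n (SimpleGraph.fromEdgeSet (A : Set (Sym2 (Fin n)))))]
    refine PR_mono_p (hG.h0 n) (min_le_left _ _) (hp01 n).2 ?_
    intro A B hAB hQ
    exact HCprop_mono (SimpleGraph.fromEdgeSet_mono (by exact_mod_cast hAB)) hQ
  · show PR n _ _ ≤ 1
    rw [PR_compl_add]
    have := PR_nonneg (n := n) (hp01 n).1 (hp01 n).2
      (fun A => ¬ HCprop r ε n (SimpleGraph.fromEdgeSet (A : Set (Sym2 (Fin n)))))
    linarith
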